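/- arXiv:1009.0540 — 5 statements merged into one kernel-verified Lean document; each statement's English description precedes it below -/
import Mathlib

section
/- Flow term estimate at a breakthrough point (Lemma 2.4): Let θ : ℝ^d → ℝ be C¹ and let u : ℝ^d → ℝ^d be continuous. Let ω be a modulus of continuity and Ω a modulus of continuity such that |θ(x) − θ(y)| ≤ ω(|x−y|) for all x, y and |u(x) − u(y)| ≤ Ω(|x−y|) for all x, y. Suppose x ≠ y are points with θ(x) − θ(y) = ω(ξ), where ξ = |x−y|. Then u(x)·∇θ(x) − u(y)·∇θ(y) ≤ Ω(ξ)·ω'(ξ), where at a point where ω is not differentiable, ω'(ξ) denotes the larger of the two one-sided derivatives. -/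
open Set

/-- A modulus of continuity: `ω 0 = 0`, continuous, increasing and concave on `[0,∞)`,
and piecewise `C¹` on `(0,∞)`. -/
def IsModulusOfContinuity (ω : ℝ → ℝ) : Prop :=
  ω 0 = 0 ∧ ContinuousOn ω (Ici 0) ∧ StrictMonoOn ω (Ici 0) ∧ ConcaveOn ℝ (Ici 0) ω ∧
  ∃ S : Finset ℝ, (∀ ξ ∈ Ioi (0:ℝ) \ ↑S, DifferentiableAt ℝ ω ξ) ∧
    ContinuousOn (deriv ω) (Ioi (0:ℝ) \ ↑S)

/-- A function that is minimal at the left endpoint of `[c, ∞)` has nonnegative right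
derivative there. -/
theorem HasDerivWithinAt.nonneg_of_forall_Ici_le {g : ℝ → ℝ} {g' c : ℝ}
    (hg : HasDerivWithinAt g g' (Ici c) c) (hmin : ∀ t, c ≤ t → g c ≤ g t) : 0 ≤ g' := by
  have hslope := (hasDerivWithinAt_iff_tendsto_slope' self_notMem_Ioi).1 hg.Ioi_of_Ici
  refine ge_of_tendsto hslope ?_
  filter_upwards [self_mem_nhdsWithin] with t ht
  have ht' : c < t := ht
  rw [slope_def_field]
  exact div_nonneg (sub_nonneg.2 (hmin t ht'.le)) (sub_nonneg.2 ht'.le)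

/-- **Flow term estimate at a breakthrough point (Lemma 2.4).**
If `θ` obeys the modulus `ω`, `u` obeys the modulus `Ω`, and `θ(x) − θ(y) = ω(ξ)` with
`ξ = |x−y|`, then `u(x)·∇θ(x) − u(y)·∇θ(y) ≤ Ω(ξ)·ω'(ξ)`, where `ω'(ξ)` is the larger of
the two one-sided derivatives at `ξ` (here quantified over the one-sided derivative
values `a`, `b`, when they exist). -/
theorem flow_term_estimate (d : ℕ) (hd : 0 < d)
    (θ : EuclideanSpace ℝ (Fin d) → ℝ) (u : EuclideanSpace ℝ (Fin d) → EuclideanSpace ℝ (Fin d))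
    (hθ : ContDiff ℝ 1 θ) (hu : Continuous u)
    (ω Ω : ℝ → ℝ) (hω : IsModulusOfContinuity ω) (hΩ : IsModulusOfContinuity Ω)
    (hθω : ∀ x y, |θ x - θ y| ≤ ω (dist x y))
    (huΩ : ∀ x y, dist (u x) (u y) ≤ Ω (dist x y))
    (x y : EuclideanSpace ℝ (Fin d)) (hxy : x ≠ y)
    (hbreak : θ x - θ y = ω (dist x y))
    (a b : ℝ)
    (ha : HasDerivWithinAt ω a (Ici (dist x y)) (dist x y))
    (hb : HasDerivWithinAt ω b (Iic (dist x y)) (dist x y)) :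
    fderiv ℝ θ x (u x) - fderiv ℝ θ y (u y) ≤ Ω (dist x y) * max a b := by
  have hdiff : Differentiable ℝ θ := hθ.differentiable one_ne_zero
  have hΩ_nonneg : 0 ≤ Ω (dist x y) := dist_nonneg.trans (huΩ x y)
  have hmono : MonotoneOn ω (Ici 0) := hω.2.2.1.monotoneOn
  have hline : ∀ p v : EuclideanSpace ℝ (Fin d),
      HasDerivWithinAt (fun t : ℝ => θ (p + t • v)) (fderiv ℝ θ p v) (Ici 0) 0 := by
    intro p v
    exact ((hdiff p).hasFDerivAt.hasLineDerivAt v).hasDerivWithinAt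
  have hω_line : HasDerivWithinAt (fun t : ℝ => ω (dist x y + t * Ω (dist x y)))
      (a * Ω (dist x y)) (Ici 0) 0 := by
    have hinner : HasDerivWithinAt (fun t : ℝ => dist x y + t * Ω (dist x y))
        (Ω (dist x y)) (Ici 0) 0 := by
      simpa using (((hasDerivAt_id (0 : ℝ)).mul_const (Ω (dist x y))).const_add
        (dist x y)).hasDerivWithinAt
    refine HasDerivWithinAt.comp_of_eq (s' := Ici (dist x y)) 0 ha hinner ?_ (by simp)
    intro t ht
    exact le_add_of_nonneg_right (mul_nonneg ht hΩ_nonneg)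
  -- Transport `x` and `y` along the constant velocities `u x` and `u y`.
  have hmain := (hω_line.sub ((hline x (u x)).sub (hline y (u y)))).nonneg_of_forall_Ici_le (by
    intro t ht
    have hdist : dist (x + t • u x) (y + t • u y) ≤ dist x y + t * Ω (dist x y) := by
      refine (dist_add_add_le _ _ _ _).trans ?_
      rw [dist_smul₀, Real.norm_of_nonneg ht]
      gcongr
      exact huΩ x y
    have hle := (le_abs_self _).trans ((hθω (x + t • u x) (y + t • u y)).trans
      (hmono dist_nonneg (dist_nonneg.trans hdist) hdist))
    simp only [Pi.sub_apply, zero_smul, zero_mul, add_zero]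
    linarith)
  have hmax : Ω (dist x y) * a ≤ Ω (dist x y) * max a b := by
    gcongr
    exact le_max_left a b
  linarith
end

section
/- Dissipation convolution estimate (core of Lemma 2.5): Let θ : ℝ^d → ℝ be continuous and bounded, let ω be a modulus of continuity with |θ(x) − θ(y)| ≤ ω(|x−y|) for all x, y, and suppose x ≠ y are points with θ(x) − θ(y) = ω(ξ), where ξ = |x−y|. Let Φ : ℝ^d → (0,∞) be an integrable, radially symmetric and radially nonincreasing function with ∫_{ℝ^d} Φ = 1, and let φ(s) = ∫_{ℝ^{d−1}} Φ(s,ν) dν denote its one-dimensional marginal. Then (Φ∗θ)(x) − (Φ∗θ)(y) − ω(ξ) ≤ ∫_0^{ξ/2} φ(η)[ω(ξ+2η) + ω(ξ−2η) − 2ω(ξ)] dη + ∫_{ξ/2}^∞ φ(η)[ω(2η+ξ) − ω(2η−ξ) − 2ω(ξ)] dη, and moreover both bracketed expressions in the integrands are nonpositive (by concavity of ω). -/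
open Set MeasureTheory

noncomputable section

/-- The one-dimensional marginal `φ(s) = ∫_{ℝ^{d−1}} Φ(s,ν) dν` of a function `Φ` on
`ℝ^d = ℝ^{(m)+1}`. -/
def oneDimMarginal (m : ℕ) (Φ : EuclideanSpace ℝ (Fin (m+1)) → ℝ) (s : ℝ) : ℝ :=
  ∫ ν : EuclideanSpace ℝ (Fin m),
    Φ ((WithLp.equiv 2 (∀ _ : Fin (m+1), ℝ)).symm (Fin.cons s (fun i => ν i)))

namespace IsModulusOfContinuity

variable {ω : ℝ → ℝ}

lemma nonneg (hω : IsModulusOfContinuity ω) {t : ℝ} (ht : 0 ≤ t) : 0 ≤ ω t := by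
  have h := hω.2.2.1.monotoneOn self_mem_Ici ht ht
  rwa [hω.1] at h

lemma add_le (hω : IsModulusOfContinuity ω) {s t : ℝ} (hs : 0 ≤ s) (ht : 0 ≤ t) :
    ω (s + t) ≤ ω s + ω t := by
  rcases (add_nonneg hs ht).eq_or_lt with h | h
  · have hs0 : s = 0 := by linarith
    have ht0 : t = 0 := by linarith
    simp [hs0, ht0, hω.1]
  · have key : ∀ r, 0 ≤ r → r ≤ s + t → r / (s + t) * ω (s + t) ≤ ω r := fun r hr hrs => by
      have h1 : 0 ≤ 1 - r / (s + t) := by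
        rw [sub_nonneg, div_le_one h]; exact hrs
      have := hω.2.2.2.1.2 (mem_Ici.2 h.le) self_mem_Ici (div_nonneg hr h.le) h1 (by ring)
      simpa [hω.1, div_mul_cancel₀ r h.ne'] using this
    have h1 := key s hs (by linarith)
    have h2 := key t ht (by linarith)
    have h3 : s / (s + t) * ω (s + t) + t / (s + t) * ω (s + t) = ω (s + t) := by
      field_simp
    linarith

lemma add_sub_two_mul_le_zero (hω : IsModulusOfContinuity ω) {ξ h : ℝ} (h1 : 0 ≤ ξ + h)
    (h2 : 0 ≤ ξ - h) : ω (ξ + h) + ω (ξ - h) - 2 * ω ξ ≤ 0 := by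
  have := hω.2.2.2.1.2 (mem_Ici.2 h1) (mem_Ici.2 h2)
    (by norm_num : (0 : ℝ) ≤ 1 / 2) (by norm_num : (0 : ℝ) ≤ 1 / 2) (by norm_num)
  simp only [smul_eq_mul] at this
  rw [show 1 / 2 * (ξ + h) + 1 / 2 * (ξ - h) = ξ by ring] at this
  linarith

lemma sub_sub_two_mul_le_zero (hω : IsModulusOfContinuity ω) {ξ t : ℝ} (hξ : 0 ≤ ξ)
    (ht : ξ ≤ t) : ω (t + ξ) - ω (t - ξ) - 2 * ω ξ ≤ 0 := by
  have h1 := hω.add_le (sub_nonneg.2 ht) (add_nonneg hξ hξ)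
  have h2 := hω.add_le hξ hξ
  rw [show t - ξ + (ξ + ξ) = t + ξ by ring] at h1
  linarith

lemma continuous_comp_max (hω : IsModulusOfContinuity ω) :
    Continuous fun t : ℝ => ω (max t 0) :=
  hω.2.1.comp_continuous (by fun_prop) fun _ => mem_Ici.2 (le_max_right _ _)

end IsModulusOfContinuity

lemma setIntegral_Ioi_comp_sub (f : ℝ → ℝ) (a b : ℝ) :
    ∫ s in Ioi b, f (s - a) = ∫ s in Ioi (b - a), f s := by
  have h := (measurePreserving_sub_right volume a).setIntegral_preimage_emb
    (MeasurableEquiv.subRight a).measurableEmbedding f (Ioi (b - a))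
  simpa using h

lemma integral_eq_setIntegral_Ioi_add_comp_neg {f : ℝ → ℝ} (hf : Integrable f) :
    ∫ s, f s = ∫ s in Ioi 0, (f s + f (-s)) := by
  rw [integral_add hf.integrableOn hf.comp_neg.integrableOn, integral_comp_neg_Ioi, neg_zero,
    add_comm, intervalIntegral.integral_Iic_add_Ioi hf.integrableOn hf.integrableOn]

lemma MeasureTheory.Integrable.integrableOn_mul_of_eqOn_of_abs_le {φ b b' : ℝ → ℝ} {S : Set ℝ}
    {c : ℝ} (hφ : Integrable φ) (hS : MeasurableSet S) (hb' : Continuous b') (hbb' : EqOn b' b S)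
    (hb : ∀ s ∈ S, |b s| ≤ c) : IntegrableOn (fun s => φ s * b s) S :=
  Integrable.mul_bdd (c := c) hφ.integrableOn
    (hb'.aestronglyMeasurable.congr (ae_restrict_of_forall_mem hS hbb'))
    (ae_restrict_of_forall_mem hS hb)

/-- The one-dimensional rearrangement behind the estimate: the profile `ω (2 s)` may be truncated
at any level `C`, which makes all the integrals involved absolutely convergent. -/
lemma setIntegral_translate_sub_le {ω φ : ℝ → ℝ} (hω : IsModulusOfContinuity ω)
    (hφ : Integrable φ) (hφ0 : ∀ s, 0 ≤ φ s) (hφe : ∀ s, φ (-s) = φ s) (hφ1 : ∫ s, φ s = 1)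
    {ξ C : ℝ} (hξ : 0 < ξ) (hC : 0 ≤ C) :
    (∫ s in Ioi 0, (φ (s - ξ / 2) - φ (s + ξ / 2)) * min (ω (max (2 * s) 0)) C) - ω ξ
      ≤ (∫ η in Ioo 0 (ξ / 2), φ η * (ω (ξ + 2 * η) + ω (ξ - 2 * η) - 2 * ω ξ))
        + ∫ η in Ioi (ξ / 2), φ η * (ω (2 * η + ξ) - ω (2 * η - ξ) - 2 * ω ξ) := by
  set g : ℝ → ℝ := fun s => min (ω (max (2 * s) 0)) C with hg
  have hgc : Continuous g :=
    (hω.continuous_comp_max.comp (continuous_const.mul continuous_id)).min continuous_const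
  have hg0 : ∀ s, 0 ≤ g s := fun s => le_min (hω.nonneg (le_max_right _ _)) hC
  have hgC : ∀ s, ‖g s‖ ≤ C := fun s => by
    rw [Real.norm_of_nonneg (hg0 s)]; exact min_le_right _ _
  have hint : ∀ a b, Integrable fun s => φ (s + a) * g (s + b) := fun a b =>
    (hφ.comp_add_right a).mul_bdd (c := C) (by fun_prop) (ae_of_all _ fun s => hgC _)
  have hgω : ∀ s, 0 ≤ s → g s ≤ ω (2 * s) := fun s hs => by
    have : max (2 * s) 0 = 2 * s := max_eq_left (by linarith)
    simp only [hg, this]; exact min_le_left _ _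
  have hgsub : ∀ s t, 0 ≤ s → s ≤ t → g t - g s ≤ ω (2 * t) - ω (2 * s) := fun s t hs hst => by
    have h1 : max (2 * s) 0 = 2 * s := max_eq_left (by linarith)
    have h2 : max (2 * t) 0 = 2 * t := max_eq_left (by linarith)
    have h3 : ω (2 * s) ≤ ω (2 * t) := hω.2.2.1.monotoneOn (mem_Ici.2 (by linarith))
      (mem_Ici.2 (by linarith)) (by linarith)
    simp only [hg, h1, h2]
    rcases min_cases (ω (2 * t)) C with h | h <;> rcases min_cases (ω (2 * s)) C with h' | h' <;>
      linarith
  have hhalf : ∫ s in Ioi 0, φ s = 1 / 2 := by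
    have h := integral_eq_setIntegral_Ioi_add_comp_neg hφ
    simp only [hφe, ← two_mul] at h
    rw [integral_const_mul, hφ1] at h
    linarith
  have hp : Integrable fun s => φ s * g (s + ξ / 2) := by simpa using hint 0 (ξ / 2)
  have hm : Integrable fun s => φ s * g (s - ξ / 2) := by
    simpa [← sub_eq_add_neg] using hint 0 (-(ξ / 2))
  have hq : Integrable fun s => φ s * g (-s + ξ / 2) := by
    simpa [hφe] using hp.comp_neg
  have hsplit : ∫ s in Ioi 0, (φ (s - ξ / 2) - φ (s + ξ / 2)) * g s
      = (∫ s in Ioo 0 (ξ / 2), (φ s * g (s + ξ / 2) + φ s * g (-s + ξ / 2)))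
        + ∫ s in Ioi (ξ / 2), (φ s * g (s + ξ / 2) - φ s * g (s - ξ / 2)) := by
    have h1 : ∫ s in Ioi 0, φ (s - ξ / 2) * g s = ∫ s in Ioi (-(ξ / 2)), φ s * g (s + ξ / 2) := by
      have := setIntegral_Ioi_comp_sub (fun s => φ s * g (s + ξ / 2)) (ξ / 2) 0
      simpa using this
    have h2 : ∫ s in Ioi 0, φ (s + ξ / 2) * g s = ∫ s in Ioi (ξ / 2), φ s * g (s - ξ / 2) := by
      have := setIntegral_Ioi_comp_sub (fun s => φ s * g (s - ξ / 2)) (-(ξ / 2)) 0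
      simpa using this
    have h3 : ∫ s in Ioi (-(ξ / 2)), φ s * g (s + ξ / 2)
        = (∫ s in Ioo 0 (ξ / 2), φ s * g (-s + ξ / 2))
          + (∫ s in Ioo 0 (ξ / 2), φ s * g (s + ξ / 2))
          + ∫ s in Ioi (ξ / 2), φ s * g (s + ξ / 2) := by
      have e1 := intervalIntegral.integral_comp_neg (a := 0) (b := ξ / 2)
        fun s => φ s * g (s + ξ / 2)
      simp only [hφe, neg_zero] at e1
      rw [← integral_Ioc_eq_integral_Ioo, ← integral_Ioc_eq_integral_Ioo,
        ← intervalIntegral.integral_of_le (by linarith),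
        ← intervalIntegral.integral_of_le (by linarith), e1,
        intervalIntegral.integral_add_adjacent_intervals hp.intervalIntegrable
          hp.intervalIntegrable,
        intervalIntegral.integral_of_le (by linarith),
        ← setIntegral_union (Ioc_disjoint_Ioi le_rfl) measurableSet_Ioi hp.integrableOn
          hp.integrableOn, Ioc_union_Ioi_eq_Ioi (by linarith)]
    have i1 : Integrable fun s => φ (s - ξ / 2) * g s := by
      simpa [← sub_eq_add_neg] using hint (-(ξ / 2)) 0
    have i2 : Integrable fun s => φ (s + ξ / 2) * g s := by simpa using hint (ξ / 2) 0
    simp only [sub_mul]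
    rw [integral_sub i1.integrableOn i2.integrableOn, h1, h2, h3,
      integral_add hp.integrableOn hq.integrableOn, integral_sub hp.integrableOn hm.integrableOn]
    ring
  have hmass : ω ξ = (∫ s in Ioo 0 (ξ / 2), φ s * (2 * ω ξ))
      + ∫ s in Ioi (ξ / 2), φ s * (2 * ω ξ) := by
    rw [← integral_Ioc_eq_integral_Ioo, ← setIntegral_union (Ioc_disjoint_Ioi le_rfl)
      measurableSet_Ioi (hφ.mul_const _).integrableOn (hφ.mul_const _).integrableOn,
      Ioc_union_Ioi_eq_Ioi (by linarith), integral_mul_const, hhalf]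
    ring
  have hI1 : IntegrableOn
      (fun η => φ η * (ω (ξ + 2 * η) + ω (ξ - 2 * η) - 2 * ω ξ)) (Ioo 0 (ξ / 2)) := by
    refine hφ.integrableOn_mul_of_eqOn_of_abs_le measurableSet_Ioo
      (((hω.continuous_comp_max.comp (by fun_prop : Continuous fun η : ℝ => ξ + 2 * η)).add
        (hω.continuous_comp_max.comp (by fun_prop : Continuous fun η : ℝ => ξ - 2 * η))).sub
        (continuous_const (y := 2 * ω ξ))) (fun η hη => ?_) (c := 2 * ω ξ) fun η hη => ?_
    · have h1 : max (ξ + 2 * η) 0 = ξ + 2 * η := max_eq_left (by linarith [hη.1])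
      have h2 : max (ξ - 2 * η) 0 = ξ - 2 * η := max_eq_left (by linarith [hη.2])
      simp [h1, h2]
    · have h0 := hω.add_sub_two_mul_le_zero (ξ := ξ) (h := 2 * η) (by linarith [hη.1])
        (by linarith [hη.2])
      have h1 := hω.nonneg (t := ξ + 2 * η) (by linarith [hη.1])
      have h2 := hω.nonneg (t := ξ - 2 * η) (by linarith [hη.2])
      exact abs_le.2 ⟨by linarith, by linarith [hω.nonneg hξ.le]⟩
  have hI2 : IntegrableOn
      (fun η => φ η * (ω (2 * η + ξ) - ω (2 * η - ξ) - 2 * ω ξ)) (Ioi (ξ / 2)) := by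
    refine hφ.integrableOn_mul_of_eqOn_of_abs_le measurableSet_Ioi
      (((hω.continuous_comp_max.comp (by fun_prop : Continuous fun η : ℝ => 2 * η + ξ)).sub
        (hω.continuous_comp_max.comp (by fun_prop : Continuous fun η : ℝ => 2 * η - ξ))).sub
        (continuous_const (y := 2 * ω ξ))) (fun η hη => ?_) (c := 2 * ω ξ) fun η hη => ?_
    · have h1 : max (2 * η + ξ) 0 = 2 * η + ξ := max_eq_left (by linarith [mem_Ioi.1 hη])
      have h2 : max (2 * η - ξ) 0 = 2 * η - ξ := max_eq_left (by linarith [mem_Ioi.1 hη])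
      simp [h1, h2]
    · have h0 := hω.sub_sub_two_mul_le_zero (t := 2 * η) hξ.le (by linarith [mem_Ioi.1 hη])
      have h1 : ω (2 * η - ξ) ≤ ω (2 * η + ξ) := hω.2.2.1.monotoneOn
        (mem_Ici.2 (by linarith [mem_Ioi.1 hη])) (mem_Ici.2 (by linarith [mem_Ioi.1 hη]))
        (by linarith)
      exact abs_le.2 ⟨by linarith, by linarith [hω.nonneg hξ.le]⟩
  have hle1 : ∫ s in Ioo 0 (ξ / 2), (φ s * g (s + ξ / 2) + φ s * g (-s + ξ / 2) - φ s * (2 * ω ξ))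
      ≤ ∫ η in Ioo 0 (ξ / 2), φ η * (ω (ξ + 2 * η) + ω (ξ - 2 * η) - 2 * ω ξ) := by
    refine setIntegral_mono_on ((hp.add hq).sub (hφ.mul_const _)).integrableOn hI1
      measurableSet_Ioo fun s hs => ?_
    have h1 := hgω (s + ξ / 2) (by linarith [hs.1])
    have h2 := hgω (-s + ξ / 2) (by linarith [hs.2])
    rw [show 2 * (s + ξ / 2) = ξ + 2 * s by ring] at h1
    rw [show 2 * (-s + ξ / 2) = ξ - 2 * s by ring] at h2
    rw [← mul_add, ← mul_sub]
    exact mul_le_mul_of_nonneg_left (by linarith) (hφ0 s)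
  have hle2 : ∫ s in Ioi (ξ / 2), (φ s * g (s + ξ / 2) - φ s * g (s - ξ / 2) - φ s * (2 * ω ξ))
      ≤ ∫ η in Ioi (ξ / 2), φ η * (ω (2 * η + ξ) - ω (2 * η - ξ) - 2 * ω ξ) := by
    refine setIntegral_mono_on ((hp.sub hm).sub (hφ.mul_const _)).integrableOn hI2
      measurableSet_Ioi fun s hs => ?_
    have h1 := hgsub (s - ξ / 2) (s + ξ / 2) (by linarith [mem_Ioi.1 hs]) (by linarith)
    rw [show 2 * (s + ξ / 2) = 2 * s + ξ by ring, show 2 * (s - ξ / 2) = 2 * s - ξ by ring] at h1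
    rw [← mul_sub, ← mul_sub]
    exact mul_le_mul_of_nonneg_left (by linarith) (hφ0 s)
  have e1 := integral_sub (hp.add hq).integrableOn (hφ.mul_const (2 * ω ξ)).integrableOn
    (μ := volume.restrict (Ioo 0 (ξ / 2)))
  have e2 := integral_sub (hp.sub hm).integrableOn (hφ.mul_const (2 * ω ξ)).integrableOn
    (μ := volume.restrict (Ioi (ξ / 2)))
  simp only [Pi.add_apply, Pi.sub_apply] at e1 e2
  rw [hsplit]
  linarith

/-- Symmetrization in the first variable on a product `ℝ × F`. -/
lemma integral_translate_sub_mul_le {F : Type*} [MeasurableSpace F] {μ : Measure F} [SFinite μ]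
    {ψ Θ : ℝ × F → ℝ} {g : ℝ → ℝ} {a M C : ℝ} (ha : 0 ≤ a)
    (hψ : Integrable ψ (volume.prod μ))
    (hψm : ∀ s t ν, |s| ≤ |t| → ψ (t, ν) ≤ ψ (s, ν))
    (hΘ : Measurable Θ) (hΘM : ∀ p, |Θ p| ≤ M)
    (hg : Measurable g) (hgC : ∀ s, |g s| ≤ C)
    (hΘg : ∀ s ν, 0 < s → Θ (s, ν) - Θ (-s, ν) ≤ g s) :
    ∫ p : ℝ × F, (ψ (p.1 - a, p.2) - ψ (p.1 + a, p.2)) * Θ p ∂(volume.prod μ)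
      ≤ ∫ s in Ioi 0, ((∫ ν, ψ (s - a, ν) ∂μ) - ∫ ν, ψ (s + a, ν) ∂μ) * g s := by
  have hψe : ∀ s ν, ψ (-s, ν) = ψ (s, ν) := fun s ν =>
    le_antisymm (hψm _ _ _ (abs_neg s).ge) (hψm _ _ _ (abs_neg s).le)
  have hm : Integrable (fun p : ℝ × F => ψ (p.1 - a, p.2)) (volume.prod μ) :=
    ((measurePreserving_sub_right volume a).prod (MeasurePreserving.id μ)
      ).integrable_comp_of_integrable hψ
  have hp : Integrable (fun p : ℝ × F => ψ (p.1 + a, p.2)) (volume.prod μ) :=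
    ((measurePreserving_add_right volume a).prod (MeasurePreserving.id μ)
      ).integrable_comp_of_integrable hψ
  have hI : Integrable (fun p : ℝ × F => (ψ (p.1 - a, p.2) - ψ (p.1 + a, p.2)) * Θ p)
      (volume.prod μ) :=
    (hm.sub hp).mul_bdd (c := M) hΘ.aestronglyMeasurable (ae_of_all _ hΘM)
  rw [integral_prod _ hI, integral_eq_setIntegral_Ioi_add_comp_neg hI.integral_prod_left]
  have hIL := hI.integral_prod_left
  refine setIntegral_mono_on_ae (hIL.add hIL.comp_neg).integrableOn
    (Integrable.integrableOn ((hm.integral_prod_left.sub hp.integral_prod_left).mul_bdd (c := C)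
      hg.aestronglyMeasurable (ae_of_all _ hgC))) measurableSet_Ioi ?_
  have hae := hI.prod_right_ae
  have hae' := (Measure.measurePreserving_neg (volume : Measure ℝ)).quasiMeasurePreserving.ae hae
  filter_upwards [hae, hae', hm.prod_right_ae, hp.prod_right_ae] with s h1 h2 h3 h4 hs
  have hs0 : 0 < s := hs
  rw [← integral_sub h3 h4, ← integral_mul_const, ← integral_add h1 h2]
  refine integral_mono (h1.add h2) ((h3.sub h4).mul_const _) fun ν => ?_
  have e1 : ψ (-s - a, ν) = ψ (s + a, ν) := by rw [← hψe, neg_sub, sub_neg_eq_add, add_comm]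
  have e2 : ψ (-s + a, ν) = ψ (s - a, ν) := by rw [← hψe, neg_add, neg_neg, sub_eq_add_neg]
  have e3 : ψ (s + a, ν) ≤ ψ (s - a, ν) := hψm _ _ _ <| by
    rw [abs_of_nonneg (add_nonneg hs0.le ha), abs_le]
    constructor <;> linarith
  simp only [e1, e2]
  have := mul_le_mul_of_nonneg_left (hΘg s ν hs0) (sub_nonneg.2 e3)
  linarith

/-- The identification of `ℝ × ℝ^m` with `ℝ^{m+1}` prepending the first coordinate. -/
def euclideanCons (m : ℕ) (p : ℝ × EuclideanSpace ℝ (Fin m)) : EuclideanSpace ℝ (Fin (m + 1)) :=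
  WithLp.toLp 2 (Fin.cons p.1 p.2.ofLp)

lemma euclideanCons_sub (m : ℕ) (p q : ℝ × EuclideanSpace ℝ (Fin m)) :
    euclideanCons m (p - q) = euclideanCons m p - euclideanCons m q := by
  ext i
  refine Fin.cases ?_ (fun j => ?_) i <;> simp [euclideanCons]

lemma norm_euclideanCons (m : ℕ) (p : ℝ × EuclideanSpace ℝ (Fin m)) :
    ‖euclideanCons m p‖ = √(p.1 ^ 2 + ‖p.2‖ ^ 2) := by
  rw [EuclideanSpace.norm_eq, EuclideanSpace.norm_sq_eq, Fin.sum_univ_succ]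
  simp [euclideanCons]

lemma measurePreserving_euclideanCons (m : ℕ) : MeasurePreserving (euclideanCons m)
    (volume.prod volume) volume := by
  have h := (PiLp.volume_preserving_toLp (Fin (m + 1))).comp
    (((volume_preserving_piFinSuccAbove (fun _ : Fin (m + 1) => ℝ) 0).symm _).comp
      ((MeasurePreserving.id volume).prod (PiLp.volume_preserving_ofLp (Fin m))))
  have he : euclideanCons m = WithLp.toLp 2 ∘
      (MeasurableEquiv.piFinSuccAbove (fun _ : Fin (m + 1) => ℝ) 0).symm ∘
      Prod.map id WithLp.ofLp := by
    ext p i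
    simp [euclideanCons, Fin.insertNthEquiv]
  rwa [he]

/-- **Dissipation convolution estimate (core of Lemma 2.5).**
If `θ` obeys `ω`, `θ(x) − θ(y) = ω(ξ)` with `ξ = |x−y|`, and `Φ` is a positive, integrable,
radially symmetric and radially nonincreasing kernel of total mass one with one-dimensional
marginal `φ`, then `(Φ∗θ)(x) − (Φ∗θ)(y) − ω(ξ)` is bounded above by
`∫_0^{ξ/2} φ(η)[ω(ξ+2η)+ω(ξ−2η)−2ω(ξ)]dη + ∫_{ξ/2}^∞ φ(η)[ω(2η+ξ)−ω(2η−ξ)−2ω(ξ)]dη`,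
and both bracketed expressions are nonpositive. -/
theorem dissipation_convolution_estimate (m : ℕ)
    (θ Φ : EuclideanSpace ℝ (Fin (m+1)) → ℝ)
    (hθc : Continuous θ) (M : ℝ) (hθb : ∀ z, |θ z| ≤ M)
    (ω : ℝ → ℝ) (hω : IsModulusOfContinuity ω)
    (hθω : ∀ z w, |θ z - θ w| ≤ ω (dist z w))
    (hΦpos : ∀ z, 0 < Φ z) (hΦint : Integrable Φ)
    (hΦrad : ∀ z w, ‖z‖ = ‖w‖ → Φ z = Φ w)
    (hΦmono : ∀ z w, ‖z‖ ≤ ‖w‖ → Φ w ≤ Φ z)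
    (hΦnorm : (∫ z, Φ z) = 1)
    (x y : EuclideanSpace ℝ (Fin (m+1))) (hxy : x ≠ y)
    (hbreak : θ x - θ y = ω (dist x y)) :
    ((∫ z, Φ (x - z) * θ z) - (∫ z, Φ (y - z) * θ z) - ω (dist x y)
      ≤ (∫ η in Ioo 0 (dist x y / 2),
          oneDimMarginal m Φ η *
            (ω (dist x y + 2*η) + ω (dist x y - 2*η) - 2 * ω (dist x y)))
        + ∫ η in Ioi (dist x y / 2),
            oneDimMarginal m Φ η *
              (ω (2*η + dist x y) - ω (2*η - dist x y) - 2 * ω (dist x y))) ∧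
    (∀ η ∈ Ioo (0:ℝ) (dist x y / 2),
      ω (dist x y + 2*η) + ω (dist x y - 2*η) - 2 * ω (dist x y) ≤ 0) ∧
    (∀ η ∈ Ici (dist x y / 2),
      ω (2*η + dist x y) - ω (2*η - dist x y) - 2 * ω (dist x y) ≤ 0) := by
  set ξ := dist x y with hξdef
  have hξ : 0 < ξ := dist_pos.2 hxy
  have hM : 0 ≤ M := (abs_nonneg _).trans (hθb x)
  refine ⟨?_, fun η hη => hω.add_sub_two_mul_le_zero (by linarith [hη.1]) (by linarith [hη.2]),
    fun η hη => hω.sub_sub_two_mul_le_zero hξ.le (by linarith [mem_Ici.1 hη])⟩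
  obtain ⟨U, hU⟩ : ∃ U : EuclideanSpace ℝ (Fin (m + 1)) ≃ₗᵢ[ℝ] EuclideanSpace ℝ (Fin (m + 1)),
      U (euclideanCons m (ξ, 0)) = x - y := by
    refine ⟨_, Submodule.reflection_sub ?_⟩
    simp [norm_euclideanCons, hξdef, dist_eq_norm]
  have hψU : ∀ p, Φ (U (euclideanCons m p)) = Φ (euclideanCons m p) := fun p =>
    hΦrad _ _ (U.norm_map _)
  set T : ℝ × EuclideanSpace ℝ (Fin m) → EuclideanSpace ℝ (Fin (m + 1)) :=
    fun p => x - U (euclideanCons m (ξ / 2, 0)) + U (euclideanCons m p) with hT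
  have hTmp : MeasurePreserving T (volume.prod volume) volume :=
    (measurePreserving_add_left volume _).comp
      (U.measurePreserving.comp (measurePreserving_euclideanCons m))
  have hxT : ∀ p, Φ (x - T p) = Φ (euclideanCons m (p.1 - ξ / 2, p.2)) := fun p => by
    have : x - T p = U (euclideanCons m ((ξ / 2, 0) - p)) := by
      rw [euclideanCons_sub, map_sub]; simp only [hT]; abel
    rw [this, hψU]
    refine hΦrad _ _ ?_
    simp only [norm_euclideanCons, Prod.fst_sub, Prod.snd_sub, zero_sub, norm_neg]
    congr 2; ring
  have hyT : ∀ p, Φ (y - T p) = Φ (euclideanCons m (p.1 + ξ / 2, p.2)) := fun p => by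
    have h0 : ((ξ / 2, 0) : ℝ × EuclideanSpace ℝ (Fin m)) - (ξ, 0) = (-(ξ / 2), 0) := by
      ext <;> simp; ring
    have : y - T p = U (euclideanCons m ((-(ξ / 2), 0) - p)) := by
      rw [← h0, euclideanCons_sub, euclideanCons_sub, map_sub, map_sub, hU]; simp only [hT]; abel
    rw [this, hψU]
    refine hΦrad _ _ ?_
    simp only [norm_euclideanCons, Prod.fst_sub, Prod.snd_sub, zero_sub, norm_neg]
    congr 2; ring
  have hTdist : ∀ s t ν, dist (T (s, ν)) (T (t, ν)) = |s - t| := fun s t ν => by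
    simp only [hT, dist_add_left, U.dist_map]
    rw [dist_eq_norm, ← euclideanCons_sub, norm_euclideanCons]
    simp [Real.sqrt_sq_eq_abs]
  have hint : ∀ w, Integrable fun z => Φ (w - z) * θ z := fun w =>
    (hΦint.comp_sub_left w).mul_bdd (c := M) hθc.aestronglyMeasurable (ae_of_all _ hθb)
  have hcov : (∫ z, Φ (x - z) * θ z) - (∫ z, Φ (y - z) * θ z)
      = ∫ p, (Φ (euclideanCons m (p.1 - ξ / 2, p.2)) - Φ (euclideanCons m (p.1 + ξ / 2, p.2)))
        * θ (T p) ∂(volume.prod volume) := by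
    rw [← integral_sub (hint x) (hint y), ← hTmp.map_eq, integral_map hTmp.measurable.aemeasurable
      (by rw [hTmp.map_eq]; exact ((hint x).sub (hint y)).aestronglyMeasurable)]
    simp only [hxT, hyT, sub_mul]
  have hψ : Integrable (fun p => Φ (euclideanCons m p)) (volume.prod volume) :=
    (measurePreserving_euclideanCons m).integrable_comp_of_integrable hΦint
  have hmarg : ∀ s, ∫ ν, Φ (euclideanCons m (s, ν)) = oneDimMarginal m Φ s := fun s => rfl
  have hφ1 : ∫ s, oneDimMarginal m Φ s = 1 := by
    simp only [← hmarg]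
    rw [← integral_prod _ hψ, ← hΦnorm]
    conv_rhs => rw [← (measurePreserving_euclideanCons m).map_eq]
    rw [integral_map (measurePreserving_euclideanCons m).measurable.aemeasurable]
    rw [(measurePreserving_euclideanCons m).map_eq]
    exact hΦint.aestronglyMeasurable
  have hωc : Continuous fun s : ℝ => min (ω (max (2 * s) 0)) (2 * M) :=
    (hω.continuous_comp_max.comp (continuous_const.mul continuous_id)).min continuous_const
  have hsym := integral_translate_sub_mul_le (a := ξ / 2) (M := M) (C := 2 * M)
    (Θ := fun p => θ (T p)) (g := fun s => min (ω (max (2 * s) 0)) (2 * M)) (by linarith) hψ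
    (fun s t ν hst => hΦmono _ _ <| by
      have := sq_le_sq.2 hst
      simp only [norm_euclideanCons]
      gcongr)
    (hθc.measurable.comp hTmp.measurable) (fun p => hθb _) hωc.measurable
    (fun s => abs_le.2 ⟨by
      have := le_min (hω.nonneg (le_max_right (2 * s) 0)) (by linarith : 0 ≤ 2 * M)
      linarith, min_le_right _ _⟩)
    (fun s ν hs => le_min
      (by
        have h := (le_abs_self _).trans (hθω (T (s, ν)) (T (-s, ν)))
        rw [hTdist, sub_neg_eq_add, ← two_mul, abs_of_nonneg (by linarith)] at h
        rwa [max_eq_left (by linarith)])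
      (by linarith [(abs_le.1 (hθb (T (s, ν)))).2, (abs_le.1 (hθb (T (-s, ν)))).1]))
  simp only [hmarg] at hsym
  have hone := setIntegral_translate_sub_le hω hψ.integral_prod_left
    (fun s => integral_nonneg fun ν => (hΦpos _).le)
    (fun s => integral_congr_ae <| ae_of_all _ fun ν => hΦrad _ _ (by simp [norm_euclideanCons]))
    hφ1 hξ (C := 2 * M) (by linarith)
  simp only [hmarg] at hone
  rw [hcov]
  linarith

end
end

section
/- A priori gradient bound for the critical Burgers equation (quantitative part of Theorem on Burgers critical regularity, eq. (gradburest)): There exists an absolute constant C > 0 such that the following holds. Let θ : ℝ × [0,T] → ℝ be smooth, periodic in x (with any period), and satisfy ∂_t θ = θ ∂_x θ − L θ, where L f(x) = P.V. ∫_ℝ (f(x) − f(x+y))/|y|² dy is the (unnormalized) critical dissipation operator. Then for all t ∈ [0,T], ‖∂_x θ(·,t)‖_{L^∞} ≤ ‖∂_x θ(·,0)‖_{L^∞} · exp( C ‖θ(·,0)‖_{L^∞} ). -/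
open Set MeasureTheory Filter Topology

/-- The odd extension to the line of the modulus of continuity `z ↦ log (1 + B z)`. -/
noncomputable def oddLog (B z : ℝ) : ℝ :=
  Real.log (1 + B * max z 0) - Real.log (1 + B * max (-z) 0)

lemma oddLog_of_nonneg (B : ℝ) {z : ℝ} (hz : 0 ≤ z) : oddLog B z = Real.log (1 + B * z) := by
  simp [oddLog, hz]

lemma oddLog_neg (B z : ℝ) : oddLog B (-z) = -oddLog B z := by
  simp [oddLog]

lemma continuous_oddLog {B : ℝ} (hB : 0 < B) : Continuous (oddLog B) := by
  unfold oddLog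
  refine Continuous.sub (Continuous.log (by fun_prop) fun z => ?_)
    (Continuous.log (by fun_prop) fun z => ?_) <;> positivity

lemma abs_oddLog {B : ℝ} (hB : 0 < B) (z : ℝ) : |oddLog B z| = Real.log (1 + B * |z|) := by
  rcases le_total 0 z with hz | hz
  · rw [oddLog_of_nonneg B hz, abs_of_nonneg hz,
      abs_of_nonneg (Real.log_nonneg (by nlinarith [mul_nonneg hB.le hz]))]
  · have h : oddLog B z = -oddLog B (-z) := by rw [oddLog_neg, neg_neg]
    rw [h, abs_neg, oddLog_of_nonneg B (by linarith), abs_of_nonpos hz,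
      abs_of_nonneg (Real.log_nonneg (by nlinarith [mul_nonneg hB.le (neg_nonneg.2 hz)]))]

lemma oddLog_second_difference {B d h : ℝ} (hB : 0 < B) (hd : 0 < d) (hh : 0 ≤ h) :
    0 ≤ 2 * oddLog B d - oddLog B (d + h) - oddLog B (d - h) ∧
      (1 / B + d ≤ h →
        oddLog B d ≤ 2 * oddLog B d - oddLog B (d + h) - oddLog B (d - h)) := by
  have ha : 0 < B * d := mul_pos hB hd
  rw [oddLog_of_nonneg B hd.le, oddLog_of_nonneg B (by linarith : 0 ≤ d + h)]
  rcases le_total h d with hhd | hhd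
  · rw [oddLog_of_nonneg B (by linarith : 0 ≤ d - h)]
    refine ⟨?_, fun hk => ?_⟩
    · have h1 : 0 ≤ B * (d - h) := mul_nonneg hB.le (by linarith)
      have h2 : 0 ≤ B * (d + h) := mul_nonneg hB.le (by linarith)
      have : Real.log (1 + B * (d + h)) + Real.log (1 + B * (d - h)) ≤
          Real.log (1 + B * d) + Real.log (1 + B * d) := by
        rw [← Real.log_mul (by positivity) (by positivity),
          ← Real.log_mul (by positivity) (by positivity)]
        apply Real.log_le_log (by positivity)
        nlinarith [sq_nonneg (B * h)]
      linarith
    · have : 0 < 1 / B := by positivity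
      linarith
  · have hneg : oddLog B (d - h) = -Real.log (1 + B * (h - d)) := by
      rw [← neg_sub h d, oddLog_neg, oddLog_of_nonneg B (by linarith)]
    rw [hneg]
    have h1 : 0 ≤ B * (h - d) := mul_nonneg hB.le (by linarith)
    have h2 : 0 ≤ B * (d + h) := mul_nonneg hB.le (by linarith)
    have e : B * (d + h) = 2 * (B * d) + B * (h - d) := by ring
    refine ⟨?_, fun hk => ?_⟩
    · have : Real.log (1 + B * (d + h)) ≤
          Real.log ((1 + B * d) * (1 + B * d) * (1 + B * (h - d))) := by
        apply Real.log_le_log (by positivity)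
        rw [e]
        nlinarith [mul_nonneg ha.le h1, mul_nonneg (mul_nonneg ha.le ha.le) h1, sq_nonneg (B * d)]
      rw [Real.log_mul (by positivity) (by positivity),
        Real.log_mul (by positivity) (by positivity)] at this
      linarith
    · have hk1 : 1 ≤ B * (h - d) := by
        have : B * (1 / B) ≤ B * (h - d) := mul_le_mul_of_nonneg_left (by linarith) hB.le
        rwa [mul_one_div_cancel hB.ne'] at this
      have : Real.log (1 + B * (d + h)) ≤ Real.log ((1 + B * d) * (1 + B * (h - d))) := by
        apply Real.log_le_log (by positivity)
        rw [e]
        nlinarith [mul_le_mul_of_nonneg_left hk1 ha.le]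
      rw [Real.log_mul (by positivity) (by positivity)] at this
      linarith

/-- Measurability of the region over which the singular integrals are truncated. -/
lemma measurableSet_lt_abs (ε : ℝ) : MeasurableSet {y : ℝ | ε < |y|} :=
  measurableSet_lt measurable_const measurable_id.abs

lemma setIntegral_lt_abs_comp_neg (f : ℝ → ℝ) (ε : ℝ) :
    ∫ y in {y : ℝ | ε < |y|}, f (-y) = ∫ y in {y : ℝ | ε < |y|}, f y := by
  rw [← integral_indicator (measurableSet_lt_abs ε), ← integral_indicator (measurableSet_lt_abs ε),
    ← integral_neg_eq_self ({y : ℝ | ε < |y|}.indicator f)]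
  refine integral_congr_ae (Eventually.of_forall fun y => ?_)
  simp [indicator]

lemma integrableOn_div_sq {F : ℝ → ℝ} (hF : Continuous F) {C : ℝ}
    (hC : ∀ y, |F y| ≤ C * (1 + |y|) ^ (1 / 2 : ℝ)) {ε : ℝ} (hε : 0 < ε) :
    IntegrableOn (fun y => F y / y ^ 2) {y : ℝ | ε < |y|} := by
  have hint : Integrable (fun y : ℝ => (C * (1 + 1 / ε) ^ 2) * (1 + ‖y‖) ^ (-(3 / 2) : ℝ)) :=
    (integrable_one_add_norm (by norm_num)).const_mul _
  refine Integrable.mono' hint.integrableOn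
    (Measurable.aestronglyMeasurable (by fun_prop)) ?_
  refine (ae_restrict_iff' (measurableSet_lt_abs ε)).2 (Eventually.of_forall fun y hy => ?_)
  have hy : ε < |y| := hy
  have hy0 : 0 < |y| := hε.trans hy
  have hC0 : 0 ≤ C := by simpa using (abs_nonneg _).trans (hC 0)
  have hsq : 1 / y ^ 2 ≤ (1 + 1 / ε) ^ 2 / (1 + |y|) ^ 2 := by
    rw [← sq_abs y, div_le_div_iff₀ (by positivity) (by positivity), one_mul, ← mul_pow]
    gcongr
    have : 1 ≤ 1 / ε * |y| := by
      rw [one_div, ← div_eq_inv_mul, one_le_div hε]; exact hy.le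
    linarith
  have hpow : (1 + |y|) ^ (1 / 2 : ℝ) / (1 + |y|) ^ 2 = (1 + |y|) ^ (-(3 / 2) : ℝ) := by
    rw [← Real.rpow_natCast, ← Real.rpow_sub (by positivity)]
    norm_num
  rw [Real.norm_eq_abs, abs_div, abs_of_nonneg (sq_nonneg y), Real.norm_eq_abs, ← hpow]
  calc |F y| / y ^ 2 = |F y| * (1 / y ^ 2) := by ring
    _ ≤ (C * (1 + |y|) ^ (1 / 2 : ℝ)) * ((1 + 1 / ε) ^ 2 / (1 + |y|) ^ 2) :=
        mul_le_mul (hC y) hsq (by positivity) (by positivity)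
    _ = _ := by ring

lemma integral_one_div_sq_lt_abs {A : ℝ} (hA : 0 < A) :
    IntegrableOn (fun y : ℝ => 1 / y ^ 2) {y : ℝ | A < |y|} ∧
    ∫ y in {y : ℝ | A < |y|}, 1 / y ^ 2 = 2 / A := by
  have hI : IntegrableOn (fun y : ℝ => 1 / y ^ 2) {y : ℝ | A < |y|} :=
    integrableOn_div_sq (F := fun _ => 1) (C := 1) continuous_const (fun y => by
      rw [abs_one, one_mul]
      exact Real.one_le_rpow (by linarith [abs_nonneg y]) (by norm_num)) hA
  refine ⟨hI, ?_⟩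
  have hset : {y : ℝ | A < |y|} = Iio (-A) ∪ Ioi A := by
    ext y; simp only [mem_ofPred_eq, lt_abs, mem_union, mem_Iio, mem_Ioi]
    constructor
    · rintro (h | h); exacts [Or.inr h, Or.inl (by linarith)]
    · rintro (h | h); exacts [Or.inr (by linarith), Or.inl h]
  have hpos : ∫ y in Ioi A, 1 / y ^ 2 = 1 / A := by
    have h := integral_Ioi_rpow_of_lt (a := -2) (by norm_num) hA
    have h2 : ∫ y in Ioi A, 1 / y ^ 2 = ∫ y in Ioi A, y ^ (-2 : ℝ) := by
      refine setIntegral_congr_fun measurableSet_Ioi fun y hy => ?_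
      have : 0 < y := hA.trans hy
      simp [Real.rpow_neg this.le]
    rw [h2, h]
    norm_num [Real.rpow_neg_one]
  have hneg : ∫ y in Iio (-A), 1 / y ^ 2 = 1 / A := by
    rw [← hpos, ← integral_Iic_eq_integral_Iio, ← integral_comp_neg_Ioi]
    simp
  rw [hset] at hI ⊢
  rw [setIntegral_union (by
      rw [Set.disjoint_left]; intro y h1 h2; simp only [mem_Iio, mem_Ioi] at h1 h2; linarith)
    measurableSet_Ioi hI.left_of_union hI.right_of_union, hpos, hneg]
  ring

lemma abs_oddLog_affine_le {B : ℝ} (hB : 0 < B) (d y : ℝ) :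
    |oddLog B (d + 2 * y)| ≤
      (2 * (1 + B * (|d| + 2)) ^ (1 / 2 : ℝ)) * (1 + |y|) ^ (1 / 2 : ℝ) := by
  rw [abs_oddLog hB, mul_assoc, ← Real.mul_rpow (by positivity) (by positivity)]
  have h1 : |d + 2 * y| ≤ (|d| + 2) * (1 + |y|) := by
    have := abs_add_le d (2 * y)
    rw [abs_mul, abs_two] at this
    nlinarith [mul_nonneg (abs_nonneg d) (abs_nonneg y)]
  have h2 : 1 + B * |d + 2 * y| ≤ (1 + B * (|d| + 2)) * (1 + |y|) := by
    have := mul_le_mul_of_nonneg_left h1 hB.le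
    nlinarith [abs_nonneg y]
  calc Real.log (1 + B * |d + 2 * y|) ≤ (1 + B * |d + 2 * y|) ^ (1 / 2 : ℝ) / (1 / 2) :=
        Real.log_le_rpow_div (by positivity) (by norm_num)
    _ = 2 * (1 + B * |d + 2 * y|) ^ (1 / 2 : ℝ) := by ring
    _ ≤ _ := by gcongr

lemma one_le_one_add_abs_rpow (y : ℝ) : 1 ≤ (1 + |y|) ^ (1 / 2 : ℝ) :=
  Real.one_le_rpow (by linarith [abs_nonneg y]) (by norm_num)

lemma abs_sub_le_mul_of_le {a b c C D : ℝ} (hc : 1 ≤ c) (hC : |a| ≤ C) (hD : |b| ≤ D * c) :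
    |a - b| ≤ (C + D) * c := by
  have h0 : 0 ≤ C := (abs_nonneg a).trans hC
  have := abs_sub a b
  nlinarith [mul_le_mul_of_nonneg_left hc h0]

/-- The truncated dissipation of the odd logarithm dominates twice the product of the modulus
and its derivative. -/
lemma le_truncated_dissipation_oddLog {B d ε : ℝ} (hB : 0 < B) (hd : 0 < d) (hε : 0 < ε)
    (hεA : ε ≤ (1 / B + d) / 2) :
    2 * (B * oddLog B d / (1 + B * d)) ≤
      ∫ y in {y : ℝ | ε < |y|}, (oddLog B d - oddLog B (d + 2 * y)) / y ^ 2 := by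
  set A := (1 / B + d) / 2 with hA
  have hA0 : 0 < A := hε.trans_le hεA
  set f : ℝ → ℝ := fun y => (oddLog B d - oddLog B (d + 2 * y)) / y ^ 2 with hf
  have hV := continuous_oddLog hB
  have hfi : IntegrableOn f {y : ℝ | ε < |y|} :=
    integrableOn_div_sq (continuous_const.sub (hV.comp (by fun_prop)))
      (fun y => abs_sub_le_mul_of_le (one_le_one_add_abs_rpow y) le_rfl
        (abs_oddLog_affine_le hB d y)) hε
  have hfi' : IntegrableOn (fun y => f (-y)) {y : ℝ | ε < |y|} := by
    have : (fun y => f (-y)) = fun y => (oddLog B d - oddLog B (d + 2 * -y)) / y ^ 2 := by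
      funext y; simp [hf]
    rw [this]
    exact integrableOn_div_sq (continuous_const.sub (hV.comp (by fun_prop)))
      (fun y => abs_sub_le_mul_of_le (one_le_one_add_abs_rpow y) le_rfl
        (abs_neg y ▸ abs_oddLog_affine_le hB d (-y))) hε
  have hsum : ∀ y, 0 ≤ f y + f (-y) ∧ (A < |y| → oddLog B d * (1 / y ^ 2) ≤ f y + f (-y)) := by
    intro y
    have key : f y + f (-y) =
        (2 * oddLog B d - oddLog B (d + 2 * |y|) - oddLog B (d - 2 * |y|)) / y ^ 2 := by
      rcases abs_cases y with ⟨h, -⟩ | ⟨h, -⟩ <;> rw [h] <;> simp only [hf, neg_sq] <;>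
        rw [← add_div] <;> congr 1 <;> ring_nf
    obtain ⟨h1, h2⟩ := oddLog_second_difference hB hd (by positivity : 0 ≤ 2 * |y|)
    rw [key]
    refine ⟨by positivity, fun hy => ?_⟩
    rw [mul_one_div]
    exact div_le_div_of_nonneg_right (h2 (by rw [hA] at hy; linarith)) (sq_nonneg y)
  have htwo : 2 * ∫ y in {y : ℝ | ε < |y|}, f y = ∫ y in {y : ℝ | ε < |y|}, (f y + f (-y)) := by
    rw [integral_add hfi hfi', setIntegral_lt_abs_comp_neg]; ring
  have hsub : {y : ℝ | A < |y|} ⊆ {y : ℝ | ε < |y|} := fun y (hy : A < |y|) => hεA.trans_lt hy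
  obtain ⟨hsi, hsv⟩ := integral_one_div_sq_lt_abs hA0
  have h1 : ∫ y in {y : ℝ | A < |y|}, (f y + f (-y)) ≤ ∫ y in {y : ℝ | ε < |y|}, (f y + f (-y)) :=
    setIntegral_mono_set (hfi.add hfi') (Eventually.of_forall fun y => (hsum y).1)
      hsub.eventuallyLE
  have h2 : ∫ y in {y : ℝ | A < |y|}, oddLog B d * (1 / y ^ 2) ≤
      ∫ y in {y : ℝ | A < |y|}, (f y + f (-y)) :=
    setIntegral_mono_on (hsi.const_mul _) ((hfi.add hfi').mono_set hsub)
      (measurableSet_lt_abs A) fun y hy => (hsum y).2 hy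
  rw [integral_const_mul, hsv] at h2
  have e : oddLog B d * (2 / A) = 2 * (2 * (B * oddLog B d / (1 + B * d))) := by
    rw [hA]; field_simp
  linarith

lemma neg_le_truncated_integral_of_antisymm {E : ℝ → ℝ} (hE : Continuous E) {C d ε K : ℝ}
    (hC : ∀ y, |E y| ≤ C * (1 + |y|) ^ (1 / 2 : ℝ)) (hanti : ∀ y, E (-d - y) = -E y)
    (hpos : ∀ y, -(d / 2) ≤ y → 0 ≤ E y) (hε : 0 < ε) (hεd : ε < d / 2)
    (hK : ∀ y, |y| ≤ d / 2 → E y ≤ K) :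
    -(2 * (4 * K / d ^ 2) * ε) ≤ ∫ y in {y : ℝ | ε < |y|}, E y / y ^ 2 := by
  set c := 4 * K / d ^ 2 with hc
  have hd : 0 < d := by linarith
  have hK0 : 0 ≤ K := (hpos 0 (by linarith)).trans (hK 0 (by simp; linarith))
  set f : ℝ → ℝ := {y : ℝ | ε < |y|}.indicator fun y => E y / y ^ 2 with hf
  set J : ℝ → ℝ := (Icc (-ε) ε).indicator fun _ => c with hJ
  have hfi : Integrable f :=
    (integrable_indicator_iff (measurableSet_lt_abs ε)).2 (integrableOn_div_sq hE hC hε)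
  have hJi : Integrable J :=
    (integrable_indicator_iff measurableSet_Icc).2
      (integrableOn_const (by simp))
  have hJv : ∫ y, J y = 2 * ε * c := by
    rw [hJ, integral_indicator measurableSet_Icc, setIntegral_const,
      Real.volume_real_Icc_of_le (by linarith), smul_eq_mul]
    ring
  have hhalf : ∀ y, -(d / 2) ≤ y → -(J y + J (-d - y)) ≤ f y + f (-d - y) := by
    intro y hy
    have hEy := hpos y hy
    have hc0 : 0 ≤ c := by positivity
    have hfar : f (-d - y) = -(E y / (d + y) ^ 2) := by
      have : ε < |-d - y| := by rw [lt_abs]; right; linarith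
      rw [hf, indicator_of_mem (by exact this), hanti]
      rw [show (-d - y) ^ 2 = (d + y) ^ 2 by ring, neg_div]
    have hJ0 : ∀ z, 0 ≤ J z := fun z => indicator_nonneg (fun _ _ => hc0) z
    rw [hfar]
    rcases lt_or_ge ε |y| with h | h
    · rw [hf, indicator_of_mem (by exact h)]
      have hle : E y / (d + y) ^ 2 ≤ E y / y ^ 2 := by
        have hy0 : 0 < y ^ 2 := by
          rw [← sq_abs]; have := hε.trans h; positivity
        apply div_le_div_of_nonneg_left hEy hy0
        nlinarith
      linarith [hJ0 y, hJ0 (-d - y)]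
    · have h' := abs_le.1 h
      have hJy : J y = c := by rw [hJ, indicator_of_mem (by exact h')]
      have hfy : f y = 0 := by
        rw [hf, indicator_of_notMem]; exact not_lt.2 h
      rw [hJy, hfy]
      have : E y / (d + y) ^ 2 ≤ c := by
        rw [hc, div_le_div_iff₀ (by nlinarith) (by positivity)]
        have h1 := hK y (by linarith)
        have h2 : d ^ 2 ≤ 4 * (d + y) ^ 2 := by nlinarith
        nlinarith [mul_le_mul h1 h2 (by positivity) hK0]
      linarith [hJ0 (-d - y)]
  have hall : ∀ y, -(J y + J (-d - y)) ≤ f y + f (-d - y) := by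
    intro y
    rcases le_total (-(d / 2)) y with hy | hy
    · exact hhalf y hy
    · have := hhalf (-d - y) (by linarith)
      rw [sub_sub_cancel] at this
      linarith
  have hmono := integral_mono (μ := volume) (hJi.add (hJi.comp_sub_left (-d))).neg
    (hfi.add (hfi.comp_sub_left (-d))) hall
  simp only [Pi.neg_apply, Pi.add_apply] at hmono
  rw [integral_neg, integral_add hJi (hJi.comp_sub_left (-d)),
    integral_add hfi (hfi.comp_sub_left (-d)), integral_sub_left_eq_self J,
    integral_sub_left_eq_self f, hJv, hf, integral_indicator (measurableSet_lt_abs ε)] at hmono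
  linarith

/-- Lower bound for the dissipation at a pair of points `y`, `y + d` at which the modulus
`ξ ↦ log (1 + B ξ)` is attained, in terms of `W h = u (y + d + h) - u (y - h)`. -/
lemma le_of_tendsto_truncated_dissipation {W : ℝ → ℝ} (hW : Continuous W) {B d M ℓ : ℝ}
    (hB : 0 < B) (hd : 0 < d) (hM : ∀ y, |W y| ≤ M) (hanti : ∀ y, W (-d - y) = -W y)
    (hle : ∀ y, W y ≤ Real.log (1 + B * |d + 2 * y|))
    (hlim : Tendsto (fun ε => ∫ y in {y : ℝ | ε < |y|}, (Real.log (1 + B * d) - W y) / y ^ 2)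
      (𝓝[>] 0) (𝓝 ℓ)) :
    2 * (B * Real.log (1 + B * d) / (1 + B * d)) ≤ ℓ := by
  have hV := continuous_oddLog hB
  have hVd := oddLog_of_nonneg B hd.le
  rw [← hVd] at hlim ⊢
  set E : ℝ → ℝ := fun y => oddLog B (d + 2 * y) - W y with hEdef
  have hE : Continuous E := (hV.comp (by fun_prop)).sub hW
  have hEb : ∀ y, |E y| ≤ (M + 2 * (1 + B * (|d| + 2)) ^ (1 / 2 : ℝ)) *
      (1 + |y|) ^ (1 / 2 : ℝ) := fun y => by
    rw [hEdef, abs_sub_comm]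
    exact abs_sub_le_mul_of_le (one_le_one_add_abs_rpow y) (hM y) (abs_oddLog_affine_le hB d y)
  have hEanti : ∀ y, E (-d - y) = -E y := fun y => by
    simp only [hEdef, hanti]
    rw [show d + 2 * (-d - y) = -(d + 2 * y) by ring, oddLog_neg]; ring
  have hEpos : ∀ y, -(d / 2) ≤ y → 0 ≤ E y := fun y hy => by
    have h0 : 0 ≤ d + 2 * y := by linarith
    have := hle y
    rw [abs_of_nonneg h0, ← oddLog_of_nonneg B h0] at this
    simp only [hEdef]; linarith
  obtain ⟨K, hK⟩ : ∃ K, ∀ y, |y| ≤ d / 2 → E y ≤ K := by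
    obtain ⟨K, hK⟩ := (isCompact_Icc (a := -(d / 2)) (b := d / 2)).bddAbove_image hE.continuousOn
    exact ⟨K, fun y hy => hK ⟨y, abs_le.1 hy, rfl⟩⟩
  have hlow : Tendsto (fun ε : ℝ => 2 * (B * oddLog B d / (1 + B * d)) +
      -(2 * (4 * K / d ^ 2) * ε)) (𝓝[>] 0) (𝓝 (2 * (B * oddLog B d / (1 + B * d)))) := by
    have : Continuous fun ε : ℝ => 2 * (B * oddLog B d / (1 + B * d)) +
      -(2 * (4 * K / d ^ 2) * ε) := by fun_prop
    simpa using (this.tendsto 0).mono_left nhdsWithin_le_nhds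
  refine le_of_tendsto_of_tendsto hlow hlim ?_
  have hsmall : ∀ᶠ ε : ℝ in 𝓝[>] 0, ε ∈ Ioo 0 (d / 2) := Ioo_mem_nhdsGT (by linarith)
  filter_upwards [hsmall] with ε ⟨hε, hεd⟩
  have hB1 : 0 < 1 / B := by positivity
  have h1 := le_truncated_dissipation_oddLog hB hd hε (by linarith)
  have h2 := neg_le_truncated_integral_of_antisymm hE hEb hEanti hEpos hε hεd hK
  have h3 : ∫ y in {y : ℝ | ε < |y|}, (oddLog B d - W y) / y ^ 2 =
      (∫ y in {y : ℝ | ε < |y|}, (oddLog B d - oddLog B (d + 2 * y)) / y ^ 2) +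
        ∫ y in {y : ℝ | ε < |y|}, E y / y ^ 2 := by
    rw [← integral_add]
    · refine integral_congr_ae (Eventually.of_forall fun y => ?_)
      simp only [hEdef]
      ring
    · exact integrableOn_div_sq (continuous_const.sub (hV.comp (by fun_prop)))
        (fun y => abs_sub_le_mul_of_le (one_le_one_add_abs_rpow y) le_rfl
          (abs_oddLog_affine_le hB d y)) hε
    · exact integrableOn_div_sq hE hEb hε
  rw [h3]
  exact add_le_add h1 h2

lemma le_dissipation_difference_of_lt {u : ℝ → ℝ} (hu : Continuous u) {B M x y Lx Ly : ℝ}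
    (hB : 0 < B) (hM : ∀ z, |u z| ≤ M) (hmod : ∀ a b, u a - u b ≤ Real.log (1 + B * |a - b|))
    (hyx : y < x) (htouch : u x - u y = Real.log (1 + B * (x - y)))
    (hx : Tendsto (fun ε => ∫ h in {h : ℝ | ε < |h|}, (u x - u (x + h)) / h ^ 2)
      (𝓝[>] 0) (𝓝 Lx))
    (hy : Tendsto (fun ε => ∫ h in {h : ℝ | ε < |h|}, (u y - u (y + h)) / h ^ 2)
      (𝓝[>] 0) (𝓝 Ly)) :
    2 * (B * Real.log (1 + B * (x - y)) / (1 + B * (x - y))) ≤ Lx - Ly := by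
  have hgrow : ∀ p q : ℝ → ℝ, ∀ h, |u (p h) - u (q h)| ≤ (M + M) := fun p q h =>
    (abs_sub _ _).trans (add_le_add (hM _) (hM _))
  have hbound : ∀ p q : ℝ → ℝ, ∀ h, |u (p h) - u (q h)| ≤ (M + M) * (1 + |h|) ^ (1 / 2 : ℝ) :=
    fun p q h => (hgrow p q h).trans (le_mul_of_one_le_right
      ((abs_nonneg _).trans (hgrow p q h)) (one_le_one_add_abs_rpow h))
  refine le_of_tendsto_truncated_dissipation (W := fun h => u (x + h) - u (y - h))
    (by fun_prop) hB (sub_pos.2 hyx) (hgrow _ _) (fun h => ?_) (fun h => ?_) ?_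
  · rw [show x + (-(x - y) - h) = y - h by ring, show y - (-(x - y) - h) = x + h by ring]
    ring
  · exact (hmod _ _).trans_eq (by rw [show x + h - (y - h) = x - y + 2 * h by ring])
  · refine (hx.sub hy).congr' ?_
    filter_upwards [self_mem_nhdsWithin] with ε (hε : 0 < ε)
    rw [← setIntegral_lt_abs_comp_neg (fun h => (u y - u (y + h)) / h ^ 2) ε, ← integral_sub]
    · refine integral_congr_ae (Eventually.of_forall fun h => ?_)
      simp only [← htouch, neg_sq, ← sub_eq_add_neg]
      ring
    · exact integrableOn_div_sq (by fun_prop) (hbound (fun _ => x) (fun h => x + h)) hε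
    · simp only [neg_sq]
      exact integrableOn_div_sq (by fun_prop) (hbound (fun _ => y) (fun h => y + -h)) hε

lemma le_dissipation_difference {u : ℝ → ℝ} (hu : Continuous u) {B M x y Lx Ly : ℝ}
    (hB : 0 < B) (hM : ∀ z, |u z| ≤ M) (hmod : ∀ a b, u a - u b ≤ Real.log (1 + B * |a - b|))
    (hxy : x ≠ y) (htouch : u x - u y = Real.log (1 + B * |x - y|))
    (hx : Tendsto (fun ε => ∫ h in {h : ℝ | ε < |h|}, (u x - u (x + h)) / h ^ 2)
      (𝓝[>] 0) (𝓝 Lx))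
    (hy : Tendsto (fun ε => ∫ h in {h : ℝ | ε < |h|}, (u y - u (y + h)) / h ^ 2)
      (𝓝[>] 0) (𝓝 Ly)) :
    2 * (B * Real.log (1 + B * |x - y|) / (1 + B * |x - y|)) ≤ Lx - Ly := by
  rcases hxy.lt_or_gt with h | h
  · rw [abs_sub_comm, abs_of_pos (sub_pos.2 h)] at htouch ⊢
    have hreflect : ∀ z ℓ, Tendsto (fun ε => ∫ h in {h : ℝ | ε < |h|}, (u z - u (z + h)) / h ^ 2)
        (𝓝[>] 0) (𝓝 ℓ) → Tendsto (fun ε => ∫ h in {h : ℝ | ε < |h|},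
          (u (- -z) - u (-(-z + h))) / h ^ 2) (𝓝[>] 0) (𝓝 ℓ) := by
      intro z ℓ hz
      refine hz.congr fun ε => ?_
      rw [← setIntegral_lt_abs_comp_neg]
      refine integral_congr_ae (Eventually.of_forall fun h => ?_)
      simp [add_comm]
    have key := le_dissipation_difference_of_lt (u := fun z => u (-z)) (hu.comp continuous_neg)
      hB (fun z => hM (-z))
      (fun a b => (hmod (-a) (-b)).trans_eq (by rw [neg_sub_neg, abs_sub_comm]))
      (neg_lt_neg h) (by simpa [neg_add_eq_sub] using htouch) (hreflect x Lx hx) (hreflect y Ly hy)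
    simpa [neg_add_eq_sub] using key
  · rw [abs_of_pos (sub_pos.2 h)] at htouch ⊢
    exact le_dissipation_difference_of_lt hu hB hM hmod h htouch hx hy

lemma hasDerivAt_log_one_add_mul_abs {B z : ℝ} (hB : 0 < B) (hz : z ≠ 0) :
    HasDerivAt (fun a => Real.log (1 + B * |a|)) (B * SignType.sign z / (1 + B * |z|)) z :=
  (((hasDerivAt_abs hz).const_mul B).const_add 1).log (by positivity)

lemma deriv_eq_of_touch {u : ℝ → ℝ} (hu : Differentiable ℝ u) {B x y : ℝ}
    (hB : 0 < B) (hmod : ∀ a b, u a - u b ≤ Real.log (1 + B * |a - b|))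
    (hxy : x ≠ y) (htouch : u x - u y = Real.log (1 + B * |x - y|)) :
    deriv u x = B * SignType.sign (x - y) / (1 + B * |x - y|) ∧
      deriv u y = B * SignType.sign (x - y) / (1 + B * |x - y|) := by
  have hω := hasDerivAt_log_one_add_mul_abs hB (sub_ne_zero.2 hxy)
  constructor
  · have h1 : HasDerivAt (fun a => u a - Real.log (1 + B * |a - y|))
        (deriv u x - B * SignType.sign (x - y) / (1 + B * |x - y|)) x :=
      (hu x).hasDerivAt.sub (HasDerivAt.comp_sub_const x y hω)
    have h2 : IsLocalMax (fun a => u a - Real.log (1 + B * |a - y|)) x :=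
      Eventually.of_forall fun a => by
        have := hmod a y
        simp only; linarith
    linarith [h2.hasDerivAt_eq_zero h1]
  · have h1 : HasDerivAt (fun b => -u b - Real.log (1 + B * |x - b|))
        (-deriv u y - -(B * SignType.sign (x - y) / (1 + B * |x - y|))) y :=
      (hu y).hasDerivAt.neg.sub (HasDerivAt.comp_const_sub x y hω)
    have h2 : IsLocalMax (fun b => -u b - Real.log (1 + B * |x - b|)) y :=
      Eventually.of_forall fun b => by
        have := hmod x b
        simp only; linarith
    linarith [h2.hasDerivAt_eq_zero h1]

/-- At a pair of points where the modulus is attained, the evolution strictly decreases the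
difference of the values. -/
lemma burgers_difference_neg_of_touch {u : ℝ → ℝ} (hu : Differentiable ℝ u) {B M x y Lx Ly : ℝ}
    (hB : 0 < B) (hM : ∀ z, |u z| ≤ M) (hmod : ∀ a b, u a - u b ≤ Real.log (1 + B * |a - b|))
    (hxy : x ≠ y) (htouch : u x - u y = Real.log (1 + B * |x - y|))
    (hx : Tendsto (fun ε => ∫ h in {h : ℝ | ε < |h|}, (u x - u (x + h)) / h ^ 2)
      (𝓝[>] 0) (𝓝 Lx))
    (hy : Tendsto (fun ε => ∫ h in {h : ℝ | ε < |h|}, (u y - u (y + h)) / h ^ 2)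
      (𝓝[>] 0) (𝓝 Ly)) :
    (u x * deriv u x - Lx) - (u y * deriv u y - Ly) < 0 := by
  have hdiss := le_dissipation_difference hu.continuous hB hM hmod hxy htouch hx hy
  obtain ⟨h1, h2⟩ := deriv_eq_of_touch hu hB hmod hxy htouch
  have hd : 0 < |x - y| := abs_pos.2 (sub_ne_zero.2 hxy)
  have hlog : 0 < Real.log (1 + B * |x - y|) :=
    Real.log_pos (by linarith [mul_pos hB hd])
  set P := B * Real.log (1 + B * |x - y|) / (1 + B * |x - y|) with hP
  have hP0 : 0 < P := by positivity
  have hsign : ((SignType.sign (x - y) : SignType) : ℝ) ≤ 1 := by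
    cases SignType.sign (x - y) <;> simp
  have e : u x * deriv u x - u y * deriv u y = SignType.sign (x - y) * P := by
    rw [h1, h2, ← sub_mul, htouch, hP]; ring
  nlinarith

lemma deriv_ne_of_modulus {u : ℝ → ℝ} (hu : ContDiff ℝ 2 u) {B : ℝ} (hB : 0 < B)
    (hmod : ∀ a b, u a - u b ≤ Real.log (1 + B * |a - b|)) (hderiv : ∀ z, deriv u z ≤ B) (x : ℝ) :
    deriv u x ≠ B := by
  intro hx
  have hu1 : Differentiable ℝ u := hu.differentiable (by norm_num)
  have hu2 : Differentiable ℝ (deriv u) := by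
    have : ContDiff ℝ (1 + 1) u := by simpa [one_add_one_eq_two] using hu
    exact (contDiff_succ_iff_deriv.1 this).2.2.differentiable (by norm_num)
  have hmax : IsLocalMax (deriv u) x := Eventually.of_forall fun z => by
    simpa [hx] using hderiv z
  have hdd : HasDerivAt (deriv u) 0 x := by
    simpa [hmax.deriv_eq_zero] using (hu2 x).hasDerivAt
  set p : ℝ → ℝ := fun h => Real.log (1 + B * h) - (u (x + h) - u x) with hp
  set p' : ℝ → ℝ := fun h => B / (1 + B * h) - deriv u (x + h) with hp'
  have hlin : ∀ h : ℝ, HasDerivAt (fun h => 1 + B * h) B h := fun h => by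
    simpa using ((hasDerivAt_id h).const_mul B).const_add 1
  have hpd : ∀ h, 0 ≤ h → HasDerivAt p (p' h) h := fun h hh => by
    have h0 : 1 + B * h ≠ 0 := by positivity
    exact ((hlin h).log h0).sub
      ((HasDerivAt.comp_const_add x h (hu1 (x + h)).hasDerivAt).sub_const (u x))
  have hpdd : HasDerivAt p' (-B ^ 2) 0 := by
    have h1 : HasDerivAt (fun h => B / (1 + B * h)) (-B ^ 2) 0 := by
      refine ((hasDerivAt_const (0 : ℝ) B).div (hlin 0) (by simp)).congr_deriv ?_
      simp [sq]
    have h2 : HasDerivAt (fun h => deriv u (x + h)) 0 0 :=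
      HasDerivAt.comp_const_add x 0 (by simpa using hdd)
    exact (h1.sub h2).congr_deriv (sub_zero _)
  have hp'0 : p' 0 = 0 := by simp [hp', hx]
  have hev : ∀ᶠ h in 𝓝[>] (0 : ℝ), p' h < 0 := by
    have hs := (hasDerivAt_iff_tendsto_slope.1 hpdd).mono_left
      (nhdsWithin_mono 0 fun h (hh : 0 < h) => hh.ne')
    filter_upwards [hs.eventually_lt_const (by nlinarith : -B ^ 2 < 0), self_mem_nhdsWithin]
      with h hneg (hh : 0 < h)
    rw [slope_def_field, hp'0, sub_zero, sub_zero] at hneg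
    by_contra! hcon
    exact hneg.not_ge (div_nonneg hcon hh.le)
  obtain ⟨δ, hδ, hδp⟩ := mem_nhdsGT_iff_exists_Ioc_subset.1 hev
  have hδ0 : (0 : ℝ) < δ := hδ
  have hanti : StrictAntiOn p (Icc 0 δ) := by
    refine strictAntiOn_of_deriv_neg (convex_Icc 0 δ)
      (fun h hh => (hpd h hh.1).continuousAt.continuousWithinAt) fun h hh => ?_
    rw [interior_Icc] at hh
    rw [(hpd h hh.1.le).deriv]
    exact hδp ⟨hh.1, hh.2.le⟩
  have hlt := hanti ⟨le_rfl, hδ0.le⟩ ⟨hδ0.le, le_rfl⟩ hδ0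
  have hm := hmod (x + δ) x
  rw [add_sub_cancel_left, abs_of_pos hδ0] at hm
  simp only [hp, mul_zero, add_zero, Real.log_one, sub_self] at hlt
  linarith

lemma abs_deriv_ne_of_modulus {u : ℝ → ℝ} (hu : ContDiff ℝ 2 u) {B : ℝ} (hB : 0 < B)
    (hmod : ∀ a b, u a - u b ≤ Real.log (1 + B * |a - b|)) (hderiv : ∀ z, |deriv u z| ≤ B)
    (x : ℝ) : |deriv u x| ≠ B := by
  intro hx
  rcases (abs_eq hB.le).1 hx with h | h
  · exact deriv_ne_of_modulus hu hB hmod (fun z => (le_abs_self _).trans (hderiv z)) x h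
  · refine deriv_ne_of_modulus hu.neg hB (fun a b => ?_) (fun z => ?_) x ?_
    · have := hmod b a
      rw [abs_sub_comm] at this
      linarith
    · rw [deriv.fun_neg]; exact (neg_le_abs _).trans (hderiv z)
    · rw [deriv.fun_neg, h, neg_neg]

lemma nonneg_of_hasDerivWithinAt_of_le_left {D : ℝ → ℝ} {D' T t : ℝ}
    (hD : HasDerivWithinAt D D' (Icc 0 T) t) (ht0 : 0 < t) (htT : t ≤ T)
    (hle : ∀ s ∈ Ico 0 t, D s ≤ D t) : 0 ≤ D' := by
  have hs := (hasDerivWithinAt_iff_tendsto_slope' (by simp : t ∉ Ico 0 t)).1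
    (hD.mono fun s (hs : s ∈ Ico 0 t) => ⟨hs.1, hs.2.le.trans htT⟩)
  have : (𝓝[Ico 0 t] t).NeBot := by
    rw [nhdsWithin_Ico_eq_nhdsLT ht0]; infer_instance
  refine ge_of_tendsto hs ?_
  filter_upwards [self_mem_nhdsWithin] with s hs
  rw [slope_def_field]
  exact div_nonneg_of_nonpos (by linarith [hle s hs]) (by linarith [hs.2])

/-- The difference quotient `log (1 + B ξ) / ξ`, extended continuously to `ξ = 0`. -/
noncomputable def logSlope (B ξ : ℝ) : ℝ := ∫ s in (0 : ℝ)..1, B / (1 + B * |s * ξ|)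

lemma logSlope_zero (B : ℝ) : logSlope B 0 = B := by simp [logSlope]

lemma continuous_logSlope {B : ℝ} (hB : 0 < B) : Continuous (logSlope B) := by
  refine intervalIntegral.continuous_parametric_intervalIntegral_of_continuous' ?_ 0 1
  refine Continuous.div (by fun_prop) (by fun_prop) fun p => ?_
  positivity

lemma mul_logSlope {B ξ : ℝ} (hB : 0 < B) (hξ : 0 ≤ ξ) :
    ξ * logSlope B ξ = Real.log (1 + B * ξ) := by
  have hd : ∀ s ∈ uIcc (0 : ℝ) 1, HasDerivAt (fun s => Real.log (1 + B * (s * ξ)))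
      (ξ * (B / (1 + B * |s * ξ|))) s := by
    intro s hs
    rw [uIcc_of_le zero_le_one] at hs
    have h0 : 0 ≤ s * ξ := mul_nonneg hs.1 hξ
    have h1 : HasDerivAt (fun s => 1 + B * (s * ξ)) (B * ξ) s := by
      simpa using (((hasDerivAt_id s).mul_const ξ).const_mul B).const_add 1
    refine (h1.log (by positivity)).congr_deriv ?_
    rw [abs_of_nonneg h0]; ring
  have hc : Continuous fun s : ℝ => ξ * (B / (1 + B * |s * ξ|)) :=
    continuous_const.mul (Continuous.div (by fun_prop) (by fun_prop) fun s => by positivity)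
  have := intervalIntegral.integral_eq_sub_of_hasDerivAt hd (hc.intervalIntegrable 0 1)
  rw [intervalIntegral.integral_const_mul] at this
  simpa [logSlope] using this

lemma mul_integral_deriv {u : ℝ → ℝ} (hu : ContDiff ℝ 1 u) (x ξ : ℝ) :
    ξ * ∫ s in (0 : ℝ)..1, deriv u (x + s * ξ) = u (x + ξ) - u x := by
  have hd : ∀ s ∈ uIcc (0 : ℝ) 1, HasDerivAt (fun s => u (x + s * ξ))
      (ξ * deriv u (x + s * ξ)) s := by
    intro s _
    have h1 : HasDerivAt (fun s => x + s * ξ) ξ s := by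
      simpa using ((hasDerivAt_id s).mul_const ξ).const_add x
    exact (((hu.differentiable (by norm_num) _).hasDerivAt).comp s h1).congr_deriv (mul_comm _ _)
  have hc : Continuous fun s : ℝ => ξ * deriv u (x + s * ξ) :=
    continuous_const.mul ((hu.continuous_deriv le_rfl).comp (by fun_prop))
  have := intervalIntegral.integral_eq_sub_of_hasDerivAt hd (hc.intervalIntegrable 0 1)
  rw [intervalIntegral.integral_const_mul] at this
  simpa using this

/-- Initial data with `|u| ≤ M` and `|deriv u| ≤ G` strictly obeys the modulus `log (1 + B ξ)` as soon
as `G * exp (2 * M) < B`. -/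
lemma abs_integral_deriv_lt_logSlope {u : ℝ → ℝ} (hu : ContDiff ℝ 1 u) {B G M : ℝ}
    (hM : ∀ x, |u x| ≤ M) (hG : ∀ x, |deriv u x| ≤ G) (hB : G * Real.exp (2 * M) < B)
    (x : ℝ) {ξ : ℝ} (hξ : 0 ≤ ξ) :
    |∫ s in (0 : ℝ)..1, deriv u (x + s * ξ)| < logSlope B ξ := by
  have hG0 : 0 ≤ G := (abs_nonneg _).trans (hG 0)
  have hM0 : 0 ≤ M := (abs_nonneg _).trans (hM 0)
  have hB0 : 0 < B := (by positivity : 0 ≤ G * Real.exp (2 * M)).trans_lt hB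
  have hIG : |∫ s in (0 : ℝ)..1, deriv u (x + s * ξ)| ≤ G := by
    have := intervalIntegral.norm_integral_le_of_norm_le_const (a := (0 : ℝ)) (b := 1) (C := G)
      (f := fun s => deriv u (x + s * ξ)) fun s _ => hG _
    simpa using this
  rcases hξ.eq_or_lt with rfl | hξ
  · rw [logSlope_zero]
    have : G * 1 ≤ G * Real.exp (2 * M) :=
      mul_le_mul_of_nonneg_left (Real.one_le_exp (by linarith)) hG0
    linarith
  · refine lt_of_mul_lt_mul_left ?_ hξ.le
    rw [mul_logSlope hB0 hξ.le]
    rcases lt_or_ge (2 * M) (Real.log (1 + B * ξ)) with h | h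
    · refine lt_of_le_of_lt ?_ h
      rw [← abs_of_pos hξ, ← abs_mul, abs_of_pos hξ, mul_integral_deriv hu]
      linarith [abs_sub (u (x + ξ)) (u x), hM x, hM (x + ξ)]
    · have hpos : 0 < 1 + B * ξ := by positivity
      have hexp : 1 + B * ξ ≤ Real.exp (2 * M) := (Real.log_le_iff_le_exp hpos).1 h
      have hlog : 1 - (1 + B * ξ)⁻¹ ≤ Real.log (1 + B * ξ) :=
        Real.one_sub_inv_le_log_of_pos hpos
      have hGB : G * (1 + B * ξ) < B :=
        (mul_le_mul_of_nonneg_left hexp hG0).trans_lt hB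
      have hlt : ξ * G < 1 - (1 + B * ξ)⁻¹ := by
        rw [show 1 - (1 + B * ξ)⁻¹ = B * ξ / (1 + B * ξ) by field_simp; ring, lt_div_iff₀ hpos]
        nlinarith
      nlinarith

lemma contDiff_slice {θ : ℝ → ℝ → ℝ} {s : Set ℝ} {n : WithTop ℕ∞}
    (hθ : ContDiffOn ℝ n (fun p : ℝ × ℝ => θ p.1 p.2) (univ ×ˢ s)) {t : ℝ} (ht : t ∈ s) :
    ContDiff ℝ n fun x => θ x t := by
  rw [← contDiffOn_univ]
  exact hθ.comp (f := fun x : ℝ => (x, t)) (by fun_prop) fun x _ => ⟨mem_univ _, ht⟩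

lemma continuousOn_deriv_slice {θ : ℝ → ℝ → ℝ} {s : Set ℝ} (hs : UniqueDiffOn ℝ s)
    (hθ : ContDiffOn ℝ 1 (fun p : ℝ × ℝ => θ p.1 p.2) (univ ×ˢ s)) :
    ContinuousOn (fun p : ℝ × ℝ => deriv (fun x => θ x p.2) p.1) (univ ×ˢ s) := by
  have hc := hθ.continuousOn_fderivWithin (uniqueDiffOn_univ.prod hs) le_rfl
  refine (hc.clm_apply (continuousOn_const (c := ((1, 0) : ℝ × ℝ)))).congr fun p hp => ?_
  have h1 := (hθ.differentiableOn (by norm_num) p hp).hasFDerivWithinAt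
  have h2 : HasDerivWithinAt (fun x : ℝ => (x, p.2)) ((1, 0) : ℝ × ℝ) univ p.1 :=
    ((hasDerivAt_id p.1).prodMk (hasDerivAt_const p.1 p.2)).hasDerivWithinAt
  have h3 := HasFDerivWithinAt.comp_hasDerivWithinAt (x := p.1) (f := fun x : ℝ => (x, p.2))
    (t := univ ×ˢ s) h1 h2 fun x _ => ⟨mem_univ _, hp.2⟩
  exact (hasDerivWithinAt_univ.1 h3).deriv

lemma exists_abs_le_of_periodic {f : ℝ → ℝ → ℝ} {T per : ℝ} (hper : 0 < per)
    (hf : ContinuousOn (fun p : ℝ × ℝ => f p.1 p.2) (univ ×ˢ Icc 0 T))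
    (hp : ∀ t ∈ Icc (0 : ℝ) T, ∀ x, f (x + per) t = f x t) :
    ∃ M, ∀ t ∈ Icc (0 : ℝ) T, ∀ x, |f x t| ≤ M := by
  obtain ⟨M, hM⟩ := (isCompact_Icc (a := (0 : ℝ)) (b := per)).prod
    (isCompact_Icc (a := (0 : ℝ)) (b := T)) |>.exists_bound_of_continuousOn
    (hf.mono (prod_mono_left (subset_univ _)))
  refine ⟨M, fun t ht x => ?_⟩
  have hpt : Function.Periodic (fun x => f x t) per := hp t ht
  obtain ⟨y, hy, hxy⟩ := hpt.exists_mem_Ico₀ hper x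
  have hxy : f x t = f y t := hxy
  rw [hxy]
  exact hM (y, t) ⟨⟨hy.1, hy.2.le⟩, ht⟩

lemma deriv_add_period {u : ℝ → ℝ} {c : ℝ} (h : ∀ x, u (x + c) = u x) (x : ℝ) :
    deriv u (x + c) = deriv u x := by
  rw [← deriv_comp_add_const]
  simp [h]

/-- A modulus of continuity `log (1 + B ξ)` strictly obeyed at time `0` is preserved by the
critical Burgers flow, so the gradient stays below `B`. -/
lemma burgers_abs_deriv_lt {B T per : ℝ} {θ Lθ : ℝ → ℝ → ℝ} (hB : 0 < B) (hT : 0 < T)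
    (hper : 0 < per)
    (hθ : ContDiffOn ℝ 2 (fun p : ℝ × ℝ => θ p.1 p.2) (univ ×ˢ Icc 0 T))
    (hp : ∀ t ∈ Icc (0 : ℝ) T, ∀ x, θ (x + per) t = θ x t)
    (hL : ∀ t ∈ Icc (0 : ℝ) T, ∀ x,
      Tendsto (fun ε => ∫ y in {y : ℝ | ε < |y|}, (θ x t - θ (x + y) t) / y ^ 2)
        (𝓝[>] 0) (𝓝 (Lθ x t)))
    (hpde : ∀ x, ∀ t ∈ Icc (0 : ℝ) T, HasDerivWithinAt (fun s => θ x s)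
      (θ x t * deriv (fun x' => θ x' t) x - Lθ x t) (Icc 0 T) t)
    (h0 : ∀ x ξ, 0 ≤ ξ →
      |∫ s in (0 : ℝ)..1, deriv (fun x' => θ x' 0) (x + s * ξ)| < logSlope B ξ) :
    ∀ t ∈ Icc (0 : ℝ) T, ∀ x, |deriv (fun x' => θ x' t) x| < B := by
  have hC2 : ∀ t ∈ Icc (0 : ℝ) T, ContDiff ℝ 2 fun x => θ x t := fun t ht => contDiff_slice hθ ht
  have hC1 : ∀ t ∈ Icc (0 : ℝ) T, ContDiff ℝ 1 fun x => θ x t :=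
    fun t ht => (hC2 t ht).of_le (by norm_num)
  obtain ⟨M, hM⟩ := exists_abs_le_of_periodic hper hθ.continuousOn hp
  set Φ : ℝ × ℝ × ℝ → ℝ := fun p => |∫ s in (0 : ℝ)..1,
    deriv (fun x' => θ x' (projIcc 0 T hT.le p.2.2)) (p.1 + s * p.2.1)| - logSlope B p.2.1 with hΦ
  have hΦc : Continuous Φ := by
    refine Continuous.sub (Continuous.abs ?_) ((continuous_logSlope hB).comp (by fun_prop))
    refine intervalIntegral.continuous_parametric_intervalIntegral_of_continuous' ?_ 0 1
    refine (continuousOn_deriv_slice (uniqueDiffOn_Icc hT) (hθ.of_le (by norm_num))).comp_continuous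
      (f := fun q : (ℝ × ℝ × ℝ) × ℝ =>
        (q.1.1 + q.2 * q.1.2.1, (projIcc 0 T hT.le q.1.2.2 : ℝ))) ?_
      fun q => ⟨mem_univ _, (projIcc 0 T hT.le q.1.2.2).2⟩
    exact Continuous.prodMk (by fun_prop)
      (continuous_subtype_val.comp (continuous_projIcc.comp (by fun_prop)))
  have hΦt : ∀ t ∈ Icc (0 : ℝ) T, ∀ x ξ, Φ (x, ξ, t) =
      |∫ s in (0 : ℝ)..1, deriv (fun x' => θ x' t) (x + s * ξ)| - logSlope B ξ := by
    intro t ht x ξ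
    simp only [hΦ, projIcc_of_mem hT.le ht]
  have hΦmul : ∀ t ∈ Icc (0 : ℝ) T, ∀ x ξ, 0 ≤ ξ →
      ξ * Φ (x, ξ, t) = |θ (x + ξ) t - θ x t| - Real.log (1 + B * ξ) := by
    intro t ht x ξ hξ
    rw [hΦt t ht, mul_sub, mul_logSlope hB hξ, ← mul_integral_deriv (hC1 t ht) x ξ, abs_mul,
      abs_of_nonneg hξ]
  have hΦzero : ∀ t ∈ Icc (0 : ℝ) T, ∀ x, Φ (x, 0, t) = |deriv (fun x' => θ x' t) x| - B := by
    intro t ht x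
    rw [hΦt t ht, logSlope_zero]
    simp
  have hΦper : ∀ t ∈ Icc (0 : ℝ) T, ∀ ξ, Function.Periodic (fun x => Φ (x, ξ, t)) per := by
    intro t ht ξ x
    simp only [hΦt t ht]
    congr 3
    funext s
    rw [add_right_comm, deriv_add_period (hp t ht)]
  set R := Real.exp (2 * M) / B with hR
  have hΦlarge : ∀ t ∈ Icc (0 : ℝ) T, ∀ x ξ, R ≤ ξ → Φ (x, ξ, t) < 0 := by
    intro t ht x ξ hξ
    have hR0 : 0 < R := by positivity
    have hξ0 : 0 < ξ := hR0.trans_le hξ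
    have hlog : 2 * M < Real.log (1 + B * ξ) := by
      rw [Real.lt_log_iff_exp_lt (by positivity)]
      rw [hR, div_le_iff₀ hB] at hξ
      linarith
    have h1 := hΦmul t ht x ξ hξ0.le
    have h2 := abs_sub (θ (x + ξ) t) (θ x t)
    have h3 := hM t ht x
    have h4 := hM t ht (x + ξ)
    by_contra! hcon
    linarith [mul_nonneg hξ0.le hcon]
  by_contra! hbad
  obtain ⟨t', ht', x', hx'⟩ := hbad
  have hreduce : ∀ t ∈ Icc (0 : ℝ) T, ∀ x ξ, 0 ≤ ξ → 0 ≤ Φ (x, ξ, t) →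
      ∃ y, (y, ξ, t) ∈ (Icc 0 per ×ˢ Icc 0 R ×ˢ Icc 0 T) ∩ {p | 0 ≤ Φ p} := by
    intro t ht x ξ hξ hpos
    obtain ⟨y, hy, hxy⟩ := (hΦper t ht ξ).exists_mem_Ico₀ hper x
    have hxy : Φ (x, ξ, t) = Φ (y, ξ, t) := hxy
    refine ⟨y, ⟨⟨hy.1, hy.2.le⟩, ⟨hξ, ?_⟩, ht⟩, ?_⟩
    · by_contra! hcon
      exact (hΦlarge t ht x ξ hcon.le).not_ge hpos
    · exact hpos.trans_eq hxy
  have hcompact : IsCompact ((Icc 0 per ×ˢ Icc 0 R ×ˢ Icc 0 T) ∩ {p | 0 ≤ Φ p}) :=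
    (isCompact_Icc.prod (isCompact_Icc.prod isCompact_Icc)).inter_right
      (isClosed_le continuous_const hΦc)
  obtain ⟨y', hy'⟩ := hreduce t' ht' x' 0 le_rfl (by rw [hΦzero t' ht']; linarith)
  obtain ⟨⟨x₁, ξ₁, t₁⟩, ⟨⟨-, hξ₁, ht₁⟩, hpos₁⟩, hmin⟩ := hcompact.exists_isMinOn ⟨_, hy'⟩
    (f := fun p => p.2.2) (by fun_prop)
  simp only at hξ₁ ht₁
  have hpos₁ : 0 ≤ Φ (x₁, ξ₁, t₁) := hpos₁
  have hbefore : ∀ t ∈ Ico 0 t₁, ∀ x ξ, 0 ≤ ξ → Φ (x, ξ, t) < 0 := by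
    intro t ht x ξ hξ
    by_contra! hcon
    obtain ⟨y, hy⟩ := hreduce t ⟨ht.1, ht.2.le.trans ht₁.2⟩ x ξ hξ hcon
    exact (show t₁ ≤ t from hmin hy).not_gt ht.2
  have ht₁0 : 0 < t₁ := by
    rcases ht₁.1.eq_or_lt with h | h
    · rw [← h, hΦt 0 ⟨le_rfl, hT.le⟩] at hpos₁
      linarith [h0 x₁ ξ₁ hξ₁.1]
    · exact h
  have hat : ∀ x ξ, 0 ≤ ξ → Φ (x, ξ, t₁) ≤ 0 := by
    intro x ξ hξ
    have hlim : Tendsto (fun t => Φ (x, ξ, t)) (𝓝[<] t₁) (𝓝 (Φ (x, ξ, t₁))) :=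
      ((hΦc.comp (by fun_prop : Continuous fun t : ℝ => (x, ξ, t))).tendsto t₁).mono_left
        nhdsWithin_le_nhds
    refine le_of_tendsto hlim ?_
    filter_upwards [Ico_mem_nhdsLT ht₁0] with t ht
    exact (hbefore t ht x ξ hξ).le
  have hΦ₁ : Φ (x₁, ξ₁, t₁) = 0 := le_antisymm (hat _ _ hξ₁.1) hpos₁
  have habs : ∀ t ∈ Icc (0 : ℝ) T, (∀ x ξ, 0 ≤ ξ → Φ (x, ξ, t) ≤ 0) →
      ∀ a b, θ a t - θ b t ≤ Real.log (1 + B * |a - b|) := by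
    intro t ht hle a b
    rcases le_total a b with h | h
    · have h1 := hΦmul t ht a (b - a) (sub_nonneg.2 h)
      have h2 := mul_nonpos_of_nonneg_of_nonpos (sub_nonneg.2 h) (hle a (b - a) (sub_nonneg.2 h))
      rw [h1, add_sub_cancel] at h2
      rw [abs_sub_comm a b, abs_of_nonneg (sub_nonneg.2 h)]
      linarith [neg_le_abs (θ b t - θ a t)]
    · have h1 := hΦmul t ht b (a - b) (sub_nonneg.2 h)
      have h2 := mul_nonpos_of_nonneg_of_nonpos (sub_nonneg.2 h) (hle b (a - b) (sub_nonneg.2 h))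
      rw [h1, add_sub_cancel] at h2
      rw [abs_of_nonneg (sub_nonneg.2 h)]
      linarith [le_abs_self (θ a t - θ b t)]
  have hmod := habs t₁ ht₁ hat
  rcases hξ₁.1.eq_or_lt with hξ0 | hξ0
  · rw [← hξ0, hΦzero t₁ ht₁] at hΦ₁
    refine abs_deriv_ne_of_modulus (hC2 t₁ ht₁) hB hmod (fun z => ?_) x₁ (by linarith)
    have := hat z 0 le_rfl
    rw [hΦzero t₁ ht₁] at this
    linarith
  · obtain ⟨a, b, hab, htouch⟩ : ∃ a b, a ≠ b ∧
        θ a t₁ - θ b t₁ = Real.log (1 + B * |a - b|) := by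
      have h1 := hΦmul t₁ ht₁ x₁ ξ₁ hξ0.le
      rw [hΦ₁, mul_zero] at h1
      rcases abs_cases (θ (x₁ + ξ₁) t₁ - θ x₁ t₁) with ⟨h, -⟩ | ⟨h, -⟩
      · refine ⟨x₁ + ξ₁, x₁, (lt_add_of_pos_right x₁ hξ0).ne', ?_⟩
        rw [add_sub_cancel_left, abs_of_pos hξ0]
        linarith
      · refine ⟨x₁, x₁ + ξ₁, (lt_add_of_pos_right x₁ hξ0).ne, ?_⟩
        rw [abs_sub_comm, add_sub_cancel_left, abs_of_pos hξ0]
        linarith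
    have hneg := burgers_difference_neg_of_touch ((hC1 t₁ ht₁).differentiable (by norm_num)) hB
      (hM t₁ ht₁) hmod hab htouch (hL t₁ ht₁ a) (hL t₁ ht₁ b)
    refine hneg.not_ge (nonneg_of_hasDerivWithinAt_of_le_left
      ((hpde a t₁ ht₁).sub (hpde b t₁ ht₁)) ht₁0 ht₁.2 fun s hs => ?_)
    have := habs s ⟨hs.1, hs.2.le.trans ht₁.2⟩ (fun x ξ hξ => (hbefore s hs x ξ hξ).le) a b
    exact this.trans_eq htouch.symm

/-- **A priori gradient bound for the critical Burgers equation (eq. (gradburest)).**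
There is an absolute constant `C > 0` such that every smooth space-periodic solution of
`∂_t θ = θ ∂_x θ − L θ` on `[0,T]`, where `L` is the (unnormalized) critical dissipation
`L f(x) = P.V.∫ (f(x) − f(x+y))/|y|² dy`, satisfies
`‖∂_x θ(·,t)‖_∞ ≤ ‖∂_x θ(·,0)‖_∞ · exp(C‖θ(·,0)‖_∞)` for all `t ∈ [0,T]`. -/
theorem critical_burgers_gradient_bound :
    ∃ C > (0:ℝ), ∀ (T per : ℝ) (θ Lθ : ℝ → ℝ → ℝ),
      0 ≤ T → 0 < per →
      ContDiffOn ℝ (⊤ : ℕ∞) (fun p : ℝ × ℝ => θ p.1 p.2) (univ ×ˢ Icc 0 T) →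
      (∀ t ∈ Icc (0:ℝ) T, ∀ x, θ (x + per) t = θ x t) →
      (∀ t ∈ Icc (0:ℝ) T, ∀ x,
        Tendsto (fun ε => ∫ y in {y : ℝ | ε < |y|}, (θ x t - θ (x + y) t) / y ^ (2:ℕ))
          (nhdsWithin 0 (Ioi 0)) (nhds (Lθ x t))) →
      (∀ x, ∀ t ∈ Icc (0:ℝ) T,
        HasDerivWithinAt (fun s => θ x s)
          (θ x t * deriv (fun x' => θ x' t) x - Lθ x t) (Icc 0 T) t) →
      ∀ t ∈ Icc (0:ℝ) T,
        (⨆ x, |deriv (fun x' => θ x' t) x|) ≤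
          (⨆ x, |deriv (fun x' => θ x' 0) x|) * Real.exp (C * ⨆ x, |θ x 0|) := by
  refine ⟨2, two_pos, fun T per θ Lθ hT0 hper hθ hp hL hpde t ht => ?_⟩
  have hM0 : 0 ≤ ⨆ x, |θ x 0| := Real.iSup_nonneg fun x => abs_nonneg _
  have hG0 : 0 ≤ ⨆ x, |deriv (fun x' => θ x' 0) x| := Real.iSup_nonneg fun x => abs_nonneg _
  rcases hT0.eq_or_lt with rfl | hT
  · obtain rfl : t = 0 := le_antisymm ht.2 ht.1
    exact le_mul_of_one_le_right hG0 (Real.one_le_exp (by positivity))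
  have hθ2 : ContDiffOn ℝ 2 (fun p : ℝ × ℝ => θ p.1 p.2) (univ ×ˢ Icc 0 T) :=
    contDiffOn_infty.1 hθ 2
  have hθ1 : ContDiffOn ℝ 1 (fun p : ℝ × ℝ => θ p.1 p.2) (univ ×ˢ Icc 0 T) :=
    hθ2.of_le (by norm_num)
  have hmem0 : (0 : ℝ) ∈ Icc 0 T := ⟨le_rfl, hT.le⟩
  obtain ⟨M, hM⟩ := exists_abs_le_of_periodic hper hθ.continuousOn hp
  obtain ⟨G, hG⟩ := exists_abs_le_of_periodic
    (f := fun x t => deriv (fun x' => θ x' t) x) hper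
    (continuousOn_deriv_slice (uniqueDiffOn_Icc hT) hθ1) fun t ht => deriv_add_period (hp t ht)
  have hMsup : ∀ x, |θ x 0| ≤ ⨆ x, |θ x 0| :=
    le_ciSup (f := fun x => |θ x 0|) ⟨M, by rintro _ ⟨x, rfl⟩; exact hM 0 hmem0 x⟩
  have hGsup : ∀ x, |deriv (fun x' => θ x' 0) x| ≤ ⨆ x, |deriv (fun x' => θ x' 0) x| :=
    le_ciSup (f := fun x => |deriv (fun x' => θ x' 0) x|)
      ⟨G, by rintro _ ⟨x, rfl⟩; exact hG 0 hmem0 x⟩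
  refine le_of_forall_gt_imp_ge_of_dense fun B hB => ciSup_le fun x => ?_
  have hB0 : 0 < B := lt_of_le_of_lt (by positivity) hB
  exact (burgers_abs_deriv_lt hB0 hT hper hθ2 hp hL hpde
    (fun x ξ hξ => abs_integral_deriv_lt_logSlope (contDiff_slice hθ1 hmem0) hMsup hGsup hB x hξ)
    t ht x).le
end

section
/- The Burgers modulus of continuity satisfies the key differential inequality (eq. (burmodconest), combining (for1) and (for2)): For K > 0 define ξ₀ = (K/(4π))² and the function ω_K : (0,∞) → (0,∞) by ω_K(ξ) = ξ/(1 + K√ξ) for 0 < ξ ≤ ξ₀ and ω_K(ξ) = C_K log ξ for ξ > ξ₀, where C_K = ξ₀/((1 + K√ξ₀) log ξ₀) is chosen so that ω_K is continuous at ξ₀. Then there exists K₀ > 0 such that for every K ≥ K₀: (i) ω_K is increasing and concave on (0,∞); and (ii) for every ξ > 0 with ξ ≠ ξ₀, 2 ω_K(ξ) ω_K'(ξ) + (1/π)·( ∫_0^{ξ/2} [ω_K(ξ+2η) + ω_K(ξ−2η) − 2ω_K(ξ)]/η² dη + ∫_{ξ/2}^∞ [ω_K(ξ+2η) − ω_K(2η−ξ)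 − 2ω_K(ξ)]/η² dη ) ≤ 0. -/
open Set MeasureTheory Real

noncomputable section

/-- The break point `ξ₀ = (K/(4π))²`. -/
def xiZero (K : ℝ) : ℝ := (K / (4 * Real.pi)) ^ (2:ℕ)

/-- The constant `C_K` making the Burgers modulus of continuity continuous at `ξ₀`. -/
def burgersCK (K : ℝ) : ℝ :=
  xiZero K / ((1 + K * Real.sqrt (xiZero K)) * Real.log (xiZero K))

/-- The Burgers modulus of continuity: `ω_K(ξ) = ξ/(1+K√ξ)` for `0 < ξ ≤ ξ₀` and
`ω_K(ξ) = C_K log ξ` for `ξ > ξ₀`. -/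
def burgersOmega (K ξ : ℝ) : ℝ :=
  if ξ ≤ xiZero K then ξ / (1 + K * Real.sqrt ξ) else burgersCK K * Real.log ξ

/-- The derivative of `burgersOmega K`, taken from the left at the break point. -/
def burgersSlope (K x : ℝ) : ℝ :=
  if x ≤ xiZero K then (2 + K * √x) / (2 * (1 + K * √x) ^ 2) else burgersCK K / x

/-- First order expansion of `x / (1 + K √x)` with explicit remainder, in the variable `√x`. -/
lemma quotient_expansion {K r t : ℝ} (hK : 0 < K) (hr : 0 ≤ r) (ht : 0 ≤ t) :
    t ^ 2 / (1 + K * t) = r ^ 2 / (1 + K * r)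
      + (2 + K * r) / (2 * (1 + K * r) ^ 2) * (t ^ 2 - r ^ 2)
      - (t - r) ^ 2 * ((K * r + 2 * (K * t) + K * r * (K * t))
        / (2 * (1 + K * r) ^ 2 * (1 + K * t))) := by
  have h1 : 1 + K * r ≠ 0 := by positivity
  have h2 : 1 + K * t ≠ 0 := by positivity
  field_simp
  ring

lemma quotient_le_tangent {K x y : ℝ} (hK : 0 < K) (hx : 0 ≤ x) (hy : 0 ≤ y) :
    y / (1 + K * √y) ≤ x / (1 + K * √x)
      + (2 + K * √x) / (2 * (1 + K * √x) ^ 2) * (y - x) := by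
  have h := quotient_expansion hK (sqrt_nonneg x) (sqrt_nonneg y)
  rw [sq_sqrt hx, sq_sqrt hy] at h
  have : 0 ≤ (√y - √x) ^ 2 * ((K * √x + 2 * (K * √y) + K * √x * (K * √y))
        / (2 * (1 + K * √x) ^ 2 * (1 + K * √y))) := by positivity
  linarith

lemma remainder_ge {a b : ℝ} (ha : 0 < a) (hb : 0 ≤ b) (hba : b ≤ a) :
    (a + b) ^ 2 * (3 + a) / (8 * a * (1 + a) ^ 3)
      ≤ (a + 2 * b + a * b) / (2 * (1 + a) ^ 2 * (1 + b)) := by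
  have hd : 0 ≤ a - b := sub_nonneg.2 hba
  have key : 0 ≤ (a - b) * ((3 + a) * b ^ 2 + (3 + a) * (1 + 3 * a) * b + a * (1 + 3 * a)) := by
    positivity
  rw [div_le_div_iff₀ (by positivity) (by positivity)]
  have : 0 ≤ 2 * (1 + a) ^ 2 * ((a - b) * ((3 + a) * b ^ 2 + (3 + a) * (1 + 3 * a) * b
      + a * (1 + 3 * a))) := by positivity
  linear_combination this

/-- To the left of the base point, the second order Taylor polynomial is an upper bound. -/
lemma quotient_le_taylor_two {K x y : ℝ} (hK : 0 < K) (hx : 0 < x) (hy : 0 ≤ y) (hyx : y ≤ x) :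
    y / (1 + K * √y) ≤ x / (1 + K * √x)
      + (2 + K * √x) / (2 * (1 + K * √x) ^ 2) * (y - x)
      - K * (3 + K * √x) / (8 * √x * (1 + K * √x) ^ 3) * (y - x) ^ 2 := by
  have h := quotient_expansion hK (sqrt_nonneg x) (sqrt_nonneg y)
  rw [sq_sqrt hx.le, sq_sqrt hy] at h
  have hr : 0 < √x := sqrt_pos.2 hx
  have h2 := remainder_ge (a := K * √x) (b := K * √y) (by positivity) (by positivity)
    (by gcongr)
  have h3 := mul_le_mul_of_nonneg_left h2 (sq_nonneg (√y - √x))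
  have h4 : K * (3 + K * √x) / (8 * √x * (1 + K * √x) ^ 3) * (y - x) ^ 2
      = (√y - √x) ^ 2 * ((K * √x + K * √y) ^ 2 * (3 + K * √x)
        / (8 * (K * √x) * (1 + K * √x) ^ 3)) := by
    have e : y - x = (√y - √x) * (√y + √x) := by
      nlinarith [sq_sqrt hx.le, sq_sqrt hy]
    rw [e]
    field_simp
    ring
  linarith

lemma quotient_ge_taylor_two {K x y : ℝ} (hK : 0 < K) (hx : 0 < x) (hy : 0 ≤ y) :
    x / (1 + K * √x) + (2 + K * √x) / (2 * (1 + K * √x) ^ 2) * (y - x)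
      - (2 + 2 * (K * √x)) / x * (y - x) ^ 2 ≤ y / (1 + K * √y) := by
  have h := quotient_expansion hK (sqrt_nonneg x) (sqrt_nonneg y)
  rw [sq_sqrt hx.le, sq_sqrt hy] at h
  have hr : 0 < √x := sqrt_pos.2 hx
  have hs : 0 ≤ √y := sqrt_nonneg y
  have hrem : (K * √x + 2 * (K * √y) + K * √x * (K * √y))
        / (2 * (1 + K * √x) ^ 2 * (1 + K * √y)) ≤ 2 + 2 * (K * √x) := by
    rw [div_le_iff₀ (by positivity)]
    have ha : 0 ≤ K * √x := by positivity
    have hb : 0 ≤ K * √y := by positivity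
    generalize K * √x = a at *
    generalize K * √y = b at *
    have : 0 ≤ a ^ 2 * (1 + b) := by positivity
    have : 0 ≤ a ^ 3 * (1 + b) := by positivity
    nlinarith [mul_nonneg ha hb]
  have hsq : (√y - √x) ^ 2 ≤ (y - x) ^ 2 / x := by
    rw [le_div_iff₀ hx]
    have e : y - x = (√y - √x) * (√y + √x) := by
      nlinarith [sq_sqrt hx.le, sq_sqrt hy]
    rw [e, mul_pow]
    apply mul_le_mul_of_nonneg_left _ (sq_nonneg _)
    nlinarith [sq_sqrt hx.le, mul_nonneg hs hr.le]
  have := mul_le_mul hsq hrem (by positivity) (by positivity)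
  have e2 : (2 + 2 * (K * √x)) / x * (y - x) ^ 2
      = (y - x) ^ 2 / x * (2 + 2 * (K * √x)) := by ring
  linarith

lemma hasDerivAt_quotient {K x : ℝ} (hK : 0 < K) (hx : 0 < x) :
    HasDerivAt (fun y => y / (1 + K * √y)) ((2 + K * √x) / (2 * (1 + K * √x) ^ 2)) x := by
  have hr : 0 < √x := sqrt_pos.2 hx
  have h := (hasDerivAt_id x).div (((hasDerivAt_sqrt hx.ne').const_mul K).const_add 1)
    (show 1 + K * √x ≠ 0 by positivity)
  refine h.congr_deriv ?_
  have e : x = √x ^ 2 := (sq_sqrt hx.le).symm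
  simp only [id]
  generalize √x = r at *
  subst e
  field_simp
  ring

section

variable {K : ℝ}

lemma burgers_pos (hK : 4 * π * exp 1 ≤ K) : 0 < K :=
  lt_of_lt_of_le (by positivity) hK

lemma xiZero_pos (hK : 4 * π * exp 1 ≤ K) : 0 < xiZero K := by
  have := burgers_pos hK
  unfold xiZero
  positivity

lemma sqrt_xiZero (hK : 4 * π * exp 1 ≤ K) : √(xiZero K) = K / (4 * π) := by
  have := burgers_pos hK
  exact sqrt_sq (by positivity)

lemma two_le_log_xiZero (hK : 4 * π * exp 1 ≤ K) : 2 ≤ log (xiZero K) := by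
  have h : exp 1 ≤ K / (4 * π) := by
    rw [le_div_iff₀ (by positivity)]
    linarith
  have h1 : 1 ≤ log (K / (4 * π)) := by
    rwa [le_log_iff_exp_le (lt_of_lt_of_le (exp_pos 1) h)]
  rw [xiZero, log_pow]
  push_cast
  linarith

lemma burgersCK_pos (hK : 4 * π * exp 1 ≤ K) : 0 < burgersCK K := by
  have := burgers_pos hK
  have := xiZero_pos hK
  have : 0 < log (xiZero K) := by linarith [two_le_log_xiZero hK]
  unfold burgersCK
  positivity

lemma burgersCK_mul_log (hK : 4 * π * exp 1 ≤ K) :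
    burgersCK K * log (xiZero K) = xiZero K / (1 + K * √(xiZero K)) := by
  have := burgers_pos hK
  have : 0 < log (xiZero K) := by linarith [two_le_log_xiZero hK]
  unfold burgersCK
  field_simp

lemma two_pi_mul_burgersCK_le (hK : 4 * π * exp 1 ≤ K) : 2 * π * burgersCK K ≤ 1 := by
  have hKp := burgers_pos hK
  have hL := two_le_log_xiZero hK
  have hr := sqrt_xiZero hK
  have hrp : 0 < √(xiZero K) := sqrt_pos.2 (xiZero_pos hK)
  have e : xiZero K = √(xiZero K) ^ 2 := (sq_sqrt (xiZero_pos hK).le).symm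
  have e2 : √(xiZero K) * (4 * π) = K := by rw [hr]; field_simp
  have h := burgersCK_mul_log hK
  have hle : xiZero K / (1 + K * √(xiZero K)) ≤ 1 / (4 * π) := by
    rw [div_le_div_iff₀ (by positivity) (by positivity)]
    nlinarith
  rw [← h, le_div_iff₀ (by positivity)] at hle
  have : 0 ≤ burgersCK K * (log (xiZero K) - 2) * (4 * π) := by
    have := burgersCK_pos hK
    have : 0 ≤ log (xiZero K) - 2 := by linarith
    positivity
  have : 0 < π * burgersCK K := mul_pos pi_pos (burgersCK_pos hK)
  linarith

lemma burgersOmega_of_ge (hK : 4 * π * exp 1 ≤ K) {x : ℝ} (hx : xiZero K ≤ x) :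
    burgersOmega K x = burgersCK K * log x := by
  rcases hx.eq_or_lt with rfl | h
  · rw [burgersCK_mul_log hK, burgersOmega, if_pos le_rfl]
  · rw [burgersOmega, if_neg h.not_ge]

lemma burgersOmega_of_le {x : ℝ} (hx : x ≤ xiZero K) :
    burgersOmega K x = x / (1 + K * √x) := if_pos hx

lemma burgersOmega_zero (hK : 4 * π * exp 1 ≤ K) : burgersOmega K 0 = 0 := by
  rw [burgersOmega_of_le (xiZero_pos hK).le, zero_div]

lemma burgersSlope_of_le {x : ℝ} (hx : x ≤ xiZero K) :
    burgersSlope K x = (2 + K * √x) / (2 * (1 + K * √x) ^ 2) := if_pos hx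

lemma burgersSlope_of_gt {x : ℝ} (hx : xiZero K < x) :
    burgersSlope K x = burgersCK K / x := if_neg hx.not_ge

lemma burgersSlope_pos (hK : 4 * π * exp 1 ≤ K) {x : ℝ} (hx : 0 < x) : 0 < burgersSlope K x := by
  have := burgers_pos hK
  have := burgersCK_pos hK
  unfold burgersSlope
  split_ifs <;> positivity

lemma strictMonoOn_burgersOmega (hK : 4 * π * exp 1 ≤ K) :
    StrictMonoOn (burgersOmega K) (Ici 0) := by
  have hKp := burgers_pos hK
  have left : ∀ x y : ℝ, 0 ≤ x → x < y → x / (1 + K * √x) < y / (1 + K * √y) := by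
    intro x y hx hxy
    have hy : 0 < y := hx.trans_lt hxy
    have hs : √x < √y := sqrt_lt_sqrt hx hxy
    have hx0 := sqrt_nonneg x
    rw [div_lt_div_iff₀ (by positivity) (by positivity)]
    have : 0 ≤ K * (√x * √y * (√y - √x)) := by
      have : 0 ≤ √y - √x := by linarith
      positivity
    have e : x * √y = √x * √y * √x := by
      nth_rewrite 1 [← sq_sqrt hx]; ring
    have e' : y * √x = √x * √y * √y := by
      nth_rewrite 1 [← sq_sqrt hy.le]; ring
    nlinarith
  have right : ∀ x y : ℝ, xiZero K ≤ x → x < y →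
      burgersCK K * log x < burgersCK K * log y := fun x y hx hxy =>
    mul_lt_mul_of_pos_left (log_lt_log ((xiZero_pos hK).trans_le hx) hxy) (burgersCK_pos hK)
  intro x hx y hy hxy
  rcases le_total y (xiZero K) with h | h
  · rw [burgersOmega_of_le h, burgersOmega_of_le (hxy.le.trans h)]
    exact left x y hx hxy
  · rcases le_or_gt (xiZero K) x with h' | h'
    · rw [burgersOmega_of_ge hK h, burgersOmega_of_ge hK h']
      exact right x y h' hxy
    · calc burgersOmega K x < burgersOmega K (xiZero K) := by
            rw [burgersOmega_of_le h'.le, burgersOmega_of_le le_rfl]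
            exact left x _ hx h'
        _ ≤ burgersOmega K y := by
            rcases h.eq_or_lt with rfl | h''
            · rfl
            · rw [burgersOmega_of_ge hK h, burgersOmega_of_ge hK le_rfl]
              exact (right _ y le_rfl h'').le

lemma burgersOmega_pos (hK : 4 * π * exp 1 ≤ K) {x : ℝ} (hx : 0 < x) : 0 < burgersOmega K x := by
  rw [← burgersOmega_zero hK]
  exact strictMonoOn_burgersOmega hK (mem_Ici.2 le_rfl) hx.le hx

lemma log_le_tangent {x y : ℝ} (hx : 0 < x) (hy : 0 < y) : log y ≤ log x + (y - x) / x := by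
  have h := log_le_sub_one_of_pos (div_pos hy hx)
  rw [log_div hy.ne' hx.ne'] at h
  rw [sub_div, div_self hx.ne']
  linarith

/-- The one-sided derivatives at the break point are in the order required for concavity. -/
lemma burgersCK_div_xiZero_le (hK : 4 * π * exp 1 ≤ K) :
    burgersCK K / xiZero K ≤ burgersSlope K (xiZero K) := by
  have hKp := burgers_pos hK
  have hL := two_le_log_xiZero hK
  have hx := xiZero_pos hK
  have hr : 0 < √(xiZero K) := sqrt_pos.2 hx
  have hLp : 0 < log (xiZero K) := by linarith
  have e : burgersCK K / xiZero K = 1 / ((1 + K * √(xiZero K)) * log (xiZero K)) := by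
    unfold burgersCK
    field_simp
  rw [e, burgersSlope_of_le le_rfl, div_le_div_iff₀ (by positivity) (by positivity)]
  have hu : 0 < K * √(xiZero K) := by positivity
  generalize K * √(xiZero K) = u at *
  generalize log (xiZero K) = L at *
  have h1 : 2 * (1 + u) ≤ (2 + u) * L := by nlinarith
  nlinarith

lemma quotient_slope_antitone (hKp : 0 < K) {x y : ℝ} (hxy : x ≤ y) :
    (2 + K * √y) / (2 * (1 + K * √y) ^ 2) ≤ (2 + K * √x) / (2 * (1 + K * √x) ^ 2) := by
  have ha : 0 ≤ K * √x := by positivity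
  have hab : K * √x ≤ K * √y := by gcongr
  generalize K * √x = a at *
  generalize K * √y = b at *
  have hb : 0 ≤ b := ha.trans hab
  rw [div_le_div_iff₀ (by positivity) (by positivity)]
  have : 0 ≤ (b - a) * (3 + 2 * a + 2 * b + a * b) := by
    have : 0 ≤ b - a := by linarith
    positivity
  linear_combination 2 * this

/-- The graph of `burgersOmega K` lies below each of its tangent lines. -/
lemma burgersOmega_le_tangent (hK : 4 * π * exp 1 ≤ K) {x y : ℝ} (hx : 0 < x) (hy : 0 ≤ y) :
    burgersOmega K y ≤ burgersOmega K x + burgersSlope K x * (y - x) := by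
  have hKp := burgers_pos hK
  have h0 := xiZero_pos hK
  have hC := burgersCK_pos hK
  have right : ∀ z w : ℝ, xiZero K ≤ z → xiZero K ≤ w →
      burgersOmega K w ≤ burgersOmega K z + burgersCK K / z * (w - z) := by
    intro z w hz hw
    rw [burgersOmega_of_ge hK hz, burgersOmega_of_ge hK hw]
    have := mul_le_mul_of_nonneg_left
      (log_le_tangent (h0.trans_le hz) (h0.trans_le hw)) hC.le
    calc _ ≤ _ := this
      _ = _ := by ring
  have left : ∀ z w : ℝ, 0 ≤ z → 0 ≤ w → z ≤ xiZero K → w ≤ xiZero K →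
      burgersOmega K w ≤ burgersOmega K z + burgersSlope K z * (w - z) := by
    intro z w hz hw hz' hw'
    rw [burgersOmega_of_le hz', burgersOmega_of_le hw', burgersSlope_of_le hz']
    exact quotient_le_tangent hKp hz hw
  have hbreak := burgersCK_div_xiZero_le hK
  rcases le_or_gt x (xiZero K) with hx' | hx'
  · rcases le_total y (xiZero K) with hy' | hy'
    · exact left x y hx.le hy hx' hy'
    · have h1 := right _ y le_rfl hy'
      have h2 := left x _ hx.le h0.le hx' le_rfl
      have h3 : burgersSlope K (xiZero K) ≤ burgersSlope K x := by
        rw [burgersSlope_of_le le_rfl, burgersSlope_of_le hx']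
        exact quotient_slope_antitone hKp hx'
      have h4 := mul_le_mul_of_nonneg_right (hbreak.trans h3) (sub_nonneg.2 hy')
      linarith
  · rw [burgersSlope_of_gt hx']
    rcases le_total (xiZero K) y with hy' | hy'
    · exact right x y hx'.le hy'
    · have h1 := left _ y h0.le hy le_rfl hy'
      have h2 := right x _ hx'.le le_rfl
      have h3 : burgersCK K / x ≤ burgersCK K / xiZero K := by gcongr
      have h4 := mul_le_mul_of_nonneg_right (h3.trans hbreak) (sub_nonneg.2 hy')
      linarith

lemma concaveOn_burgersOmega (hK : 4 * π * exp 1 ≤ K) :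
    ConcaveOn ℝ (Ioi 0) (burgersOmega K) := by
  refine ⟨convex_Ioi 0, fun x hx y hy a b ha hb hab => ?_⟩
  have hz : 0 < a • x + b • y := (convex_Ioi (0 : ℝ)) hx hy ha hb hab
  have h1 := mul_le_mul_of_nonneg_left
    (burgersOmega_le_tangent hK hz (le_of_lt (mem_Ioi.1 hx))) ha
  have h2 := mul_le_mul_of_nonneg_left
    (burgersOmega_le_tangent hK hz (le_of_lt (mem_Ioi.1 hy))) hb
  simp only [smul_eq_mul] at *
  obtain rfl : b = 1 - a := by linarith
  linarith

lemma burgersOmega_star_shaped (hK : 4 * π * exp 1 ≤ K) {x y : ℝ} (hx : 0 < x) (hxy : x ≤ y) :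
    x * burgersOmega K y ≤ y * burgersOmega K x := by
  have h1 := burgersOmega_le_tangent hK hx (hx.le.trans hxy)
  have h2 := burgersOmega_le_tangent hK hx le_rfl
  rw [burgersOmega_zero hK] at h2
  have h3 := mul_le_mul_of_nonneg_left h1 hx.le
  have h4 := mul_le_mul_of_nonneg_right h2 (sub_nonneg.2 hxy)
  linarith

lemma burgersOmega_add_le (hK : 4 * π * exp 1 ≤ K) {x y : ℝ} (hx : 0 < x) (hy : 0 < y) :
    burgersOmega K (x + y) ≤ burgersOmega K x + burgersOmega K y := by
  have h1 := burgersOmega_star_shaped hK hx (le_add_of_nonneg_right hy.le)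
  have h2 := burgersOmega_star_shaped hK hy (le_add_of_nonneg_left hx.le)
  refine le_of_mul_le_mul_left ?_ (add_pos hx hy)
  linarith

lemma measurable_burgersOmega : Measurable (burgersOmega K) := by
  unfold burgersOmega
  refine Measurable.ite measurableSet_Iic ?_ ?_ <;> fun_prop

lemma deriv_burgersOmega (hK : 4 * π * exp 1 ≤ K) {x : ℝ} (hx : 0 < x) (hne : x ≠ xiZero K) :
    deriv (burgersOmega K) x = burgersSlope K x := by
  rcases hne.lt_or_gt with h | h
  · have he : burgersOmega K =ᶠ[nhds x] fun y => y / (1 + K * √y) := by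
      filter_upwards [Iio_mem_nhds h] with y hy using burgersOmega_of_le (le_of_lt hy)
    rw [he.deriv_eq, burgersSlope_of_le h.le]
    exact (hasDerivAt_quotient (burgers_pos hK) hx).deriv
  · have he : burgersOmega K =ᶠ[nhds x] fun y => burgersCK K * log y := by
      filter_upwards [Ioi_mem_nhds h] with y hy using burgersOmega_of_ge hK (le_of_lt hy)
    rw [he.deriv_eq, burgersSlope_of_gt h, div_eq_mul_inv]
    exact ((hasDerivAt_log hx.ne').const_mul _).deriv

lemma exists_burgersOmega_ge_taylor_two (hK : 4 * π * exp 1 ≤ K) {x : ℝ} (hx : 0 < x)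
    (hx' : x < xiZero K) : ∃ M, ∀ y, 0 ≤ y →
      burgersOmega K x + burgersSlope K x * (y - x) - M * (y - x) ^ 2 ≤ burgersOmega K y := by
  have hKp := burgers_pos hK
  set m := burgersSlope K x with hm
  have hmp : 0 < m := burgersSlope_pos hK hx
  have hd : 0 < xiZero K - x := sub_pos.2 hx'
  refine ⟨(2 + 2 * (K * √x)) / x + m / (xiZero K - x), fun y hy => ?_⟩
  have hA : 0 ≤ (2 + 2 * (K * √x)) / x * (y - x) ^ 2 := by positivity
  have hB : 0 ≤ m / (xiZero K - x) * (y - x) ^ 2 := by positivity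
  rcases le_or_gt y (xiZero K) with h | h
  · have := quotient_ge_taylor_two hKp hx hy
    rw [burgersOmega_of_le h, burgersOmega_of_le hx'.le, hm, burgersSlope_of_le hx'.le]
    rw [hm, burgersSlope_of_le hx'.le] at hB
    linarith
  · have h1 : burgersOmega K x < burgersOmega K y :=
      strictMonoOn_burgersOmega hK hx.le hy (hx'.trans h)
    have h2 : m * (y - x) ≤ m / (xiZero K - x) * (y - x) ^ 2 := by
      rw [div_mul_eq_mul_div, le_div_iff₀ hd]
      have : 0 ≤ m * (y - x) * (y - xiZero K) :=
        mul_nonneg (mul_nonneg hmp.le (by linarith)) (by linarith)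
      linarith
    linarith

lemma near_numerator_nonpos (hK : 4 * π * exp 1 ≤ K) {x η : ℝ} (hη : η ∈ Ioo 0 (x / 2)) :
    burgersOmega K (x + 2 * η) + burgersOmega K (x - 2 * η) - 2 * burgersOmega K x ≤ 0 := by
  obtain ⟨h0, h1⟩ := hη
  have hx : 0 < x := by linarith
  have := burgersOmega_le_tangent hK hx (y := x + 2 * η) (by linarith)
  have := burgersOmega_le_tangent hK hx (y := x - 2 * η) (by linarith)
  linarith

lemma far_numerator_le (hK : 4 * π * exp 1 ≤ K) {x η : ℝ} (hx : 0 < x) (hη : x / 2 < η) :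
    burgersOmega K (x + 2 * η) - burgersOmega K (2 * η - x) - 2 * burgersOmega K x
      ≤ burgersOmega K (2 * x) - 2 * burgersOmega K x := by
  have h := burgersOmega_add_le hK (x := 2 * η - x) (y := 2 * x) (by linarith) (by linarith)
  rw [show 2 * η - x + 2 * x = x + 2 * η by ring] at h
  linarith

lemma burgersOmega_two_mul_le (hK : 4 * π * exp 1 ≤ K) {x : ℝ} (hx : 0 < x) :
    burgersOmega K (2 * x) ≤ 2 * burgersOmega K x := by
  have := burgersOmega_add_le hK hx hx
  rw [← two_mul] at this
  linarith

lemma near_integral_nonpos (hK : 4 * π * exp 1 ≤ K) (x : ℝ) :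
    ∫ η in Ioo 0 (x / 2), (burgersOmega K (x + 2 * η) + burgersOmega K (x - 2 * η)
      - 2 * burgersOmega K x) / η ^ (2 : ℕ) ≤ 0 :=
  setIntegral_nonpos measurableSet_Ioo fun _ hη =>
    div_nonpos_of_nonpos_of_nonneg (near_numerator_nonpos hK hη) (sq_nonneg _)

lemma far_integral_nonpos (hK : 4 * π * exp 1 ≤ K) {x : ℝ} (hx : 0 < x) :
    ∫ η in Ioi (x / 2), (burgersOmega K (x + 2 * η) - burgersOmega K (2 * η - x)
      - 2 * burgersOmega K x) / η ^ (2 : ℕ) ≤ 0 := by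
  refine setIntegral_nonpos measurableSet_Ioi fun η hη =>
    div_nonpos_of_nonpos_of_nonneg ?_ (sq_nonneg _)
  linarith [far_numerator_le hK hx hη, burgersOmega_two_mul_le hK hx]

/-- Below the break point, the local part of the dissipation is at most `ξ ω''(ξ)`. -/
lemma near_integral_le (hK : 4 * π * exp 1 ≤ K) {x : ℝ} (hx : 0 < x) (hx' : x < xiZero K) :
    ∫ η in Ioo 0 (x / 2), (burgersOmega K (x + 2 * η) + burgersOmega K (x - 2 * η)
      - 2 * burgersOmega K x) / η ^ (2 : ℕ)
      ≤ -(K * (3 + K * √x) / (4 * √x * (1 + K * √x) ^ 3) * x) := by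
  have hKp := burgers_pos hK
  have hr : 0 < √x := sqrt_pos.2 hx
  obtain ⟨M, hM⟩ := exists_burgersOmega_ge_taylor_two hK hx hx'
  set c := K * (3 + K * √x) / (8 * √x * (1 + K * √x) ^ 3) with hc
  have hint : IntegrableOn (fun η => (burgersOmega K (x + 2 * η) + burgersOmega K (x - 2 * η)
      - 2 * burgersOmega K x) / η ^ (2 : ℕ)) (Ioo 0 (x / 2)) := by
    refine Measure.integrableOn_of_bounded (M := 8 * M) (by simp) ?_ ?_
    · have := measurable_burgersOmega (K := K)
      exact Measurable.aestronglyMeasurable (by fun_prop)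
    · refine (ae_restrict_iff' measurableSet_Ioo).2 (ae_of_all _ fun η hη => ?_)
      have hn := near_numerator_nonpos hK hη
      have hη2 : 0 < η ^ 2 := pow_pos hη.1 2
      rw [norm_eq_abs, abs_of_nonpos (div_nonpos_of_nonpos_of_nonneg hn (sq_nonneg _)),
        ← neg_div, div_le_iff₀ hη2]
      have h1 := hM (x + 2 * η) (by linarith [hη.1])
      have h2 := hM (x - 2 * η) (by linarith [hη.2])
      linarith
  have hle : ∀ η ∈ Ioo 0 (x / 2), (burgersOmega K (x + 2 * η) + burgersOmega K (x - 2 * η)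
      - 2 * burgersOmega K x) / η ^ (2 : ℕ) ≤ -(4 * c) := by
    intro η hη
    rw [div_le_iff₀ (pow_pos hη.1 2)]
    have h1 := burgersOmega_le_tangent hK hx (y := x + 2 * η) (by linarith [hη.1])
    have h2 := quotient_le_taylor_two hKp hx (y := x - 2 * η) (by linarith [hη.2])
      (by linarith [hη.1])
    rw [← burgersOmega_of_le hx'.le, ← burgersOmega_of_le (by linarith [hη.1]),
      ← burgersSlope_of_le hx'.le] at h2
    linarith
  have h := setIntegral_mono_on hint (integrableOn_const (by simp)) measurableSet_Ioo hle
  refine h.trans_eq ?_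
  rw [setIntegral_const, volume_real_Ioo_of_le (by linarith), smul_eq_mul, hc]
  field_simp
  ring

/-- Above the break point, the nonlocal part of the dissipation is at most `-ω(ξ)/ξ`. -/
lemma far_integral_le (hK : 4 * π * exp 1 ≤ K) {x : ℝ} (hx : xiZero K < x) :
    ∫ η in Ioi (x / 2), (burgersOmega K (x + 2 * η) - burgersOmega K (2 * η - x)
      - 2 * burgersOmega K x) / η ^ (2 : ℕ) ≤ -(burgersOmega K x / x) := by
  have hx0 : 0 < x := (xiZero_pos hK).trans hx
  have hh : 0 < x / 2 := by positivity
  have hC := burgersCK_pos hK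
  have hpow : ∀ η ∈ Ioi (x / 2), η ^ (-2 : ℝ) = (η ^ (2 : ℕ))⁻¹ := by
    intro η hη
    have hη0 : 0 < η := hh.trans hη
    rw [rpow_neg hη0.le, ← rpow_natCast]
    norm_num
  have hi : IntegrableOn (fun η : ℝ => (η ^ (2 : ℕ))⁻¹) (Ioi (x / 2)) :=
    (integrableOn_Ioi_rpow_of_lt (by norm_num : (-2 : ℝ) < -1) hh).congr_fun hpow measurableSet_Ioi
  have hval : ∫ η in Ioi (x / 2), (η ^ (2 : ℕ))⁻¹ = 2 / x := by
    rw [← setIntegral_congr_fun measurableSet_Ioi hpow,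
      integral_Ioi_rpow_of_lt (by norm_num) hh]
    norm_num [rpow_neg_one]
  have htwo : burgersOmega K (2 * x) ≤ 3 / 2 * burgersOmega K x := by
    rw [burgersOmega_of_ge hK hx.le, burgersOmega_of_ge hK (by linarith),
      log_mul two_ne_zero hx0.ne']
    have h1 : 2 ≤ log x :=
      (two_le_log_xiZero hK).trans (log_le_log (xiZero_pos hK) hx.le)
    have h2 := log_two_lt_d9
    nlinarith
  have hint : IntegrableOn (fun η => (burgersOmega K (x + 2 * η) - burgersOmega K (2 * η - x)
      - 2 * burgersOmega K x) / η ^ (2 : ℕ)) (Ioi (x / 2)) := by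
    refine Integrable.mono' (hi.const_mul (2 * burgersOmega K x)) ?_ ?_
    · have := measurable_burgersOmega (K := K)
      exact Measurable.aestronglyMeasurable (by fun_prop)
    · refine (ae_restrict_iff' measurableSet_Ioi).2 (ae_of_all _ fun η hη => ?_)
      rw [mem_Ioi] at hη
      have hη0 : 0 < η := hh.trans hη
      have h1 := far_numerator_le hK hx0 hη
      have h2 := burgersOmega_two_mul_le hK hx0
      have h3 : burgersOmega K (2 * η - x) ≤ burgersOmega K (x + 2 * η) :=
        (strictMonoOn_burgersOmega hK).monotoneOn (mem_Ici.2 (by linarith))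
          (mem_Ici.2 (by linarith)) (by linarith)
      rw [norm_eq_abs, abs_div, abs_of_pos (pow_pos hη0 2), div_eq_mul_inv]
      refine mul_le_mul_of_nonneg_right ?_ (by positivity)
      rw [abs_of_nonpos (by linarith)]
      linarith
  have hle : ∀ η ∈ Ioi (x / 2), (burgersOmega K (x + 2 * η) - burgersOmega K (2 * η - x)
      - 2 * burgersOmega K x) / η ^ (2 : ℕ) ≤ -(burgersOmega K x / 2) * (η ^ (2 : ℕ))⁻¹ := by
    intro η hη
    rw [div_eq_mul_inv]
    refine mul_le_mul_of_nonneg_right ?_ (by positivity)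
    linarith [far_numerator_le hK hx0 hη]
  have h := setIntegral_mono_on hint (hi.const_mul _) measurableSet_Ioi hle
  refine h.trans_eq ?_
  rw [integral_const_mul, hval]
  field_simp

end

/-- **The Burgers modulus of continuity satisfies the key differential inequality
(eq. (burmodconest)).** For all sufficiently large `K`, `ω_K` is increasing and concave on
`(0,∞)`, and `2 ω_K ω_K' + D_{1/2,ω_K} ≤ 0` away from the break point, where `D_{1/2,ω_K}`
is the critical dissipation expression with constant `1/π`. -/
theorem burgers_modulus_key_inequality :
    ∃ K₀ > (0:ℝ), ∀ K ≥ K₀,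
      StrictMonoOn (burgersOmega K) (Ioi 0) ∧
      ConcaveOn ℝ (Ioi 0) (burgersOmega K) ∧
      ∀ ξ : ℝ, 0 < ξ → ξ ≠ xiZero K →
        2 * burgersOmega K ξ * deriv (burgersOmega K) ξ +
          (1 / Real.pi) *
            ((∫ η in Ioo 0 (ξ/2),
                (burgersOmega K (ξ + 2*η) + burgersOmega K (ξ - 2*η)
                  - 2 * burgersOmega K ξ) / η ^ (2:ℕ)) +
             (∫ η in Ioi (ξ/2),
                (burgersOmega K (ξ + 2*η) - burgersOmega K (2*η - ξ)
                  - 2 * burgersOmega K ξ) / η ^ (2:ℕ))) ≤ 0 := by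
  refine ⟨4 * π * exp 1, by positivity, fun K hK => ⟨?_, concaveOn_burgersOmega hK, ?_⟩⟩
  · exact (strictMonoOn_burgersOmega hK).mono Ioi_subset_Ici_self
  intro x hx hne
  rw [deriv_burgersOmega hK hx hne]
  have hKp := burgers_pos hK
  rcases hne.lt_or_gt with h | h
  · have h1 := near_integral_le hK hx h
    have h2 := far_integral_nonpos hK hx
    have h3 := mul_le_mul_of_nonneg_left (add_le_add h1 h2) (one_div_pos.2 pi_pos).le
    refine (add_le_add_right h3 _).trans ?_
    rw [burgersOmega_of_le h.le, burgersSlope_of_le h.le]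
    have hr : 0 < √x := sqrt_pos.2 hx
    have hr' : √x * (4 * π) ≤ K := by
      have := sqrt_le_sqrt h.le
      rwa [sqrt_xiZero hK, le_div_iff₀ (by positivity)] at this
    have e : 2 * (x / (1 + K * √x)) * ((2 + K * √x) / (2 * (1 + K * √x) ^ 2))
        + 1 / π * (-(K * (3 + K * √x) / (4 * √x * (1 + K * √x) ^ 3) * x) + 0)
        = x / (4 * π * √x * (1 + K * √x) ^ 3)
          * (√x * (4 * π) * (2 + K * √x) - K * (3 + K * √x)) := by
      field_simp
      ring
    rw [e]
    refine mul_nonpos_of_nonneg_of_nonpos (by positivity) ?_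
    have := mul_le_mul_of_nonneg_right hr' (show 0 ≤ 2 + K * √x by positivity)
    linarith
  · have h1 := near_integral_nonpos hK x
    have h2 := far_integral_le hK h
    have h3 := mul_le_mul_of_nonneg_left (add_le_add h1 h2) (one_div_pos.2 pi_pos).le
    refine (add_le_add_right h3 _).trans ?_
    rw [burgersSlope_of_gt h]
    have hω := burgersOmega_pos hK hx
    have e : 2 * burgersOmega K x * (burgersCK K / x) + 1 / π * (0 + -(burgersOmega K x / x))
        = burgersOmega K x / (π * x) * (2 * π * burgersCK K - 1) := by
      field_simp
      ring
    rw [e]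
    refine mul_nonpos_of_nonneg_of_nonpos (by positivity) ?_
    linarith [two_pi_mul_burgersCK_le hK]

end
end

section
/- A priori gradient bound for the critical Córdoba–Córdoba–Fontelos equation (CCF part of the theorem on critical SQG/CCF, eq. (gradsqgest)): There exists an absolute constant C > 0 such that the following holds. Let θ : ℝ × [0,T] → ℝ be smooth, periodic in x, and satisfy ∂_t θ = (Hθ) ∂_x θ − L θ, where Hθ(x,t) = (1/π) lim_{R→∞} lim_{ε→0+} ∫_{ε<|x−y|<R} θ(y,t)/(x−y) dy is the Hilbert transform in x and L f(x) = P.V. ∫_ℝ (f(x) − f(x+y))/|y|² dy. Then for all t ∈ [0,T], ‖∂_x θ(·,t)‖_{L^∞} ≤ ‖∂_x θ(·,0)‖_{L^∞} · exp( exp( C ‖θ(·,0)‖_{L^∞} ) ). -/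
open Set MeasureTheory Filter Topology

/-- `HilbertPVAt f x v` says that the iterated principal value
`lim_{R→∞} lim_{ε→0+} ∫_{ε<|x−y|<R} f(y)/(x−y) dy` exists and equals `v`
(so that the Hilbert transform of `f` at `x` is `v/π`). -/
def HilbertPVAt (f : ℝ → ℝ) (x v : ℝ) : Prop :=
  ∃ g : ℝ → ℝ,
    (∀ R, 0 < R → Tendsto (fun ε => ∫ y in {y : ℝ | ε < |x - y| ∧ |x - y| < R}, f y / (x - y))
      (nhdsWithin 0 (Ioi 0)) (nhds (g R))) ∧
    Tendsto g atTop (nhds v)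

/-- The unscaled modulus of continuity `log (1 + log (1 + z)) + (√z / (1 + √z))²`. -/
noncomputable def modBase (z : ℝ) : ℝ :=
  Real.log (1 + Real.log (1 + z)) + (√z / (1 + √z)) ^ 2

/-- The derivative of `modBase` on the positive half-line. -/
noncomputable def modBaseDeriv (z : ℝ) : ℝ :=
  1 / ((1 + z) * (1 + Real.log (1 + z))) + 1 / (1 + √z) ^ 3

lemma log_one_add_nonneg {z : ℝ} (hz : 0 ≤ z) : 0 ≤ Real.log (1 + z) :=
  Real.log_nonneg (by linarith)

lemma log_one_add_le {z : ℝ} (hz : 0 ≤ z) : Real.log (1 + z) ≤ z := by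
  have := Real.log_le_sub_one_of_pos (show 0 < 1 + z by linarith)
  linarith

lemma div_one_add_le_log_one_add {z : ℝ} (hz : 0 ≤ z) : z / (1 + z) ≤ Real.log (1 + z) := by
  have := Real.one_sub_inv_le_log_of_pos (show 0 < 1 + z by linarith)
  have h2 : z / (1 + z) = 1 - (1 + z)⁻¹ := by field_simp; ring
  linarith

lemma log_one_add_le_two_sqrt {z : ℝ} (hz : 0 ≤ z) : Real.log (1 + z) ≤ 2 * √z := by
  have hs := Real.sqrt_nonneg z
  have h1 : 1 + z ≤ (1 + √z) ^ 2 := by nlinarith [Real.sq_sqrt hz]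
  have h2 : Real.log (1 + z) ≤ Real.log ((1 + √z) ^ 2) := Real.log_le_log (by linarith) h1
  rw [Real.log_pow] at h2
  have := log_one_add_le hs
  push_cast at h2
  linarith

lemma log_one_add_two_mul_le {z : ℝ} (hz : 0 ≤ z) :
    Real.log (1 + 2 * z) ≤ 2 * Real.log (1 + z) := by
  have h2 : Real.log (1 + 2 * z) ≤ Real.log ((1 + z) ^ 2) :=
    Real.log_le_log (by linarith) (by nlinarith)
  rw [Real.log_pow] at h2
  exact_mod_cast h2

lemma hasDerivAt_loglog {z : ℝ} (hz : 0 ≤ z) :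
    HasDerivAt (fun z => Real.log (1 + Real.log (1 + z)))
      (1 / ((1 + z) * (1 + Real.log (1 + z)))) z := by
  have hL := log_one_add_nonneg hz
  have h1 : HasDerivAt (fun z : ℝ => 1 + z) 1 z := (hasDerivAt_id z).const_add 1
  have h2 := ((h1.log (by linarith)).const_add 1).log (by linarith)
  convert h2 using 1
  field_simp

lemma hasDerivAt_modBase {z : ℝ} (hz : 0 < z) : HasDerivAt modBase (modBaseDeriv z) z := by
  have hs : 0 < √z := Real.sqrt_pos.2 hz
  have h1 := (hasDerivAt_id z).sqrt hz.ne'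
  have h2 := ((h1.div (h1.const_add 1) (by simp only [id]; positivity)).pow 2)
  have h3 : HasDerivAt modBase _ z := (hasDerivAt_loglog hz.le).add h2
  refine h3.congr_deriv ?_
  simp only [modBaseDeriv, id, Pi.div_apply]
  norm_num
  field_simp
  ring

lemma modBase_zero : modBase 0 = 0 := by simp [modBase]

lemma loglog_nonneg {z : ℝ} (hz : 0 ≤ z) : 0 ≤ Real.log (1 + Real.log (1 + z)) :=
  log_one_add_nonneg (log_one_add_nonneg hz)

lemma modBase_nonneg {z : ℝ} (hz : 0 ≤ z) : 0 ≤ modBase z :=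
  add_nonneg (loglog_nonneg hz) (sq_nonneg _)

lemma strictMonoOn_modBase : StrictMonoOn modBase (Ici 0) := by
  intro a ha b hb hab
  have ha' : 0 ≤ a := ha
  have hL := log_one_add_nonneg ha'
  have h1 : Real.log (1 + a) < Real.log (1 + b) := Real.log_lt_log (by linarith) (by linarith)
  have h2 : Real.log (1 + Real.log (1 + a)) < Real.log (1 + Real.log (1 + b)) :=
    Real.log_lt_log (by linarith) (by linarith)
  have hs := Real.sqrt_nonneg a
  have hst : √a ≤ √b := Real.sqrt_le_sqrt hab.le
  have h3 : √a / (1 + √a) ≤ √b / (1 + √b) := by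
    rw [div_le_div_iff₀ (by linarith) (by linarith)]; nlinarith
  have h4 : (√a / (1 + √a)) ^ 2 ≤ (√b / (1 + √b)) ^ 2 := by gcongr
  simp only [modBase]
  linarith

lemma modBase_le_two_mul {z : ℝ} (hz : 0 ≤ z) : modBase z ≤ 2 * z := by
  have h1 := log_one_add_le (log_one_add_nonneg hz)
  have h2 := log_one_add_le hz
  have hs := Real.sqrt_nonneg z
  have h3 : √z / (1 + √z) ≤ √z := div_le_self hs (by linarith)
  have h4 : (√z / (1 + √z)) ^ 2 ≤ √z ^ 2 := by gcongr
  rw [Real.sq_sqrt hz] at h4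
  simp only [modBase]; linarith

lemma modBase_le_three_sqrt {z : ℝ} (hz : 0 ≤ z) : modBase z ≤ 3 * √z := by
  have h1 := log_one_add_le (log_one_add_nonneg hz)
  have h2 := log_one_add_le_two_sqrt hz
  have hs := Real.sqrt_nonneg z
  have h3 : √z / (1 + √z) ≤ √z := div_le_self hs (by linarith)
  have h4 : √z / (1 + √z) ≤ 1 := by rw [div_le_one (by linarith)]; linarith
  have h5 : 0 ≤ √z / (1 + √z) := by positivity
  simp only [modBase]; nlinarith

lemma modBaseDeriv_nonneg {z : ℝ} (hz : 0 ≤ z) : 0 ≤ modBaseDeriv z := by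
  have hL := log_one_add_nonneg hz
  unfold modBaseDeriv; positivity

lemma modBaseDeriv_antitoneOn : AntitoneOn modBaseDeriv (Ici 0) := by
  intro a ha b hb hab
  have ha' : 0 ≤ a := ha
  have hL := log_one_add_nonneg ha'
  have hL2 : Real.log (1 + a) ≤ Real.log (1 + b) := Real.log_le_log (by linarith) (by linarith)
  have hst : √a ≤ √b := Real.sqrt_le_sqrt hab
  have hb' : 0 ≤ b := hb
  unfold modBaseDeriv
  gcongr

lemma modBaseDeriv_le_two {z : ℝ} (hz : 0 ≤ z) : modBaseDeriv z ≤ 2 := by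
  have := modBaseDeriv_antitoneOn (mem_Ici.2 le_rfl) (mem_Ici.2 hz) hz
  norm_num [modBaseDeriv] at this ⊢
  linarith

lemma mul_modBaseDeriv_le {z : ℝ} (hz : 0 ≤ z) :
    z * modBaseDeriv z ≤ 3 / (1 + Real.log (1 + z)) := by
  have hL := log_one_add_nonneg hz
  have hL2 := log_one_add_le_two_sqrt hz
  have hs := Real.sqrt_nonneg z
  have h1 : z * (1 / ((1 + z) * (1 + Real.log (1 + z)))) ≤ 1 / (1 + Real.log (1 + z)) := by
    rw [mul_one_div, div_le_div_iff₀ (by positivity) (by positivity)]; nlinarith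
  have h2 : z * (1 / (1 + √z) ^ 3) ≤ 2 / (1 + Real.log (1 + z)) := by
    rw [mul_one_div, div_le_div_iff₀ (by positivity) (by positivity)]
    have : z = √z ^ 2 := (Real.sq_sqrt hz).symm
    calc z * (1 + Real.log (1 + z)) ≤ √z ^ 2 * (2 * (1 + √z)) := by
          rw [← this]; gcongr; linarith
      _ ≤ 2 * (1 + √z) ^ 3 := by nlinarith [pow_nonneg hs 3, pow_nonneg hs 2]
  have h3 : (3 : ℝ) / (1 + Real.log (1 + z)) = 1 / (1 + Real.log (1 + z)) +
    2 / (1 + Real.log (1 + z)) := by ring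
  rw [h3, modBaseDeriv, mul_add]
  linarith

lemma mul_modBaseDeriv_le_two {z : ℝ} (hz : 0 ≤ z) : z * modBaseDeriv z ≤ 2 := by
  have hL := log_one_add_nonneg hz
  have hs := Real.sqrt_nonneg z
  have h1 : z * (1 / ((1 + z) * (1 + Real.log (1 + z)))) ≤ 1 := by
    rw [mul_one_div, div_le_one (by positivity)]; nlinarith
  have h2 : z * (1 / (1 + √z) ^ 3) ≤ 1 := by
    rw [mul_one_div, div_le_one (by positivity)]
    nlinarith [Real.sq_sqrt hz, pow_nonneg hs 3, pow_nonneg hs 2]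
  rw [modBaseDeriv, mul_add]
  linarith

lemma mul_modBaseDeriv_eq {z : ℝ} (hz : 0 ≤ z) :
    (√z / (1 + √z)) ^ 2 - z * (1 / (1 + √z) ^ 3) = √z ^ 3 / (1 + √z) ^ 3 := by
  have hs := Real.sqrt_nonneg z
  have : z = √z ^ 2 := (Real.sq_sqrt hz).symm
  generalize √z = s at *
  subst this
  field_simp
  ring

lemma modBase_sub_mul_deriv_ge {z : ℝ} (hz : 0 ≤ z) :
    √z ^ 3 / (1 + √z) ^ 3 ≤ modBase z - z * modBaseDeriv z := by
  have hL := log_one_add_nonneg hz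
  have h1 := div_one_add_le_log_one_add hL
  have h2 := div_one_add_le_log_one_add hz
  have h3 : z * (1 / ((1 + z) * (1 + Real.log (1 + z)))) ≤
      Real.log (1 + z) / (1 + Real.log (1 + z)) := by
    have : z * (1 / ((1 + z) * (1 + Real.log (1 + z)))) =
      (z / (1 + z)) / (1 + Real.log (1 + z)) := by field_simp
    rw [this]; gcongr
  have h4 := mul_modBaseDeriv_eq hz
  rw [modBase, modBaseDeriv, mul_add]
  linarith

lemma modBase_sub_mul_deriv_pos {z : ℝ} (hz : 0 < z) :
    0 < modBase z - z * modBaseDeriv z := by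
  have hs := Real.sqrt_pos.2 hz
  exact lt_of_lt_of_le (by positivity) (modBase_sub_mul_deriv_ge hz.le)

lemma modBase_sub_mul_deriv_ge_loglog {z : ℝ} (hz : 0 ≤ z) :
    √z ^ 3 / (1 + √z) ^ 3 + Real.log (1 + Real.log (1 + z)) - 1 ≤
      modBase z - z * modBaseDeriv z := by
  have hL := log_one_add_nonneg hz
  have h3 : z * (1 / ((1 + z) * (1 + Real.log (1 + z)))) ≤ 1 := by
    rw [mul_one_div, div_le_one (by positivity)]; nlinarith
  have h4 := mul_modBaseDeriv_eq hz
  rw [modBase, modBaseDeriv, mul_add]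
  linarith

lemma modBase_two_mul_le {z : ℝ} (hz : 0 < z) :
    modBase (2 * z) ≤ modBase z + z * modBaseDeriv z := by
  obtain ⟨c, hc, hc'⟩ := exists_hasDerivAt_eq_slope modBase modBaseDeriv
    (show z < 2 * z by linarith)
    (fun w hw => (hasDerivAt_modBase (hz.trans_le hw.1)).continuousAt.continuousWithinAt)
    (fun w hw => hasDerivAt_modBase (hz.trans hw.1))
  have h1 := modBaseDeriv_antitoneOn (mem_Ici.2 hz.le) (mem_Ici.2 (hz.trans hc.1).le) hc.1.le
  rw [hc', div_le_iff₀ (by linarith)] at h1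
  linarith

/-- The function `(ω + 2) log (1 + z)`, whose derivative dominates `ω z / z`. -/
noncomputable def modBaseNear (z : ℝ) : ℝ := (modBase z + 2) * Real.log (1 + z)

lemma modBaseNear_nonneg {z : ℝ} (hz : 0 ≤ z) : 0 ≤ modBaseNear z :=
  mul_nonneg (by linarith [modBase_nonneg hz]) (log_one_add_nonneg hz)

lemma hasDerivAt_modBaseNear {z : ℝ} (hz : 0 < z) :
    HasDerivAt modBaseNear (modBaseDeriv z * Real.log (1 + z) + (modBase z + 2) * (1 / (1 + z)))
      z := by
  have h1 : HasDerivAt (fun z : ℝ => 1 + z) 1 z := (hasDerivAt_id z).const_add 1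
  exact ((hasDerivAt_modBase hz).add_const 2).mul (h1.log (by linarith))

lemma modBase_div_le {z : ℝ} (hz : 0 < z) :
    modBase z / z ≤ modBaseDeriv z * Real.log (1 + z) + (modBase z + 2) * (1 / (1 + z)) := by
  have h1 := mul_nonneg (modBaseDeriv_nonneg hz.le) (log_one_add_nonneg hz.le)
  have h2 : modBase z / z ≤ (modBase z + 2) * (1 / (1 + z)) := by
    rw [mul_one_div, div_le_div_iff₀ hz (by linarith)]
    nlinarith [modBase_le_two_mul hz.le]
  linarith

lemma modBase_balance_small {z : ℝ} (hz : 0 < z) (hz1 : z ≤ 1) :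
    z * modBaseDeriv z * (2 * modBaseNear (2 * z) + 2 * modBase z + 2 * (6 * √z)) ≤
      640 * (modBase z - z * modBaseDeriv z) := by
  have hD := modBase_sub_mul_deriv_ge hz.le
  have hs : 0 < √z := Real.sqrt_pos.2 hz
  have hs1 : √z ≤ 1 := Real.sqrt_le_one.2 hz1
  have hzs : z = √z ^ 2 := (Real.sq_sqrt hz.le).symm
  have hzs' : z ≤ √z := by nlinarith
  have h1 : modBaseNear (2 * z) ≤ 6 * (2 * z) := by
    unfold modBaseNear
    have := modBase_le_two_mul (show 0 ≤ 2 * z by linarith)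
    have := log_one_add_le (show 0 ≤ 2 * z by linarith)
    have := log_one_add_nonneg (show 0 ≤ 2 * z by linarith)
    gcongr
    linarith
  have h2 := modBase_le_two_mul hz.le
  have h3 := modBaseDeriv_le_two hz.le
  have h4 := modBaseDeriv_nonneg hz.le
  have h5 : √z ^ 3 / 8 ≤ √z ^ 3 / (1 + √z) ^ 3 := by
    have : (1 + √z) ^ 3 ≤ (1 + 1) ^ 3 := by gcongr
    gcongr
    linarith
  calc z * modBaseDeriv z * (2 * modBaseNear (2 * z) + 2 * modBase z + 2 * (6 * √z))
      ≤ z * 2 * (40 * √z) := by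
        have := modBaseNear_nonneg (show 0 ≤ 2 * z by linarith)
        have := modBase_nonneg hz.le
        gcongr
        linarith
    _ = 80 * √z ^ 3 := by nlinarith
    _ ≤ _ := by linarith

lemma modBase_balance_large {z : ℝ} (hz1 : 1 ≤ z) :
    z * modBaseDeriv z * (2 * modBaseNear (2 * z) + 2 * modBase z + 2 * (modBase z + 2)) ≤
      640 * (modBase z - z * modBaseDeriv z) := by
  have hz : 0 < z := by linarith
  have hD := modBase_sub_mul_deriv_ge hz.le
  have hD2 := modBase_sub_mul_deriv_ge_loglog hz.le
  have hs1 : 1 ≤ √z := Real.one_le_sqrt.2 hz1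
  have hL := log_one_add_nonneg hz.le
  have h5 : 1 / 8 ≤ √z ^ 3 / (1 + √z) ^ 3 := by
    rw [← div_pow, show (1 / 8 : ℝ) = (1 / 2) ^ 3 by norm_num]
    have : 1 / 2 ≤ √z / (1 + √z) := by
      rw [div_le_div_iff₀ (by norm_num) (by linarith)]; linarith
    gcongr
  have h6 : (√z / (1 + √z)) ^ 2 ≤ 1 := by
    have : √z / (1 + √z) ≤ 1 := by rw [div_le_one (by linarith)]; linarith
    exact pow_le_one₀ (by positivity) this
  have hw : modBase z + 1 ≤ 25 * (modBase z - z * modBaseDeriv z) := by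
    have : modBase z ≤ Real.log (1 + Real.log (1 + z)) + 1 := by unfold modBase; linarith
    linarith
  have h0 := modBase_nonneg hz.le
  have h1 : modBaseNear (2 * z) ≤ (2 * modBase z + 2) * (2 * Real.log (1 + z)) := by
    unfold modBaseNear
    have := modBase_two_mul_le hz
    have := modBase_sub_mul_deriv_pos hz
    have := log_one_add_two_mul_le hz.le
    have := log_one_add_nonneg (show 0 ≤ 2 * z by linarith)
    gcongr
    linarith
  have h4 := modBaseDeriv_nonneg hz.le
  calc z * modBaseDeriv z * (2 * modBaseNear (2 * z) + 2 * modBase z + 2 * (modBase z + 2))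
      ≤ 3 / (1 + Real.log (1 + z)) * (8 * (modBase z + 1) * (1 + Real.log (1 + z))) := by
        have := mul_modBaseDeriv_le hz.le
        have h7 : 0 ≤ modBaseNear (2 * z) := modBaseNear_nonneg (by linarith)
        gcongr
        linarith
    _ = 24 * (modBase z + 1) := by field_simp; ring
    _ ≤ _ := by
      have := modBase_sub_mul_deriv_pos hz
      linarith

lemma le_modBase_double_exp {n : ℝ} (hn : 0 ≤ n) :
    n ≤ modBase (n / 2 * Real.exp (Real.exp (2 * n))) := by
  set Y := n / 2 * Real.exp (Real.exp (2 * n)) with hY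
  have hY0 : 0 ≤ Y := by positivity
  have key : Real.exp (Real.exp n - 1) - 1 ≤ Y := by
    set E := Real.exp n with hE
    have hE1 : n + 1 ≤ E := Real.add_one_le_exp n
    have hE2 : Real.exp (2 * n) = E ^ 2 := by rw [hE, ← Real.exp_nat_mul]; norm_num
    have e1 : ∀ u : ℝ, Real.exp u - 1 ≤ u * Real.exp u := by
      intro u
      have := Real.add_one_le_exp (-u)
      have h2 : Real.exp (-u) * Real.exp u = 1 := by rw [← Real.exp_add]; simp
      nlinarith [Real.exp_pos u]
    have h1 := e1 (E - 1)
    have h2 : E - 1 ≤ n * E := e1 n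
    have h3 : 2 * (E * Real.exp (E - 1)) ≤ Real.exp (Real.exp (2 * n)) := by
      have : (2 : ℝ) ≤ Real.exp 1 := by linarith [Real.add_one_le_exp 1]
      calc 2 * (E * Real.exp (E - 1)) ≤ Real.exp 1 * (E * Real.exp (E - 1)) := by gcongr
        _ = Real.exp (1 + (n + (E - 1))) := by rw [Real.exp_add, Real.exp_add]
        _ ≤ _ := by
          apply Real.exp_le_exp.2
          rw [hE2]
          nlinarith [sq_nonneg (E - 1)]
    calc Real.exp (E - 1) - 1 ≤ n * E * Real.exp (E - 1) := h1.trans (by gcongr)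
      _ = n / 2 * (2 * (E * Real.exp (E - 1))) := by ring
      _ ≤ Y := by rw [hY]; gcongr
  have h1 : Real.exp n - 1 ≤ Real.log (1 + Y) := by
    rw [Real.le_log_iff_exp_le (by linarith)]; linarith
  have h2 : n ≤ Real.log (1 + Real.log (1 + Y)) := by
    rw [Real.le_log_iff_exp_le (by linarith [Real.exp_pos n])]; linarith
  unfold modBase
  linarith [sq_nonneg (√Y / (1 + √Y))]

lemma setIntegral_annulus_eq {f : ℝ → ℝ} (hf : Continuous f) (x : ℝ) {ε R : ℝ} (hε : 0 < ε)
    (hR : ε < R) :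
    ∫ y in {y : ℝ | ε < |x - y| ∧ |x - y| < R}, f y / (x - y) =
      ∫ z in ε..R, (f (x - z) - f (x + z)) / z := by
  have hset : {y : ℝ | ε < |x - y| ∧ |x - y| < R} =
      Ioo (x - R) (x - ε) ∪ Ioo (x + ε) (x + R) := by
    ext y
    simp only [mem_ofPred_eq, mem_union, mem_Ioo, lt_abs, abs_lt]
    constructor
    · rintro ⟨h1 | h1, h2, h3⟩
      · left; constructor <;> linarith
      · right; constructor <;> linarith
    · rintro (⟨h1, h2⟩ | ⟨h1, h2⟩)
      · exact ⟨Or.inl (by linarith), by linarith, by linarith⟩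
      · exact ⟨Or.inr (by linarith), by linarith, by linarith⟩
  have hc1 : ContinuousOn (fun y => f y / (x - y)) (Icc (x - R) (x - ε)) := by
    refine hf.continuousOn.div (by fun_prop) fun y hy => ?_
    have := hy.2; intro h; linarith
  have hc2 : ContinuousOn (fun y => f y / (x - y)) (Icc (x + ε) (x + R)) := by
    refine hf.continuousOn.div (by fun_prop) fun y hy => ?_
    have := hy.1; intro h; linarith
  have hd : Disjoint (Ioo (x - R) (x - ε)) (Ioo (x + ε) (x + R)) := by
    rw [Set.disjoint_left]; rintro y ⟨_, h1⟩ ⟨h2, _⟩; linarith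
  have hcz1 : ContinuousOn (fun z => f (x - z) / z) (uIcc ε R) := by
    rw [uIcc_of_le hR.le]
    exact (hf.comp (by fun_prop)).continuousOn.div continuousOn_id
      fun z hz => (hε.trans_le hz.1).ne'
  have hcz2 : ContinuousOn (fun z => f (x + z) / z) (uIcc ε R) := by
    rw [uIcc_of_le hR.le]
    exact (hf.comp (by fun_prop)).continuousOn.div continuousOn_id
      fun z hz => (hε.trans_le hz.1).ne'
  rw [hset, setIntegral_union hd measurableSet_Ioo
    (hc1.integrableOn_Icc.mono_set Ioo_subset_Icc_self)
    (hc2.integrableOn_Icc.mono_set Ioo_subset_Icc_self),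
    ← integral_Ioc_eq_integral_Ioo, ← integral_Ioc_eq_integral_Ioo,
    ← intervalIntegral.integral_of_le (by linarith),
    ← intervalIntegral.integral_of_le (by linarith),
    ← intervalIntegral.integral_comp_sub_left (fun y => f y / (x - y)) x,
    ← intervalIntegral.integral_comp_add_left (fun y => f y / (x - y)) x]
  have h3 : ∀ z, f (x + z) / (x - (x + z)) = -(f (x + z) / z) := by
    intro z; rw [show x - (x + z) = -z by ring, div_neg]
  simp only [sub_sub_cancel, h3, intervalIntegral.integral_neg, sub_div]
  rw [intervalIntegral.integral_sub hcz1.intervalIntegrable hcz2.intervalIntegrable]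
  ring

lemma abs_near_integral_le {f ω : ℝ → ℝ} (hω : ContinuousOn ω (Ioi 0))
    (hmod : ∀ a b, |f a - f b| ≤ ω |a - b|) (x : ℝ) {ε ξ : ℝ} (hε : 0 < ε) (hξ : ε ≤ ξ) :
    |∫ z in ε..ξ, (f (x - z) - f (x + z)) / z| ≤ ∫ z in ε..ξ, ω (2 * z) / z := by
  rw [← Real.norm_eq_abs]
  refine intervalIntegral.norm_integral_le_of_norm_le hξ (Eventually.of_forall fun z hz => ?_) ?_
  · have hz0 : 0 < z := hε.trans hz.1
    rw [Real.norm_eq_abs, abs_div, abs_of_pos hz0]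
    have := hmod (x - z) (x + z)
    rw [show x - z - (x + z) = -(2 * z) by ring, abs_neg,
      abs_of_pos (show 0 < 2 * z by linarith)] at this
    gcongr
  · refine ContinuousOn.intervalIntegrable ?_
    rw [uIcc_of_le hξ]
    refine ContinuousOn.div (hω.comp (by fun_prop) fun z hz => ?_) continuousOn_id
      fun z hz => (hε.trans_le hz.1).ne'
    exact mul_pos two_pos (hε.trans_le hz.1)

/-- The second symmetric difference of a primitive `F` of `f` varies at a rate controlled by the
modulus of continuity of `f`. -/
lemma abs_second_diff_sub_le {f F ω : ℝ → ℝ} (hF : ∀ s, HasDerivAt F (f s) s)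
    (hmod : ∀ a b, |f a - f b| ≤ ω |a - b|) (x y : ℝ) {z : ℝ} (hz : 0 < z) :
    |(F (x - z) + F (x + z) - 2 * F x) - (F (y - z) + F (y + z) - 2 * F y)| ≤
      2 * ω z * |x - y| := by
  have hd : ∀ s ∈ (univ : Set ℝ), HasDerivWithinAt (fun s => F (s - z) + F (s + z) - 2 * F s)
      (f (s - z) + f (s + z) - 2 * f s) univ s := by
    intro s _
    exact ((((hF (s - z)).comp_sub_const s z).add ((hF (s + z)).comp_add_const s z)).sub
      ((hF s).const_mul 2)).hasDerivWithinAt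
  refine convex_univ.norm_image_sub_le_of_norm_hasDerivWithin_le hd (fun s _ => ?_)
    (mem_univ y) (mem_univ x)
  have h1 := hmod (s - z) s
  have h2 := hmod (s + z) s
  rw [show s - z - s = -z by ring, abs_neg, abs_of_pos hz] at h1
  rw [show s + z - s = z by ring, abs_of_pos hz] at h2
  calc ‖f (s - z) + f (s + z) - 2 * f s‖ = |(f (s - z) - f s) + (f (s + z) - f s)| := by
        rw [Real.norm_eq_abs]; congr 1; ring
    _ ≤ |f (s - z) - f s| + |f (s + z) - f s| := abs_add_le _ _
    _ ≤ 2 * ω z := by linarith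

lemma far_integral_eq {f F : ℝ → ℝ} (hf : Continuous f) (hF : ∀ s, HasDerivAt F (f s) s) (x : ℝ)
    {ρ R : ℝ} (hρ : 0 < ρ) (hR : ρ ≤ R) :
    ∫ z in ρ..R, (f (x - z) - f (x + z)) / z =
      -((F (x - R) + F (x + R) - 2 * F x) / R) + (F (x - ρ) + F (x + ρ) - 2 * F x) / ρ -
      ∫ z in ρ..R, (F (x - z) + F (x + z) - 2 * F x) / z ^ 2 := by
  have hFc : Continuous F := continuous_iff_continuousAt.2 fun s => (hF s).continuousAt
  have hpos : ∀ z ∈ uIcc ρ R, 0 < z := by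
    intro z hz; rw [uIcc_of_le hR] at hz; exact hρ.trans_le hz.1
  have hd : ∀ z ∈ uIcc ρ R, HasDerivAt (fun z => -((F (x - z) + F (x + z) - 2 * F x) / z))
      ((f (x - z) - f (x + z)) / z + (F (x - z) + F (x + z) - 2 * F x) / z ^ 2) z := by
    intro z hz
    have hz0 := hpos z hz
    have h1 := ((((hF (x - z)).comp_const_sub x z).add ((hF (x + z)).comp_const_add x z)).sub_const
      (2 * F x)).div (hasDerivAt_id z) hz0.ne'
    refine h1.neg.congr_deriv ?_
    simp only [Pi.add_apply, id]
    field_simp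
    ring
  have hc1 : ContinuousOn (fun z => (f (x - z) - f (x + z)) / z) (uIcc ρ R) :=
    Continuous.continuousOn (by fun_prop) |>.div continuousOn_id fun z hz => (hpos z hz).ne'
  have hc2 : ContinuousOn (fun z => (F (x - z) + F (x + z) - 2 * F x) / z ^ 2) (uIcc ρ R) :=
    Continuous.continuousOn (by fun_prop) |>.div (by fun_prop)
      fun z hz => (pow_pos (hpos z hz) 2).ne'
  have h := intervalIntegral.integral_eq_sub_of_hasDerivAt hd
    (hc1.add hc2).intervalIntegrable
  rw [intervalIntegral.integral_add hc1.intervalIntegrable hc2.intervalIntegrable] at h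
  linarith

lemma abs_far_integral_sub_le {f ω : ℝ → ℝ} (hf : Continuous f) (hω : ContinuousOn ω (Ioi 0))
    (hmod : ∀ a b, |f a - f b| ≤ ω |a - b|) (x y : ℝ) {ρ R : ℝ} (hρ : 0 < ρ) (hR : ρ ≤ R) :
    |(∫ z in ρ..R, (f (x - z) - f (x + z)) / z) - ∫ z in ρ..R, (f (y - z) - f (y + z)) / z| ≤
      2 * |x - y| * (ω R / R + ω ρ / ρ + ∫ z in ρ..R, ω z / z ^ 2) := by
  obtain ⟨F, hF⟩ : ∃ F : ℝ → ℝ, ∀ s, HasDerivAt F (f s) s :=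
    ⟨fun s => ∫ t in (0 : ℝ)..s, f t, fun s => intervalIntegral.integral_hasDerivAt_right
      (hf.intervalIntegrable _ _) (hf.stronglyMeasurableAtFilter _ _) hf.continuousAt⟩
  have hFc : Continuous F := continuous_iff_continuousAt.2 fun s => (hF s).continuousAt
  have hpos : ∀ z ∈ uIcc ρ R, 0 < z := by
    intro z hz; rw [uIcc_of_le hR] at hz; exact hρ.trans_le hz.1
  set Φ : ℝ → ℝ → ℝ := fun s z => F (s - z) + F (s + z) - 2 * F s with hΦ
  have hΦc : ∀ s, IntervalIntegrable (fun z => Φ s z / z ^ 2) volume ρ R := fun s =>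
    (Continuous.continuousOn (by simp only [hΦ]; fun_prop) |>.div (by fun_prop)
      fun z hz => (pow_pos (hpos z hz) 2).ne').intervalIntegrable
  have hb : ∀ z, 0 < z → |Φ x z - Φ y z| ≤ 2 * ω z * |x - y| := fun z hz =>
    abs_second_diff_sub_le hF hmod x y hz
  have hbd : ∀ z, 0 < z → |Φ x z / z - Φ y z / z| ≤ 2 * |x - y| * (ω z / z) := by
    intro z hz
    rw [← sub_div, abs_div, abs_of_pos hz, ← mul_div_assoc]
    gcongr
    linarith [hb z hz]
  have hint : |(∫ z in ρ..R, Φ x z / z ^ 2) - ∫ z in ρ..R, Φ y z / z ^ 2| ≤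
      2 * |x - y| * ∫ z in ρ..R, ω z / z ^ 2 := by
    rw [← intervalIntegral.integral_sub (hΦc x) (hΦc y), ← intervalIntegral.integral_const_mul,
      ← Real.norm_eq_abs]
    refine intervalIntegral.norm_integral_le_of_norm_le hR
      (Eventually.of_forall fun z hz => ?_) ?_
    · have hz0 : 0 < z := hρ.trans hz.1
      rw [Real.norm_eq_abs, ← sub_div, abs_div, abs_of_pos (pow_pos hz0 2), ← mul_div_assoc]
      gcongr
      linarith [hb z hz0]
    · refine (ContinuousOn.intervalIntegrable ?_).const_mul _
      exact (hω.mono hpos).div (by fun_prop) fun z hz => (pow_pos (hpos z hz) 2).ne'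
  rw [far_integral_eq hf hF x hρ hR, far_integral_eq hf hF y hρ hR]
  have h1 := abs_le.1 (hbd ρ hρ)
  have h2 := abs_le.1 (hbd R (hρ.trans_le hR))
  have h3 := abs_le.1 hint
  simp only [hΦ] at h1 h2 h3
  rw [abs_le]
  constructor <;> nlinarith

lemma hilbert_sub_abs_le {f ω : ℝ → ℝ} (hf : Continuous f) (hω : ContinuousOn ω (Ioi 0))
    (hmod : ∀ a b, |f a - f b| ≤ ω |a - b|) {x y ξ : ℝ} (hξ : 0 < ξ) (hxy : |x - y| = ξ)
    {p q : ℝ} (hp : ∀ ε, 0 < ε → ε < ξ → ∫ z in ε..ξ, ω (2 * z) / z ≤ p)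
    (hq : ∀ R, ξ < R → ω R / R + ∫ z in ξ..R, ω z / z ^ 2 ≤ q) {u v : ℝ}
    (hu : HilbertPVAt f x u) (hv : HilbertPVAt f y v) :
    |u - v| ≤ 2 * p + 2 * ω ξ + 2 * (ξ * q) := by
  obtain ⟨g, hg, hgu⟩ := hu
  obtain ⟨k, hk, hkv⟩ := hv
  refine le_of_tendsto (hgu.sub hkv).abs ?_
  filter_upwards [eventually_gt_atTop ξ] with R hR
  have hR0 := hξ.trans hR
  refine le_of_tendsto ((hg R hR0).sub (hk R hR0)).abs ?_
  filter_upwards [Ioo_mem_nhdsGT hξ] with ε hε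
  obtain ⟨hε0, hεξ⟩ := hε
  rw [setIntegral_annulus_eq hf x hε0 (hεξ.trans hR), setIntegral_annulus_eq hf y hε0 (hεξ.trans hR)]
  have hii : ∀ (s a b : ℝ), 0 < a → a ≤ b →
      IntervalIntegrable (fun z => (f (s - z) - f (s + z)) / z) volume a b := by
    intro s a b ha hab
    refine ContinuousOn.intervalIntegrable ?_
    rw [uIcc_of_le hab]
    exact Continuous.continuousOn (by fun_prop) |>.div continuousOn_id
      fun z hz => (ha.trans_le hz.1).ne'
  rw [← intervalIntegral.integral_add_adjacent_intervals (hii x ε ξ hε0 hεξ.le)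
    (hii x ξ R hξ hR.le), ← intervalIntegral.integral_add_adjacent_intervals
    (hii y ε ξ hε0 hεξ.le) (hii y ξ R hξ hR.le)]
  have h1 := abs_le.1 ((abs_near_integral_le hω hmod x hε0 hεξ.le).trans (hp ε hε0 hεξ))
  have h2 := abs_le.1 ((abs_near_integral_le hω hmod y hε0 hεξ.le).trans (hp ε hε0 hεξ))
  have h3 := abs_far_integral_sub_le hf hω hmod x y hξ hR.le
  have h4 : 2 * |x - y| * (ω R / R + ω ξ / ξ + ∫ z in ξ..R, ω z / z ^ 2) ≤
      2 * ω ξ + 2 * (ξ * q) := by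
    rw [hxy]
    have h5 : 2 * ξ * (ω R / R + ω ξ / ξ + ∫ z in ξ..R, ω z / z ^ 2) =
      2 * ω ξ + 2 * (ξ * (ω R / R + ∫ z in ξ..R, ω z / z ^ 2)) := by field_simp; ring
    rw [h5]
    have := hq R hR
    gcongr
  have h6 := abs_le.1 (h3.trans h4)
  rw [abs_le]
  constructor <;> linarith [h1.1, h1.2, h2.1, h2.2, h6.1, h6.2]

lemma integrableOn_diff_div_sq {f : ℝ → ℝ} (hf : Continuous f) {M : ℝ} (hM : ∀ a, |f a| ≤ M)
    (x : ℝ) {ε : ℝ} (hε : 0 < ε) :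
    IntegrableOn (fun z => (f x - f (x + z)) / z ^ (2 : ℕ)) {z : ℝ | ε < |z|} := by
  have hms : MeasurableSet {z : ℝ | ε < |z|} := measurableSet_lt measurable_const
    continuous_abs.measurable
  refine Integrable.mono' (g := fun z => 2 * M * (1 + 1 / ε ^ 2) * (1 + z ^ 2)⁻¹)
    (integrable_inv_one_add_sq.const_mul _).integrableOn ?_ ?_
  · have : Measurable f := hf.measurable
    exact Measurable.aestronglyMeasurable (by fun_prop)
  · filter_upwards [ae_restrict_mem hms] with z hz
    have hz' : ε < |z| := hz
    have hz2 : ε ^ 2 ≤ z ^ 2 := by rw [← sq_abs z]; gcongr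
    have hzp : 0 < z ^ 2 := lt_of_lt_of_le (by positivity) hz2
    have h1 : |f x - f (x + z)| ≤ 2 * M := by
      have := abs_sub (f x) (f (x + z))
      linarith [hM x, hM (x + z)]
    have h0 : 0 ≤ 2 * M := (abs_nonneg _).trans h1
    rw [Real.norm_eq_abs, abs_div, abs_of_pos hzp, div_le_iff₀ hzp]
    have h2 : 1 ≤ (1 + 1 / ε ^ 2) * (1 + z ^ 2)⁻¹ * z ^ 2 := by
      rw [← div_eq_mul_inv, div_mul_eq_mul_div, one_le_div (by positivity)]
      have : 1 ≤ 1 / ε ^ 2 * z ^ 2 := by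
        rw [one_div_mul_eq_div, one_le_div (by positivity)]; exact hz2
      linarith
    calc |f x - f (x + z)| ≤ 2 * M * 1 := by linarith
      _ ≤ 2 * M * ((1 + 1 / ε ^ 2) * (1 + z ^ 2)⁻¹ * z ^ 2) := by gcongr
      _ = _ := by ring

/-- Dissipation at a pair of points where the modulus of continuity is attained. -/
lemma dissipation_sub_ge {f ω : ℝ → ℝ} (hf : Continuous f) {M : ℝ} (hM : ∀ a, |f a| ≤ M)
    (hmod : ∀ a b, |f a - f b| ≤ ω |a - b|) {x y ξ : ℝ} (hξ : 0 < ξ) (hxy : |x - y| = ξ)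
    (heq : f x - f y = ω ξ) {u v : ℝ}
    (hu : Tendsto (fun ε => ∫ z in {z : ℝ | ε < |z|}, (f x - f (x + z)) / z ^ (2 : ℕ))
      (nhdsWithin 0 (Ioi 0)) (nhds u))
    (hv : Tendsto (fun ε => ∫ z in {z : ℝ | ε < |z|}, (f y - f (y + z)) / z ^ (2 : ℕ))
      (nhdsWithin 0 (Ioi 0)) (nhds v)) :
    (2 * ω ξ - ω (2 * ξ)) / (9 * ξ) ≤ u - v := by
  refine ge_of_tendsto (hu.sub hv) ?_
  filter_upwards [Ioo_mem_nhdsGT hξ] with ε hε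
  obtain ⟨hε0, hεξ⟩ := hε
  have hix := integrableOn_diff_div_sq hf hM x hε0
  have hiy := integrableOn_diff_div_sq hf hM y hε0
  set G : ℝ → ℝ := fun z => ω ξ - (f (x + z) - f (y + z)) with hG
  have hGc : Continuous G := by simp only [hG]; fun_prop
  have hG0 : ∀ z, 0 ≤ G z := by
    intro z
    have h := (abs_le.1 (hmod (x + z) (y + z))).2
    rw [show x + z - (y + z) = x - y by ring, hxy] at h
    simp only [hG]; linarith
  have hpair : ∀ z, 2 * ω ξ - ω (2 * ξ) ≤ G z + G (z + ξ) := by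
    intro z
    simp only [hG]
    rcases abs_choice (x - y) with h | h
    · have hx : x = y + ξ := by linarith
      have h1 := (abs_le.1 (hmod (y + ξ + (z + ξ)) (y + z))).2
      rw [show y + ξ + (z + ξ) - (y + z) = 2 * ξ by ring, abs_of_pos (by linarith)] at h1
      rw [hx, show y + ξ + z = y + (z + ξ) by ring]
      linarith
    · have hx : y = x + ξ := by linarith
      have h1 := (abs_le.1 (hmod (x + z) (x + ξ + (z + ξ)))).2
      rw [show x + z - (x + ξ + (z + ξ)) = -(2 * ξ) by ring, abs_neg,
        abs_of_pos (by linarith)] at h1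
      rw [hx, show x + ξ + z = x + (z + ξ) by ring]
      linarith
  have hGeq : ∀ z, (f x - f (x + z)) / z ^ (2 : ℕ) - (f y - f (y + z)) / z ^ (2 : ℕ) =
      G z / z ^ 2 := by
    intro z; rw [← sub_div, hG]; simp only; rw [← heq]; congr 1; ring
  rw [← integral_sub hix hiy]
  have hiG : IntegrableOn (fun z => G z / z ^ 2) {z : ℝ | ε < |z|} :=
    (hix.sub hiy).congr (Eventually.of_forall hGeq)
  simp only [hGeq]
  have hsub : Ioc ξ (3 * ξ) ⊆ {z : ℝ | ε < |z|} := by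
    intro z hz
    exact (hεξ.trans hz.1).trans_le (le_abs_self z)
  have hstep : ∫ z in Ioc ξ (3 * ξ), G z / z ^ 2 ≤ ∫ z in {z : ℝ | ε < |z|}, G z / z ^ 2 :=
    setIntegral_mono_set hiG (Eventually.of_forall fun z => div_nonneg (hG0 z) (sq_nonneg z))
      hsub.eventuallyLE
  refine le_trans ?_ hstep
  rw [← intervalIntegral.integral_of_le (by linarith)]
  have hle : ∫ z in ξ..(3 * ξ), G z / (9 * ξ ^ 2) ≤ ∫ z in ξ..(3 * ξ), G z / z ^ 2 := by
    refine intervalIntegral.integral_mono_on (by linarith)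
      ((hGc.div_const _).intervalIntegrable _ _) ?_ fun z hz => ?_
    · refine ContinuousOn.intervalIntegrable ?_
      rw [uIcc_of_le (by linarith)]
      exact hGc.continuousOn.div (by fun_prop) fun z hz => (pow_pos (hξ.trans_le hz.1) 2).ne'
    · have hz0 : 0 < z := hξ.trans_le hz.1
      have := hG0 z
      have h3 : z ^ 2 ≤ 9 * ξ ^ 2 := by nlinarith [hz.1, hz.2]
      gcongr
  refine le_trans ?_ hle
  rw [intervalIntegral.integral_div, ← intervalIntegral.integral_add_adjacent_intervals
    (hGc.intervalIntegrable ξ (2 * ξ)) (hGc.intervalIntegrable (2 * ξ) (3 * ξ))]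
  have hshift : ∫ z in (2 * ξ)..(3 * ξ), G z = ∫ z in ξ..(2 * ξ), G (z + ξ) := by
    rw [intervalIntegral.integral_comp_add_right]; congr 1 <;> ring
  have hGc' : Continuous fun z => G (z + ξ) := by fun_prop
  rw [hshift, ← intervalIntegral.integral_add (hGc.intervalIntegrable _ _)
    (hGc'.intervalIntegrable _ _)]
  have hlast : ∫ _ in ξ..(2 * ξ), (2 * ω ξ - ω (2 * ξ)) ≤ ∫ z in ξ..(2 * ξ), (G z + G (z + ξ)) :=
    intervalIntegral.integral_mono_on (by linarith) intervalIntegrable_const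
      ((hGc.add hGc').intervalIntegrable _ _) fun z _ => hpair z
  rw [intervalIntegral.integral_const, smul_eq_mul] at hlast
  rw [div_le_div_iff₀ (by positivity) (by positivity)]
  nlinarith [mul_le_mul_of_nonneg_right hlast (show 0 ≤ 9 * ξ by linarith)]

/-- The modulus of continuity at spatial scale `1 / B`. -/
noncomputable def scaledMod (B r : ℝ) : ℝ := modBase (B * r) / 2000

lemma hasDerivAt_scaledMod {B r : ℝ} (hB : 0 < B) (hr : 0 < r) :
    HasDerivAt (scaledMod B) (B * modBaseDeriv (B * r) / 2000) r := by
  have h1 : HasDerivAt (fun r => B * r) B r := by simpa using (hasDerivAt_id r).const_mul B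
  have h2 := ((hasDerivAt_modBase (mul_pos hB hr)).comp r h1).div_const 2000
  exact h2.congr_deriv (by ring)

lemma continuousOn_scaledMod {B : ℝ} (hB : 0 < B) : ContinuousOn (scaledMod B) (Ioi 0) :=
  fun _ hr => (hasDerivAt_scaledMod hB hr).continuousAt.continuousWithinAt

lemma integral_scaledMod_near_le {B ε ξ : ℝ} (hB : 0 < B) (hε : 0 < ε) (hξ : ε ≤ ξ) :
    ∫ z in ε..ξ, scaledMod B (2 * z) / z ≤ modBaseNear (B * (2 * ξ)) / 2000 := by
  have hd : ∀ z, 0 < z → HasDerivAt (fun z => modBaseNear (B * (2 * z)) / 2000)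
      (2 * B * (modBaseDeriv (B * (2 * z)) * Real.log (1 + B * (2 * z)) +
        (modBase (B * (2 * z)) + 2) * (1 / (1 + B * (2 * z)))) / 2000) z := by
    intro z hz
    have h1 : HasDerivAt (fun z => B * (2 * z)) (B * (2 * 1)) z :=
      ((hasDerivAt_id z).const_mul 2).const_mul B
    have h2 := ((hasDerivAt_modBaseNear (show 0 < B * (2 * z) by positivity)).comp z h1).div_const
      2000
    exact h2.congr_deriv (by ring)
  have hpos : ∀ z ∈ Icc ε ξ, 0 < z := fun z hz => hε.trans_le hz.1
  have h := intervalIntegral.integral_le_sub_of_hasDeriv_right_of_le hξ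
    (fun z hz => (hd z (hpos z hz)).continuousAt.continuousWithinAt)
    (fun z hz => (hd z (hε.trans hz.1)).hasDerivWithinAt)
    (φ := fun z => scaledMod B (2 * z) / z)
    (ContinuousOn.integrableOn_Icc (((continuousOn_scaledMod hB).comp (by fun_prop)
      fun z hz => mul_pos two_pos (hpos z hz)).div continuousOn_id fun z hz => (hpos z hz).ne'))
    (fun z hz => by
      have hz0 := hε.trans hz.1
      have h3 := modBase_div_le (show 0 < B * (2 * z) by positivity)
      calc scaledMod B (2 * z) / z = 2 * B * (modBase (B * (2 * z)) / (B * (2 * z))) / 2000 := by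
            unfold scaledMod; field_simp
        _ ≤ _ := by gcongr)
  have h4 : 0 ≤ modBaseNear (B * (2 * ε)) := modBaseNear_nonneg (by positivity)
  linarith

lemma integrableOn_scaledMod_div_sq {B ξ R : ℝ} (hB : 0 < B) (hξ : 0 < ξ) :
    IntegrableOn (fun z => scaledMod B z / z ^ 2) (Icc ξ R) :=
  ContinuousOn.integrableOn_Icc (((continuousOn_scaledMod hB).mono
    fun _ hz => hξ.trans_le hz.1).div (by fun_prop)
      fun _ hz => (pow_pos (hξ.trans_le hz.1) 2).ne')

lemma scaledMod_far_le {B ξ R : ℝ} (hB : 0 < B) (hξ : 0 < ξ) (hR : ξ ≤ R) :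
    scaledMod B R / R + ∫ z in ξ..R, scaledMod B z / z ^ 2 ≤
      (modBase (B * ξ) + 2) / 2000 / ξ := by
  have hd : ∀ z, 0 < z → HasDerivAt (fun z => -((scaledMod B z + 1 / 1000) / z))
      ((scaledMod B z + 1 / 1000) / z ^ 2 - B * modBaseDeriv (B * z) / 2000 / z) z := by
    intro z hz
    refine (((hasDerivAt_scaledMod hB hz).add_const (1 / 1000)).div (hasDerivAt_id z)
      hz.ne').neg.congr_deriv ?_
    simp only [id]
    field_simp
    ring
  have h := intervalIntegral.integral_le_sub_of_hasDeriv_right_of_le hR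
    (fun z hz => (hd z (hξ.trans_le hz.1)).continuousAt.continuousWithinAt)
    (fun z hz => (hd z (hξ.trans hz.1)).hasDerivWithinAt)
    (integrableOn_scaledMod_div_sq hB hξ)
    (fun z hz => by
      have hz0 := hξ.trans hz.1
      have h3 := mul_modBaseDeriv_le_two (show 0 ≤ B * z by positivity)
      have h4 : B * modBaseDeriv (B * z) / 2000 / z ≤ 1 / 1000 / z ^ 2 := by
        rw [div_le_div_iff₀ hz0 (by positivity)]
        nlinarith
      rw [add_div]
      linarith)
  have hR0 := hξ.trans_le hR
  have h5 : 0 ≤ 1 / 1000 / R := by positivity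
  rw [add_div] at h
  have h6 : (modBase (B * ξ) + 2) / 2000 / ξ = (scaledMod B ξ + 1 / 1000) / ξ := by
    unfold scaledMod; ring
  linarith

lemma scaledMod_far_le_sqrt {B ξ R : ℝ} (hB : 0 < B) (hξ : 0 < ξ) (hR : ξ ≤ R) :
    scaledMod B R / R + ∫ z in ξ..R, scaledMod B z / z ^ 2 ≤ 6 * √(B * ξ) / 2000 / ξ := by
  have hsq : ∀ z, 0 < z → √(B * z) / z = √B / √z := by
    intro z hz
    rw [Real.sqrt_mul hB.le, div_eq_div_iff hz.ne' (Real.sqrt_pos.2 hz).ne', mul_assoc,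
      Real.mul_self_sqrt hz.le]
  have hle : ∀ z, 0 < z → scaledMod B z / z ≤ 3 / 2000 * (√B / √z) := by
    intro z hz
    have h3 := modBase_le_three_sqrt (show 0 ≤ B * z by positivity)
    rw [← hsq z hz]
    calc scaledMod B z / z ≤ 3 * √(B * z) / 2000 / z := by unfold scaledMod; gcongr
      _ = _ := by ring
  have hd : ∀ z, 0 < z → HasDerivAt (fun z => -(6 / 2000 * (√B / √z)))
      (3 / 2000 * (√B / √z) / z) z := by
    intro z hz
    have hs := Real.sqrt_pos.2 hz
    refine (((hasDerivAt_const z √B).div ((hasDerivAt_id z).sqrt hz.ne') hs.ne').const_mul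
      (6 / 2000)).neg.congr_deriv ?_
    simp only [id]
    have : z = √z ^ 2 := (Real.sq_sqrt hz.le).symm
    generalize √z = s at *
    subst this
    field_simp
    ring
  have h := intervalIntegral.integral_le_sub_of_hasDeriv_right_of_le hR
    (fun z hz => (hd z (hξ.trans_le hz.1)).continuousAt.continuousWithinAt)
    (fun z hz => (hd z (hξ.trans hz.1)).hasDerivWithinAt)
    (integrableOn_scaledMod_div_sq hB hξ)
    (fun z hz => by
      have hz0 := hξ.trans hz.1
      rw [pow_two, ← div_div]
      have := hle z hz0
      gcongr)
  have hR0 := hξ.trans_le hR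
  have h5 := hle R hR0
  have h6 : 6 * √(B * ξ) / 2000 / ξ = 6 / 2000 * (√B / √ξ) := by rw [← hsq ξ hξ]; ring
  have h7 : 0 ≤ √B / √R := by positivity
  linarith

/-- A smooth profile touching the modulus `scaledMod B` at `x ≠ y` evolves strictly inwards. -/
lemma touching_strict {f : ℝ → ℝ} (hf : Differentiable ℝ f) {M : ℝ} (hM : ∀ a, |f a| ≤ M)
    {B : ℝ} (hB : 0 < B) (hmod : ∀ a b, |f a - f b| ≤ scaledMod B |a - b|) {x y : ℝ}
    (hne : x ≠ y) (heq : f x - f y = scaledMod B |x - y|) {Hx Hy Lx Ly : ℝ}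
    (hHx : HilbertPVAt f x (Real.pi * Hx)) (hHy : HilbertPVAt f y (Real.pi * Hy))
    (hLx : Tendsto (fun ε => ∫ z in {z : ℝ | ε < |z|}, (f x - f (x + z)) / z ^ (2 : ℕ))
      (nhdsWithin 0 (Ioi 0)) (nhds Lx))
    (hLy : Tendsto (fun ε => ∫ z in {z : ℝ | ε < |z|}, (f y - f (y + z)) / z ^ (2 : ℕ))
      (nhdsWithin 0 (Ioi 0)) (nhds Ly)) :
    (Hx * deriv f x - Lx) - (Hy * deriv f y - Ly) < 0 := by
  have hξ : 0 < |x - y| := abs_pos.2 (sub_ne_zero.2 hne)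
  obtain ⟨ξ, hξdef⟩ : ∃ ξ, |x - y| = ξ := ⟨_, rfl⟩
  rw [hξdef] at hξ heq
  have hζ : 0 < B * ξ := mul_pos hB hξ
  set ω' := B * modBaseDeriv (B * ξ) / 2000 with hω'
  have hω'0 : 0 ≤ ω' := by have := modBaseDeriv_nonneg hζ.le; positivity
  have hdω : HasDerivAt (scaledMod B) ω' ξ := hasDerivAt_scaledMod hB hξ
  have hfx := (hf x).hasDerivAt
  have hfy := (hf y).hasDerivAt
  have hderiv : Hx * deriv f x - Hy * deriv f y ≤ ω' * |Hx - Hy| := by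
    rcases abs_choice (x - y) with h | h
    · have hx : x - y = ξ := by linarith
      have h1 : deriv f x - ω' = 0 := by
        have hd : HasDerivAt (fun s => f s - scaledMod B (s - y)) (deriv f x - ω') x :=
          hfx.sub (HasDerivAt.comp_sub_const x y (by rwa [hx]))
        refine IsLocalMax.hasDerivAt_eq_zero (f := fun s => f s - scaledMod B (s - y)) ?_ hd
        filter_upwards [lt_mem_nhds (show y < x by linarith)] with s hs
        have := (abs_le.1 (hmod s y)).2
        rw [abs_of_pos (by linarith)] at this
        simp only [hx]; linarith
      have h2 : -deriv f y + ω' = 0 := by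
        have hd : HasDerivAt (fun s => -f s - scaledMod B (x - s)) (-deriv f y - -ω') y :=
          hfy.neg.sub (HasDerivAt.comp_const_sub x y (by rwa [hx]))
        rw [← sub_neg_eq_add]
        refine IsLocalMax.hasDerivAt_eq_zero (f := fun s => -f s - scaledMod B (x - s)) ?_ hd
        filter_upwards [gt_mem_nhds (show y < x by linarith)] with s hs
        have := (abs_le.1 (hmod x s)).2
        rw [abs_of_pos (by linarith)] at this
        simp only [hx]; linarith
      rw [show deriv f x = ω' by linarith, show deriv f y = ω' by linarith]
      nlinarith [le_abs_self (Hx - Hy)]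
    · have hx : y - x = ξ := by linarith
      have h1 : deriv f x - -ω' = 0 := by
        have hd : HasDerivAt (fun s => f s - scaledMod B (y - s)) (deriv f x - -ω') x :=
          hfx.sub (HasDerivAt.comp_const_sub y x (by rwa [hx]))
        refine IsLocalMax.hasDerivAt_eq_zero (f := fun s => f s - scaledMod B (y - s)) ?_ hd
        filter_upwards [gt_mem_nhds (show x < y by linarith)] with s hs
        have := (abs_le.1 (hmod s y)).2
        rw [abs_sub_comm, abs_of_pos (by linarith)] at this
        simp only [hx]; linarith
      have h2 : -deriv f y - ω' = 0 := by
        have hd : HasDerivAt (fun s => -f s - scaledMod B (s - x)) (-deriv f y - ω') y :=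
          hfy.neg.sub (HasDerivAt.comp_sub_const y x (by rwa [hx]))
        refine IsLocalMax.hasDerivAt_eq_zero (f := fun s => -f s - scaledMod B (s - x)) ?_ hd
        filter_upwards [lt_mem_nhds (show x < y by linarith)] with s hs
        have := (abs_le.1 (hmod x s)).2
        rw [abs_sub_comm, abs_of_pos (by linarith)] at this
        simp only [hx]; linarith
      rw [show deriv f x = -ω' by linarith, show deriv f y = -ω' by linarith]
      nlinarith [neg_abs_le (Hx - Hy)]
  have hdiss := dissipation_sub_ge hf.continuous hM hmod hξ hξdef heq hLx hLy
  set D := modBase (B * ξ) - B * ξ * modBaseDeriv (B * ξ) with hD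
  have hD0 : 0 < D := modBase_sub_mul_deriv_pos hζ
  have hdiss2 : D / 2000 ≤ 2 * scaledMod B ξ - scaledMod B (2 * ξ) := by
    have := modBase_two_mul_le hζ
    unfold scaledMod
    rw [show B * (2 * ξ) = 2 * (B * ξ) by ring]
    linarith
  have hdiss3 : D / 2000 / (9 * ξ) ≤ Lx - Ly := le_trans (by gcongr) hdiss
  obtain ⟨V, hV, hVD⟩ : ∃ V, Real.pi * |Hx - Hy| ≤ V / 2000 ∧
      B * ξ * modBaseDeriv (B * ξ) * V ≤ 640 * D := by
    have hpi : Real.pi * |Hx - Hy| = |Real.pi * Hx - Real.pi * Hy| := by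
      rw [← mul_sub, abs_mul, abs_of_pos Real.pi_pos]
    rw [hpi]
    rcases le_total (B * ξ) 1 with h | h
    · refine ⟨_, ?_, modBase_balance_small hζ h⟩
      refine (hilbert_sub_abs_le hf.continuous (continuousOn_scaledMod hB) hmod hξ hξdef
        (fun ε h1 h2 => integral_scaledMod_near_le hB h1 h2.le)
        (fun R hR => scaledMod_far_le_sqrt hB hξ hR.le) hHx hHy).trans_eq ?_
      rw [mul_div_cancel₀ _ hξ.ne', show B * (2 * ξ) = 2 * (B * ξ) by ring]
      unfold scaledMod
      ring
    · refine ⟨_, ?_, modBase_balance_large h⟩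
      refine (hilbert_sub_abs_le hf.continuous (continuousOn_scaledMod hB) hmod hξ hξdef
        (fun ε h1 h2 => integral_scaledMod_near_le hB h1 h2.le)
        (fun R hR => scaledMod_far_le hB hξ hR.le) hHx hHy).trans_eq ?_
      rw [mul_div_cancel₀ _ hξ.ne', show B * (2 * ξ) = 2 * (B * ξ) by ring]
      unfold scaledMod
      ring
  have hvel : ω' * |Hx - Hy| < D / 2000 / (9 * ξ) := by
    rw [lt_div_iff₀ (by positivity)]
    have h1 : 2000 * (ω' * ξ) = B * ξ * modBaseDeriv (B * ξ) := by rw [hω']; ring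
    have h2 : 3 * |Hx - Hy| ≤ V / 2000 :=
      le_trans (by gcongr; exact Real.pi_gt_three.le) hV
    have h3 : 2000 * (ω' * ξ) * (3 * |Hx - Hy|) ≤ 2000 * (ω' * ξ) * (V / 2000) := by gcongr
    rw [h1] at h3
    have h4 : B * ξ * modBaseDeriv (B * ξ) * (3 * |Hx - Hy|) =
      6000 * (ω' * |Hx - Hy| * ξ) := by rw [← h1]; ring
    linarith
  linarith

lemma modBase_le_mul {z : ℝ} (hz : 0 ≤ z) : modBase z ≤ z * (1 + 1 / (1 + √z) ^ 2) := by
  have h1 := log_one_add_le (log_one_add_nonneg hz)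
  have h2 := log_one_add_le hz
  have h3 : (√z / (1 + √z)) ^ 2 = z * (1 / (1 + √z) ^ 2) := by
    rw [div_pow, Real.sq_sqrt hz, mul_one_div]
  rw [modBase, h3, mul_add]
  linarith

/-- The blow-up of the second derivative of the modulus at the origin forces a strict gradient
bound. -/
lemma deriv_lt_of_modulus {f : ℝ → ℝ} (hf : Differentiable ℝ f) {x₀ : ℝ}
    (hf2 : DifferentiableAt ℝ (deriv f) x₀) {B : ℝ} (hB : 0 < B)
    (hmod : ∀ a b, |f a - f b| ≤ scaledMod B |a - b|) : deriv f x₀ < B / 1000 := by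
  by_contra! hcon
  obtain ⟨K, hK⟩ := hf2.isBigO_sub.bound
  obtain ⟨δ, hδ, hball⟩ := Metric.eventually_nhds_iff.1 hK
  have key : ∀ h ∈ Ioo 0 δ, B ^ 2 / 2000 ≤ |K| * (√(B * h) * (1 + √(B * h))) := by
    rintro h ⟨h0, hδh⟩
    obtain ⟨c, hc, hc'⟩ := exists_hasDerivAt_eq_slope f (deriv f) (show x₀ < x₀ + h by linarith)
      hf.continuous.continuousOn (fun w _ => (hf w).hasDerivAt)
    have hcd : |c - x₀| < h := by rw [abs_of_pos (by linarith [hc.1])]; linarith [hc.2]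
    have h1 := hball (y := c) (by rw [Real.dist_eq]; linarith)
    simp only [Real.norm_eq_abs] at h1
    have h2 : |deriv f c - deriv f x₀| ≤ |K| * h :=
      h1.trans (mul_le_mul (le_abs_self K) hcd.le (abs_nonneg _) (abs_nonneg _))
    have h3 : deriv f c ≤ scaledMod B h / h := by
      rw [hc', show x₀ + h - x₀ = h by ring]
      have := (abs_le.1 (hmod (x₀ + h) x₀)).2
      rw [show x₀ + h - x₀ = h by ring, abs_of_pos h0] at this
      gcongr
    have hBh : 0 < B * h := mul_pos hB h0
    set s := √(B * h) with hs
    have hs0 : 0 < s := Real.sqrt_pos.2 hBh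
    have hss : s ^ 2 = B * h := Real.sq_sqrt hBh.le
    have h4 : scaledMod B h / h ≤ B / 2000 * (1 + 1 / (1 + s) ^ 2) := by
      rw [div_le_iff₀ h0]
      have := modBase_le_mul hBh.le
      unfold scaledMod
      rw [← hs] at this
      calc modBase (B * h) / 2000 ≤ B * h * (1 + 1 / (1 + s) ^ 2) / 2000 := by gcongr
        _ = _ := by ring
    have h5 : 1 / (1 + s) ^ 2 ≤ 1 - s / (1 + s) := by
      rw [div_le_iff₀ (by positivity)]
      field_simp
      nlinarith
    have h6 : B / 2000 * (s / (1 + s)) ≤ |K| * h := by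
      have h7 := (abs_le.1 h2).1
      have h8 : B / 2000 * (1 / (1 + s) ^ 2) ≤ B / 2000 * (1 - s / (1 + s)) := by gcongr
      nlinarith
    rw [← mul_div_assoc, div_le_iff₀ (by positivity)] at h6
    have h9 : B * (B / 2000 * s) ≤ B * (|K| * h * (1 + s)) := by gcongr
    have h10 : B * (|K| * h * (1 + s)) = |K| * (s * (1 + s)) * s := by
      rw [show B * (|K| * h * (1 + s)) = |K| * (B * h) * (1 + s) by ring, ← hss]; ring
    rw [h10, show B * (B / 2000 * s) = B ^ 2 / 2000 * s by ring] at h9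
    exact le_of_mul_le_mul_right h9 hs0
  have hcont : Continuous fun h => |K| * (√(B * h) * (1 + √(B * h))) := by fun_prop
  have hlim : Tendsto (fun h => |K| * (√(B * h) * (1 + √(B * h)))) (𝓝[>] 0) (𝓝 0) := by
    have := (hcont.tendsto 0).mono_left (nhdsWithin_le_nhds (s := Ioi 0))
    simpa using this
  have := ge_of_tendsto hlim (by filter_upwards [Ioo_mem_nhdsGT hδ] with h hh using key h hh)
  have : 0 < B ^ 2 / 2000 := by positivity
  linarith

lemma abs_deriv_lt_of_modulus {f : ℝ → ℝ} (hf : Differentiable ℝ f) {x₀ : ℝ}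
    (hf2 : DifferentiableAt ℝ (deriv f) x₀) {B : ℝ} (hB : 0 < B)
    (hmod : ∀ a b, |f a - f b| ≤ scaledMod B |a - b|) : |deriv f x₀| < B / 1000 := by
  rw [abs_lt]
  refine ⟨?_, deriv_lt_of_modulus hf hf2 hB hmod⟩
  have h := deriv_lt_of_modulus (f := fun x => -f x) (x₀ := x₀) hf.neg
    (by simpa using hf2.neg) hB
    (fun a b => by rw [← abs_neg]; simpa [sub_eq_add_neg, add_comm] using hmod a b)
  simp only [deriv.fun_neg] at h
  linarith

/-- The quotient `modBase z / z`, extended continuously to `z = 0`. -/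
noncomputable def modRatio (z : ℝ) : ℝ :=
  dslope (fun z => Real.log (1 + Real.log (1 + z))) 0 z + 1 / (1 + √z) ^ 2

lemma modRatio_zero : modRatio 0 = 2 := by
  rw [modRatio, dslope_same, (hasDerivAt_loglog le_rfl).deriv]
  norm_num

lemma mul_modRatio {z : ℝ} (hz : 0 ≤ z) : z * modRatio z = modBase z := by
  have h1 := sub_smul_dslope (fun z => Real.log (1 + Real.log (1 + z))) 0 z
  simp only [sub_zero, smul_eq_mul, add_zero, Real.log_one] at h1
  rw [modRatio, mul_add, h1, modBase, div_pow, Real.sq_sqrt hz, mul_one_div]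

lemma continuousOn_modRatio : ContinuousOn modRatio (Ici 0) := by
  refine ContinuousOn.add (fun z hz => ContinuousAt.continuousWithinAt ?_) ?_
  · rcases eq_or_ne z 0 with rfl | h
    · exact continuousAt_dslope_same.2 (hasDerivAt_loglog le_rfl).differentiableAt
    · exact (continuousAt_dslope_of_ne h).2 (hasDerivAt_loglog hz).continuousAt
  · refine Continuous.continuousOn (Continuous.div (by fun_prop) (by fun_prop) fun z => ?_)
    have := Real.sqrt_nonneg z
    positivity

lemma scaledMod_monotoneOn {B : ℝ} (hB : 0 < B) : MonotoneOn (scaledMod B) (Ici 0) := by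
  intro a ha b hb hab
  unfold scaledMod
  have := strictMonoOn_modBase.monotoneOn (mem_Ici.2 (mul_nonneg hB.le ha))
    (mem_Ici.2 (mul_nonneg hB.le hb)) (mul_le_mul_of_nonneg_left hab hB.le)
  gcongr

/-- A modulus of continuity on one period cell is a global one. -/
lemma modulus_of_periodic {f ω : ℝ → ℝ} {per : ℝ} (hper : 0 < per) (hf : Function.Periodic f per)
    (hω : MonotoneOn ω (Ici 0))
    (h : ∀ x ∈ Icc 0 per, ∀ r ∈ Icc 0 per, |f (x + r) - f x| ≤ ω r) (a b : ℝ) :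
    |f a - f b| ≤ ω |a - b| := by
  wlog hab : b ≤ a generalizing a b
  · rw [abs_sub_comm, abs_sub_comm a b]; exact this b a (le_of_not_ge hab)
  have key : ∀ c : ℝ, 0 ≤ c - ⌊c / per⌋ * per ∧ c - ⌊c / per⌋ * per ≤ per := by
    intro c
    have h1 := (le_div_iff₀ hper).1 (Int.floor_le (c / per))
    have h2 := (div_lt_iff₀ hper).1 (Int.lt_floor_add_one (c / per))
    constructor <;> linarith
  have hfl : (0 : ℝ) ≤ ⌊(a - b) / per⌋ := by
    exact_mod_cast Int.floor_nonneg.2 (div_nonneg (by linarith) hper.le)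
  set r := (a - b) - ⌊(a - b) / per⌋ * per with hr
  set x := b - ⌊b / per⌋ * per with hx
  have h1 := h x (key b) r (key (a - b))
  have hfx : f x = f b := hf.sub_int_mul_eq _
  have hfr : f (x + r) = f a := by
    rw [show x + r = a - ((⌊b / per⌋ + ⌊(a - b) / per⌋ : ℤ) : ℝ) * per by
      rw [hx, hr]; push_cast; ring]
    exact hf.sub_int_mul_eq _
  rw [hfx, hfr] at h1
  refine h1.trans (hω (mem_Ici.2 (key (a - b)).1) (mem_Ici.2 (abs_nonneg _)) ?_)
  rw [abs_of_nonneg (by linarith)]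
  have := mul_nonneg hfl hper.le
  linarith

lemma nonneg_of_hasDerivWithinAt_of_le_left_s7 {g : ℝ → ℝ} {g' T τ : ℝ} (hτ : 0 < τ) (hτT : τ ≤ T)
    (hg : HasDerivWithinAt g g' (Icc 0 T) τ) (hle : ∀ s ∈ Ico 0 τ, g s ≤ g τ) : 0 ≤ g' := by
  have h1 : HasDerivWithinAt g g' (Ico 0 τ) τ :=
    hg.mono fun s hs => ⟨hs.1, hs.2.le.trans hτT⟩
  have h2 := (hasDerivWithinAt_iff_tendsto_slope' (by simp)).1 h1
  have : (𝓝[Ico 0 τ] τ).NeBot := mem_closure_iff_nhdsWithin_neBot.1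
    (by rw [closure_Ico hτ.ne]; exact ⟨hτ.le, le_rfl⟩)
  refine ge_of_tendsto h2 ?_
  filter_upwards [self_mem_nhdsWithin] with s hs
  rw [slope_def_field]
  exact div_nonneg_of_nonpos (by linarith [hle s hs]) (by linarith [hs.2])

/-- The averaged slope of `θ(·, t)` between `x` and `x + h`, in terms of `d = ∂ₓθ`. -/
noncomputable def meanSlope (d : ℝ → ℝ → ℝ) (p : ℝ × ℝ × ℝ) : ℝ :=
  ∫ σ in (0 : ℝ)..1, d (p.1 + σ * p.2.1) p.2.2

lemma continuous_meanSlope {d : ℝ → ℝ → ℝ} (hd : Continuous (Function.uncurry d)) :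
    Continuous (meanSlope d) := by
  refine intervalIntegral.continuous_parametric_intervalIntegral_of_continuous'
    (f := fun (p : ℝ × ℝ × ℝ) σ => d (p.1 + σ * p.2.1) p.2.2) ?_ 0 1
  exact hd.comp (g := Function.uncurry d)
    (f := fun q : (ℝ × ℝ × ℝ) × ℝ => (q.1.1 + q.2 * q.1.2.1, q.1.2.2)) (by fun_prop)

lemma mul_meanSlope {d : ℝ → ℝ → ℝ} (hd : Continuous (Function.uncurry d)) {f : ℝ → ℝ} {t : ℝ}
    (hf : ∀ x, HasDerivAt f (d x t) x) (x h : ℝ) :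
    h * meanSlope d (x, h, t) = f (x + h) - f x := by
  have hc : Continuous fun σ : ℝ => d (x + σ * h) t :=
    hd.comp (g := Function.uncurry d) (f := fun σ : ℝ => (x + σ * h, t)) (by fun_prop)
  have h1 : ∀ σ ∈ uIcc (0 : ℝ) 1, HasDerivAt (fun σ => f (x + σ * h)) (d (x + σ * h) t * h) σ := by
    intro σ _
    have h2 : HasDerivAt (fun σ : ℝ => x + σ * h) h σ := by
      simpa using ((hasDerivAt_id σ).mul_const h).const_add x
    exact (hf _).comp σ h2
  have h3 := intervalIntegral.integral_eq_sub_of_hasDerivAt h1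
    ((hc.mul continuous_const).intervalIntegrable _ _)
  rw [intervalIntegral.integral_mul_const] at h3
  simp only [meanSlope]
  rw [mul_comm, h3]
  simp

/-- Preservation of the modulus of continuity, recorded as the resulting gradient bound. -/
theorem gradient_bound_of_initial_modulus {T per B : ℝ} (hper : 0 < per) (hB : 0 < B)
    {θ Hθ Lθ d : ℝ → ℝ → ℝ} (hd : Continuous (Function.uncurry d))
    (hdd : ∀ t ∈ Icc 0 T, ∀ x, d x t = deriv (fun x' => θ x' t) x)
    (hC : ∀ t ∈ Icc 0 T, ContDiff ℝ 2 (fun x' => θ x' t))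
    (hperiodic : ∀ t ∈ Icc (0 : ℝ) T, ∀ x, θ (x + per) t = θ x t)
    (hH : ∀ t ∈ Icc (0 : ℝ) T, ∀ x, HilbertPVAt (fun x' => θ x' t) x (Real.pi * Hθ x t))
    (hL : ∀ t ∈ Icc (0 : ℝ) T, ∀ x,
      Tendsto (fun ε => ∫ y in {y : ℝ | ε < |y|}, (θ x t - θ (x + y) t) / y ^ (2 : ℕ))
        (nhdsWithin 0 (Ioi 0)) (nhds (Lθ x t)))
    (hevol : ∀ x, ∀ t ∈ Icc (0 : ℝ) T, HasDerivWithinAt (fun s => θ x s)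
      (Hθ x t * deriv (fun x' => θ x' t) x - Lθ x t) (Icc 0 T) t)
    (h0 : ∀ x y, x ≠ y → |θ x 0 - θ y 0| < scaledMod B |x - y|) :
    ∀ t ∈ Icc 0 T, ∀ x, |d x t| ≤ B / 1000 := by
  by_contra! hcon
  obtain ⟨t₁, ht₁, x₁, hx₁⟩ := hcon
  have hdiff : ∀ t ∈ Icc 0 T, Differentiable ℝ (fun x' => θ x' t) := fun t ht =>
    (hC t ht).differentiable (by norm_num)
  have hder : ∀ t ∈ Icc 0 T, ∀ x, HasDerivAt (fun x' => θ x' t) (d x t) x := fun t ht x => by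
    rw [hdd t ht x]; exact (hdiff t ht x).hasDerivAt
  set box : Set (ℝ × ℝ × ℝ) := Icc 0 per ×ˢ Icc 0 per ×ˢ Icc 0 T with hbox
  set w : ℝ × ℝ × ℝ → ℝ := fun p => B / 2000 * modRatio (B * p.2.1) with hw
  have hwc : ContinuousOn w box := by
    refine continuousOn_const.mul (continuousOn_modRatio.comp (by fun_prop) ?_)
    rintro ⟨x, h, t⟩ ⟨_, hh, _⟩
    exact mul_nonneg hB.le hh.1
  have hcompact : IsCompact {p ∈ box | w p ≤ |meanSlope d p|} := by
    have hb : IsCompact box := isCompact_Icc.prod (isCompact_Icc.prod isCompact_Icc)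
    exact hb.of_isClosed_subset
      (hb.isClosed.isClosed_le hwc (continuous_meanSlope hd).abs.continuousOn) (sep_subset _ _)
  have hmw : ∀ x h t, 0 ≤ h → h * w (x, h, t) = scaledMod B h := by
    intro x h t hh
    rw [scaledMod, ← mul_modRatio (mul_nonneg hB.le hh), hw]
    ring
  have hms0 : ∀ x t, meanSlope d (x, 0, t) = d x t := by intro x t; simp [meanSlope]
  have hw0 : ∀ x t, w (x, 0, t) = B / 1000 := by
    intro x t; simp only [hw, mul_zero, modRatio_zero]; ring
  obtain ⟨τ, ⟨⟨x, h, t'⟩, ⟨⟨hx, hh, hτ⟩, hge⟩, rfl⟩, hleast⟩ :=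
    (hcompact.image (f := fun p : ℝ × ℝ × ℝ => p.2.2) (by fun_prop)).exists_isLeast (by
      have hp : Function.Periodic (fun x' => d x' t₁) per := by
        intro z
        have h1 := (hder t₁ ht₁ (z + per)).comp_add_const z per
        have h2 : (fun x' => θ (x' + per) t₁) = fun x' => θ x' t₁ := funext (hperiodic t₁ ht₁)
        rw [h2] at h1
        exact h1.unique (hder t₁ ht₁ z)
      obtain ⟨y, hy, hxy⟩ := hp.exists_mem_Ico₀ hper x₁
      refine ⟨_, (y, 0, t₁), ⟨⟨⟨hy.1, hy.2.le⟩, ⟨le_rfl, hper.le⟩, ht₁⟩, ?_⟩, rfl⟩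
      rw [hw0, hms0]
      rw [← hxy]
      exact hx₁.le)
  simp only at hx hh hτ hge hleast ⊢
  rename' t' => τ
  have hearly : ∀ s ∈ Ico 0 τ, ∀ y ∈ Icc 0 per, ∀ r ∈ Icc 0 per,
      |θ (y + r) s - θ y s| ≤ scaledMod B r := by
    intro s hs y hy r hr
    have hsT : s ∈ Icc 0 T := ⟨hs.1, hs.2.le.trans hτ.2⟩
    have h1 : |meanSlope d (y, r, s)| < w (y, r, s) := by
      by_contra! hc
      exact absurd (hleast ⟨(y, r, s), ⟨⟨hy, hr, hsT⟩, hc⟩, rfl⟩) (not_le.2 hs.2)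
    rw [← mul_meanSlope hd (hder s hsT), abs_mul, abs_of_nonneg hr.1, ← hmw y r s hr.1]
    exact mul_le_mul_of_nonneg_left h1.le hr.1
  have hmod : ∀ a b, |θ a τ - θ b τ| ≤ scaledMod B |a - b| := by
    rcases hτ.1.eq_or_lt with h00 | hpos
    · intro a b
      rw [← h00]
      rcases eq_or_ne a b with rfl | hne
      · simp [scaledMod, modBase_zero]
      · exact (h0 a b hne).le
    · refine modulus_of_periodic (f := fun x' => θ x' τ) hper (hperiodic τ hτ)
        (scaledMod_monotoneOn hB) fun y hy r hr => ?_
      have : (𝓝[Ico 0 τ] τ).NeBot := mem_closure_iff_nhdsWithin_neBot.1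
        (by rw [closure_Ico hpos.ne]; exact ⟨hpos.le, le_rfl⟩)
      have hsub : Ico 0 τ ⊆ Icc 0 T := fun s hs => ⟨hs.1, hs.2.le.trans hτ.2⟩
      have hc : ∀ z, Tendsto (fun s => θ z s) (𝓝[Ico 0 τ] τ) (𝓝 (θ z τ)) := fun z =>
        ((hevol z τ hτ).continuousWithinAt.mono hsub)
      refine le_of_tendsto ((hc (y + r)).sub (hc y)).abs ?_
      filter_upwards [self_mem_nhdsWithin] with s hs using hearly s hs y hy r hr
  rcases hh.1.eq_or_lt with rfl | hhpos
  · rw [hw0, hms0, hdd τ hτ] at hge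
    have hC1 : ContDiff ℝ 1 (deriv fun x' => θ x' τ) :=
      ((contDiff_succ_iff_deriv (n := 1)).1 (hC τ hτ)).2.2
    exact absurd hge (not_le.2 (abs_deriv_lt_of_modulus (hdiff τ hτ)
      (hC1.differentiable (by norm_num) x) hB hmod))
  · have hge' : scaledMod B h ≤ |θ (x + h) τ - θ x τ| := by
      rw [← mul_meanSlope hd (hder τ hτ), abs_mul, abs_of_nonneg hh.1, ← hmw x h τ hh.1]
      exact mul_le_mul_of_nonneg_left hge hh.1
    have hτpos : 0 < τ := by
      rcases hτ.1.eq_or_lt with h00 | hpos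
      · have h1 := h0 (x + h) x (by linarith)
        rw [show x + h - x = h by ring, abs_of_pos hhpos] at h1
        rw [← h00] at hge'
        linarith
      · exact hpos
    obtain ⟨M, hM⟩ : ∃ M, ∀ a, |θ a τ| ≤ M := by
      obtain ⟨M, hM⟩ := (isCompact_Icc (a := (0 : ℝ)) (b := per)).exists_bound_of_continuousOn
        (hdiff τ hτ).continuous.continuousOn
      refine ⟨M, fun a => ?_⟩
      obtain ⟨y, hy, hxy⟩ := Function.Periodic.exists_mem_Ico₀ (f := fun x' => θ x' τ)
        (hperiodic τ hτ) hper a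
      rw [hxy]
      exact hM y ⟨hy.1, hy.2.le⟩
    have contra : ∀ X Y, |X - Y| = h → θ X τ - θ Y τ = scaledMod B h →
        (∀ s ∈ Ico 0 τ, θ X s - θ Y s ≤ scaledMod B h) → False := by
      intro X Y hXY heq hle
      have hne : X ≠ Y := by
        rintro rfl; simp at hXY; linarith
      have h1 := touching_strict (hdiff τ hτ) hM hB hmod hne (by rw [hXY, heq])
        (hH τ hτ X) (hH τ hτ Y) (hL τ hτ X) (hL τ hτ Y)
      have h2 := nonneg_of_hasDerivWithinAt_of_le_left_s7 hτpos hτ.2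
        ((hevol X τ hτ).sub (hevol Y τ hτ)) (fun s hs => by
          simp only [Pi.sub_apply]; rw [heq]; exact hle s hs)
      linarith
    have hup := hmod (x + h) x
    rw [show x + h - x = h by ring, abs_of_pos hhpos] at hup
    rcases abs_choice (θ (x + h) τ - θ x τ) with hs | hs
    · refine contra (x + h) x (by simp [hhpos.le]) (by linarith) fun s hs' => ?_
      exact (le_abs_self _).trans (hearly s hs' x hx h hh)
    · refine contra x (x + h) (by simp [hhpos.le]) (by linarith) fun s hs' => ?_
      rw [← neg_sub]
      exact (neg_le_abs _).trans (hearly s hs' x hx h hh)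

/-! ### From the modulus of continuity to the gradient bound -/

lemma bddAbove_range_abs_of_periodic {per : ℝ} (hper : 0 < per) {f : ℝ → ℝ} (hf : Continuous f)
    (hp : Function.Periodic f per) : BddAbove (range fun x => |f x|) := by
  have hp' : Function.Periodic (fun x => |f x|) per := fun x => congrArg abs (hp x)
  exact (hp'.compact_of_continuous hper.ne' hf.abs).bddAbove

/-- The spatial derivative of a function smooth on `ℝ × [0, T]` is, on the slab, the restriction of
a continuous function on the plane. -/
lemma exists_continuous_spatial_deriv {T : ℝ} (hT : 0 < T) {θ : ℝ → ℝ → ℝ}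
    (hθ : ContDiffOn ℝ (⊤ : ℕ∞) (fun p : ℝ × ℝ => θ p.1 p.2) (univ ×ˢ Icc 0 T)) :
    ∃ d : ℝ → ℝ → ℝ, Continuous (Function.uncurry d) ∧
      ∀ t ∈ Icc 0 T, ∀ x, d x t = deriv (fun x' => θ x' t) x := by
  set F : ℝ × ℝ → ℝ := fun p => θ p.1 p.2 with hF
  set S : Set (ℝ × ℝ) := univ ×ˢ Icc 0 T with hS
  have hu : UniqueDiffOn ℝ S := uniqueDiffOn_univ.prod (uniqueDiffOn_Icc hT)
  have hc : ContinuousOn (fderivWithin ℝ F S) S := hθ.continuousOn_fderivWithin hu (by simp)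
  refine ⟨fun x t => fderivWithin ℝ F S (x, (projIcc 0 T hT.le t : ℝ)) (1, 0), ?_, ?_⟩
  · have hproj : Continuous fun p : ℝ × ℝ => (p.1, (projIcc 0 T hT.le p.2 : ℝ)) := by
      have := continuous_projIcc (a := (0 : ℝ)) (b := T) (h := hT.le)
      fun_prop
    have := hc.comp_continuous hproj fun p => ⟨mem_univ _, (projIcc 0 T hT.le p.2).2⟩
    exact this.clm_apply continuous_const
  · intro t ht x
    have hmem : (x, t) ∈ S := ⟨mem_univ _, ht⟩
    have hfd : HasFDerivWithinAt F (fderivWithin ℝ F S (x, t)) S (x, t) :=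
      ((hθ.differentiableOn (by simp)) (x, t) hmem).hasFDerivWithinAt
    have hline : HasDerivWithinAt (fun x' : ℝ => (x', t)) ((1, 0) : ℝ × ℝ) univ x :=
      ((hasDerivAt_id x).prodMk (hasDerivAt_const x t)).hasDerivWithinAt
    have := hfd.comp_hasDerivWithinAt x hline fun x' _ => (⟨mem_univ _, ht⟩ : (x', t) ∈ S)
    rw [hasDerivWithinAt_univ] at this
    simp only [projIcc_of_mem hT.le ht]
    exact this.deriv.symm

/-- Data with `|f| ≤ M` and `|deriv f| ≤ G` strictly obey the modulus `scaledMod B` as soon as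
`B` exceeds `1000 * G * exp (exp (8000 * M))`. -/
lemma abs_sub_lt_scaledMod {f : ℝ → ℝ} {M G B : ℝ} (hf : Differentiable ℝ f)
    (hM : ∀ x, |f x| ≤ M) (hG : ∀ x, |deriv f x| ≤ G)
    (hB : 1000 * (G * Real.exp (Real.exp (8000 * M))) < B) {x y : ℝ} (hxy : x ≠ y) :
    |f x - f y| < scaledMod B |x - y| := by
  have hM0 : 0 ≤ M := (abs_nonneg _).trans (hM 0)
  have hG0 : 0 ≤ G := (abs_nonneg _).trans (hG 0)
  set r := |x - y| with hr
  have hr0 : 0 < r := abs_pos.mpr (sub_ne_zero.mpr hxy)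
  set n := min (2000 * G * r) (4000 * M) with hn
  have hn0 : 0 ≤ n := le_min (by positivity) (by positivity)
  have hlip : |f x - f y| ≤ G * r := by
    have := convex_univ.norm_image_sub_le_of_norm_deriv_le (f := f) (C := G)
      (fun z _ => hf z) (fun z _ => hG z) (mem_univ y) (mem_univ x)
    simpa [Real.norm_eq_abs] using this
  have hosc : |f x - f y| ≤ 2 * M := by
    have := abs_sub (f x) (f y)
    linarith [hM x, hM y]
  have hle : |f x - f y| ≤ n / 2000 := by
    rw [le_div_iff₀ (by norm_num)]
    exact le_min (by linarith) (by linarith)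
  have hexp : Real.exp (Real.exp (2 * n)) ≤ Real.exp (Real.exp (8000 * M)) := by
    refine Real.exp_le_exp.mpr (Real.exp_le_exp.mpr ?_)
    linarith [min_le_right (2000 * G * r) (4000 * M)]
  have hY : n / 2 * Real.exp (Real.exp (2 * n)) < B * r := calc
    n / 2 * Real.exp (Real.exp (2 * n)) ≤ 1000 * G * r * Real.exp (Real.exp (8000 * M)) := by
      gcongr
      linarith [min_le_left (2000 * G * r) (4000 * M)]
    _ = 1000 * (G * Real.exp (Real.exp (8000 * M))) * r := by ring
    _ < B * r := by gcongr
  have hY0 : 0 ≤ n / 2 * Real.exp (Real.exp (2 * n)) := by positivity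
  have hlt : n < modBase (B * r) :=
    (le_modBase_double_exp hn0).trans_lt (strictMonoOn_modBase hY0 (hY0.trans hY.le) hY)
  unfold scaledMod
  linarith

/-- **A priori gradient bound for the critical Córdoba–Córdoba–Fontelos equation
(eq. (gradsqgest)).** There is an absolute constant `C > 0` such that every smooth
space-periodic solution of `∂_t θ = (Hθ) ∂_x θ − L θ` on `[0,T]`, where `H` is the Hilbert
transform in `x` and `L f(x) = P.V.∫ (f(x) − f(x+y))/|y|² dy`, satisfies
`‖∂_x θ(·,t)‖_∞ ≤ ‖∂_x θ(·,0)‖_∞ · exp(exp(C‖θ(·,0)‖_∞))` for all `t ∈ [0,T]`. -/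
theorem critical_ccf_gradient_bound :
    ∃ C > (0:ℝ), ∀ (T per : ℝ) (θ Hθ Lθ : ℝ → ℝ → ℝ),
      0 ≤ T → 0 < per →
      ContDiffOn ℝ (⊤ : ℕ∞) (fun p : ℝ × ℝ => θ p.1 p.2) (univ ×ˢ Icc 0 T) →
      (∀ t ∈ Icc (0:ℝ) T, ∀ x, θ (x + per) t = θ x t) →
      (∀ t ∈ Icc (0:ℝ) T, ∀ x, HilbertPVAt (fun x' => θ x' t) x (Real.pi * Hθ x t)) →
      (∀ t ∈ Icc (0:ℝ) T, ∀ x,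
        Tendsto (fun ε => ∫ y in {y : ℝ | ε < |y|}, (θ x t - θ (x + y) t) / y ^ (2:ℕ))
          (nhdsWithin 0 (Ioi 0)) (nhds (Lθ x t))) →
      (∀ x, ∀ t ∈ Icc (0:ℝ) T,
        HasDerivWithinAt (fun s => θ x s)
          (Hθ x t * deriv (fun x' => θ x' t) x - Lθ x t) (Icc 0 T) t) →
      ∀ t ∈ Icc (0:ℝ) T,
        (⨆ x, |deriv (fun x' => θ x' t) x|) ≤
          (⨆ x, |deriv (fun x' => θ x' 0) x|) * Real.exp (Real.exp (C * ⨆ x, |θ x 0|)) := by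
  refine ⟨8000, by norm_num, ?_⟩
  intro T per θ Hθ Lθ hT0 hper hθ hperiodic hH hL hevol t ht
  have h0mem : (0 : ℝ) ∈ Icc 0 T := ⟨le_rfl, hT0⟩
  have hG0 : 0 ≤ ⨆ x, |deriv (fun x' => θ x' 0) x| := Real.iSup_nonneg fun _ => abs_nonneg _
  rcases hT0.eq_or_lt with rfl | hT
  · obtain rfl : t = 0 := le_antisymm ht.2 ht.1
    exact le_mul_of_one_le_right hG0 (Real.one_le_exp (Real.exp_pos _).le)
  have hC : ∀ s ∈ Icc 0 T, ContDiff ℝ 2 (fun x' => θ x' s) := by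
    intro s hs
    have hslice : ContDiff ℝ (⊤ : ℕ∞) (fun x' => θ x' s) := by
      rw [← contDiffOn_univ]
      exact hθ.comp (f := fun x' : ℝ => (x', s)) (by fun_prop) fun x' _ => ⟨mem_univ _, hs⟩
    exact contDiff_infty.mp hslice 2
  obtain ⟨d, hd, hdd⟩ := exists_continuous_spatial_deriv hT hθ
  have hdiff : Differentiable ℝ (fun x' => θ x' 0) := (hC 0 h0mem).differentiable (by norm_num)
  have hM : ∀ x, |θ x 0| ≤ ⨆ x, |θ x 0| :=
    le_ciSup (bddAbove_range_abs_of_periodic hper hdiff.continuous (hperiodic 0 h0mem))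
  have hderiv_periodic : Function.Periodic (deriv fun x' => θ x' 0) per := by
    intro x
    rw [← deriv_comp_add_const]
    exact congrArg (deriv · x) (funext (hperiodic 0 h0mem))
  have hG : ∀ x, |deriv (fun x' => θ x' 0) x| ≤ ⨆ x, |deriv (fun x' => θ x' 0) x| :=
    le_ciSup (bddAbove_range_abs_of_periodic hper
      ((hC 0 h0mem).continuous_deriv (by norm_num)) hderiv_periodic)
  refine ciSup_le fun x => ?_
  rw [← hdd t ht x]
  refine le_of_forall_gt_imp_ge_of_dense fun b hb => ?_
  have hB : 0 < 1000 * b := mul_pos (by norm_num) (lt_of_le_of_lt (by positivity) hb)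
  have := gradient_bound_of_initial_modulus hper hB hd hdd hC hperiodic hH hL hevol
    (fun x y hxy => abs_sub_lt_scaledMod hdiff hM hG (by linarith) hxy) t ht x
  linarith
end
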